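/- arXiv:2402.10378 — 14 statements merged into one kernel-verified Lean document; each statement's English description precedes it below -/
import Mathlib

section
/- Let V ⊆ (S_1)^n be a d-dimensional F-subspace such that dim_L(V_L) = d ≤ n. If V has the ỹ-local membership property, then the image of ỹ under the natural map S^n → L^n lies in V_L. -/
open MvPolynomial

/-! Over a fraction field `K` of `A`, a linear functional separating a vector from a span is the dot
product with a vector of fractions; clearing denominators puts its coordinates in `A`. For a
polynomial ring, local membership says that at each point the specialised dot product kills the
specialised vector, so the dot product is a polynomial vanishing at every point, hence zero. -/

theorem exists_algebraMap_comp_eq_smul {ι A S : Type*} [Finite ι] [CommSemiring A]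
    [CommSemiring S] [Algebra A S] (M : Submonoid A) [IsLocalization M S] (u : ι → S) :
    ∃ (c : ι → A) (b : M), algebraMap A S ∘ c = (b : A) • u := by
  obtain ⟨b, hb⟩ := IsLocalization.exist_integer_multiples_of_finite M u
  choose c hc using hb
  exact ⟨c, b, funext hc⟩

section DotProduct

open scoped Matrix

variable {ι : Type*} [Fintype ι]

theorem dotProduct_eq_zero_of_mem_span {R : Type*} [CommSemiring R] {s : Set (ι → R)}
    {x u : ι → R} (hx : x ∈ Submodule.span R s) (hu : ∀ v ∈ s, u ⬝ᵥ v = 0) : u ⬝ᵥ x = 0 :=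
  (Submodule.span_le (p := LinearMap.ker (dotProductBilin R R u))).mpr hu hx

theorem exists_dotProduct_ne_zero_of_notMem_span {K : Type*} [Field K] {s : Set (ι → K)}
    {x : ι → K} (hx : x ∉ Submodule.span K s) :
    ∃ u : ι → K, (∀ v ∈ s, u ⬝ᵥ v = 0) ∧ u ⬝ᵥ x ≠ 0 := by
  classical
  obtain ⟨f, hfx, hfs⟩ := Submodule.exists_le_ker_of_notMem hx
  obtain ⟨u, rfl⟩ := (dotProductEquiv K ι).surjective f
  exact ⟨u, fun v hv => hfs (Submodule.subset_span hv), hfx⟩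

theorem algebraMap_comp_mem_span_of_forall_dotProduct {A K : Type*} [CommRing A] [Field K]
    [Algebra A K] [IsFractionRing A K] {s : Set (ι → A)} {w : ι → A}
    (h : ∀ c : ι → A, (∀ v ∈ s, c ⬝ᵥ v = 0) → c ⬝ᵥ w = 0) :
    algebraMap A K ∘ w ∈ Submodule.span K ((algebraMap A K ∘ ·) '' s) := by
  by_contra hw
  obtain ⟨u, hus, huw⟩ := exists_dotProduct_ne_zero_of_notMem_span hw
  obtain ⟨c, b, hcb⟩ := exists_algebraMap_comp_eq_smul (nonZeroDivisors A) u
  have algebraMap_dotProduct (v : ι → A) :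
      algebraMap A K (c ⬝ᵥ v) = algebraMap A K b * (u ⬝ᵥ (algebraMap A K ∘ v)) := by
    rw [RingHom.map_dotProduct, hcb, smul_dotProduct, Algebra.smul_def]
  have hcs : ∀ v ∈ s, c ⬝ᵥ v = 0 := fun v hv => IsFractionRing.injective A K <| by
    rw [algebraMap_dotProduct, hus _ (Set.mem_image_of_mem _ hv), mul_zero, map_zero]
  apply mul_ne_zero (IsLocalization.map_units K b).ne_zero huw
  rw [← algebraMap_dotProduct, h c hcs, map_zero]

end DotProduct

theorem stmt_0_general {ι R σ K : Type*} [Finite ι] [CommRing R] [IsDomain R] [Infinite R]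
    [Field K] [Algebra (MvPolynomial σ R) K] [IsFractionRing (MvPolynomial σ R) K]
    {s : Set (ι → MvPolynomial σ R)} {w : ι → MvPolynomial σ R}
    (hloc : ∀ a : σ → R, eval a ∘ w ∈ Submodule.span R ((eval a ∘ ·) '' s)) :
    algebraMap (MvPolynomial σ R) K ∘ w ∈
      Submodule.span K ((algebraMap (MvPolynomial σ R) K ∘ ·) '' s) := by
  cases nonempty_fintype ι
  refine algebraMap_comp_mem_span_of_forall_dotProduct fun c hcs => MvPolynomial.funext fun a => ?_
  rw [RingHom.map_dotProduct, map_zero]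
  refine dotProduct_eq_zero_of_mem_span (hloc a) ?_
  rintro _ ⟨q, hq, rfl⟩
  rw [← RingHom.map_dotProduct, hcs q hq, map_zero]

theorem stmt_0 (F : Type*) [Field F] [IsAlgClosed F] (n : ℕ) (hn : 3 ≤ n) (d : ℕ)
    (hdn : d ≤ n)
    (V : Submodule F (Fin n → MvPolynomial (Fin n) F))
    (hS1 : ∀ q ∈ V, ∀ i : Fin n, q i ∈ Submodule.span F
      (Set.range (MvPolynomial.X : Fin n → MvPolynomial (Fin n) F)))
    (hdim : Module.finrank F V = d)
    (hdimL : Module.finrank (FractionRing (MvPolynomial (Fin n) F))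
      (Submodule.span (FractionRing (MvPolynomial (Fin n) F))
        ((fun w : Fin n → MvPolynomial (Fin n) F => fun i =>
          algebraMap (MvPolynomial (Fin n) F) (FractionRing (MvPolynomial (Fin n) F)) (w i)) ''
            (V : Set (Fin n → MvPolynomial (Fin n) F)))) = d)
    (hloc : ∀ a : Fin n → F, a ∈ Submodule.span F
      ((fun q : Fin n → MvPolynomial (Fin n) F => fun i => MvPolynomial.eval a (q i)) ''
        (V : Set (Fin n → MvPolynomial (Fin n) F)))) :
    (fun i => algebraMap (MvPolynomial (Fin n) F) (FractionRing (MvPolynomial (Fin n) F))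
        (MvPolynomial.X i)) ∈
      Submodule.span (FractionRing (MvPolynomial (Fin n) F))
        ((fun w : Fin n → MvPolynomial (Fin n) F => fun i =>
          algebraMap (MvPolynomial (Fin n) F) (FractionRing (MvPolynomial (Fin n) F)) (w i)) ''
            (V : Set (Fin n → MvPolynomial (Fin n) F))) := by
  have : Infinite F := IsAlgClosed.instInfinite
  exact stmt_0_general fun a => by simpa only [Function.comp_def, eval_X] using hloc a
end

section
/- Let q_1,…,q_d ∈ (S_1)^n have L-linearly independent images in L^n, and let w ∈ (S_1)^n be such that the image of w in L^n lies in the L-span of the images of q_1,…,q_d. Then there exist homogeneous polynomials h_1,…,h_d, k_1,…,k_d ∈ S with each k_j ≠ 0 such that: (i) in L^n, w = Σ_{j=1}^d (h_j/k_j)·q_j; (ii) for each j, h_j and k_j have no common non-unit divisor in S; (iii) for each j, if h_j ≠ 0 then h_j and k_j are homogeneous of the same total degree, which is at most d, and if h_j = 0 then k_j = 1; and (iv) for every injective map ι : {1,…,d} → {1,…,n}, each k_j divides det(Q_ι) in S, where Q_ι is the d×d matrix whose (s,t) entry is the ι(s)-th component of q_t (equivalently, the least common multiple of k_1,…,k_d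 divides every such d×d minor det(Q_ι)). -/
open MvPolynomial

/-! By Cramer's rule the `j`-th coefficient of `w` is a ratio of two `d × d` determinants of forms,
hence of two forms of equal degree, with any nonzero minor of `Q` as denominator. Write it in lowest
terms `h / k`. These do not depend on the minor, so coprimality makes `k` a divisor of every minor;
and since factors of a form are forms, cancelling a common factor from a ratio of forms of equal
degree leaves a ratio of forms of equal degree. -/

section Homogeneous

variable {σ R : Type*}

lemma isHomogeneous_one_of_mem_span_X [CommSemiring R] {p : MvPolynomial σ R}
    (hp : p ∈ Submodule.span R (Set.range X)) : p.IsHomogeneous 1 := by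
  rwa [← mem_homogeneousSubmodule, homogeneousSubmodule_one_eq_span_X]

lemma le_order_of_isHomogeneous [CommSemiring R] {p : MvPolynomial σ R} {n : ℕ}
    (hp : p.IsHomogeneous n) : (n : ℕ∞) ≤ (p : MvPowerSeries σ R).order :=
  MvPowerSeries.nat_le_order fun c hc => by
    rw [coeff_coe, hp.coeff_eq_zero hc.ne]

lemma isHomogeneous_of_totalDegree_le_order [CommSemiring R] {p : MvPolynomial σ R}
    (hp : (p.totalDegree : ℕ∞) ≤ (p : MvPowerSeries σ R).order) :
    p.IsHomogeneous p.totalDegree := by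
  intro c hc
  have hweight : Finsupp.weight 1 c = c.degree := by
    rw [Finsupp.degree_eq_weight_one, Pi.one_def]
  rw [hweight]
  refine le_antisymm (le_totalDegree (mem_support_iff.mpr hc)) ?_
  exact_mod_cast hp.trans (MvPowerSeries.order_le (by rwa [coeff_coe]))

lemma order_le_totalDegree [CommSemiring R] {p : MvPolynomial σ R} (hp : p ≠ 0) :
    (p : MvPowerSeries σ R).order ≤ p.totalDegree := by
  obtain ⟨c, hc⟩ := ne_zero_iff.mp hp
  calc (p : MvPowerSeries σ R).order ≤ c.degree := MvPowerSeries.order_le (by rwa [coeff_coe])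
    _ ≤ p.totalDegree := mod_cast le_totalDegree (mem_support_iff.mpr hc)

variable [CommRing R]

-- Order and total degree are both additive, order ≤ degree, and a form is where the two agree.
lemma exists_isHomogeneous_of_isHomogeneous_mul [IsDomain R] {p q : MvPolynomial σ R} {n : ℕ}
    (hpq : p * q ≠ 0) (h : (p * q).IsHomogeneous n) :
    ∃ a b, a + b = n ∧ p.IsHomogeneous a ∧ q.IsHomogeneous b := by
  have hp := left_ne_zero_of_mul hpq
  have hq := right_ne_zero_of_mul hpq
  have hn : p.totalDegree + q.totalDegree = n := by
    rw [← totalDegree_mul_of_isDomain hp hq, h.totalDegree hpq]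
  have hle : (p.totalDegree + q.totalDegree : ℕ∞) ≤
      (p : MvPowerSeries σ R).order + (q : MvPowerSeries σ R).order := by
    rw [← MvPowerSeries.order_mul, ← coe_mul, ← Nat.cast_add, hn]
    exact le_order_of_isHomogeneous h
  refine ⟨p.totalDegree, q.totalDegree, hn, isHomogeneous_of_totalDegree_le_order ?_,
    isHomogeneous_of_totalDegree_le_order ?_⟩
  · rw [← ENat.add_le_add_iff_right (ENat.natCast_ne_top q.totalDegree)]
    exact hle.trans (by gcongr; exact order_le_totalDegree hq)
  · rw [← ENat.add_le_add_iff_left (ENat.natCast_ne_top p.totalDegree)]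
    exact hle.trans (by gcongr; exact order_le_totalDegree hp)

lemma isHomogeneous_det {m : Type*} [Fintype m] [DecidableEq m]
    {M : Matrix m m (MvPolynomial σ R)} {r : m → ℕ} (hM : ∀ i j, (M i j).IsHomogeneous (r j)) :
    M.det.IsHomogeneous (∑ j, r j) := by
  rw [Matrix.det_apply']
  refine IsHomogeneous.sum _ _ _ fun τ _ => ?_
  rw [← map_intCast (C : R →+* MvPolynomial σ R)]
  exact (IsHomogeneous.prod _ _ _ fun j _ => hM (τ j) j).C_mul _

end Homogeneous

lemma exists_common_factor_of_mul_eq_mul {A : Type*} [CommMonoidWithZero A] [IsCancelMulZero A]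
    [DecompositionMonoid A] {a b h k : A} (hk : k ≠ 0) (hhk : IsRelPrime h k)
    (heq : a * h = k * b) : ∃ c, a = k * c ∧ b = h * c := by
  obtain ⟨c, rfl⟩ := hhk.symm.dvd_of_dvd_mul_right ⟨b, heq⟩
  exact ⟨c, rfl, mul_left_cancel₀ hk <| by rw [← heq, mul_assoc, mul_comm c]⟩

lemma exists_isHomogeneous_of_mul_eq_mul {σ R : Type*} [CommRing R] [IsDomain R]
    [DecompositionMonoid (MvPolynomial σ R)] {a b h k : MvPolynomial σ R} {n : ℕ}
    (ha : a.IsHomogeneous n) (hb : b.IsHomogeneous n) (ha0 : a ≠ 0) (hh : h ≠ 0) (hk : k ≠ 0)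
    (hhk : IsRelPrime h k) (heq : a * h = k * b) :
    ∃ m ≤ n, h.IsHomogeneous m ∧ k.IsHomogeneous m := by
  obtain ⟨c, rfl, rfl⟩ := exists_common_factor_of_mul_eq_mul hk hhk heq
  have hc : c ≠ 0 := right_ne_zero_of_mul ha0
  obtain ⟨m, s, hms, hkm, hcs⟩ := exists_isHomogeneous_of_isHomogeneous_mul ha0 ha
  obtain ⟨m', s', hms', hhm', hcs'⟩ :=
    exists_isHomogeneous_of_isHomogeneous_mul (mul_ne_zero hh hc) hb
  obtain rfl : s = s' := hcs.inj_right hcs' hc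
  obtain rfl : m = m' := by lia
  exact ⟨m, by lia, hhm', hkm⟩

lemma exists_isRelPrime_div_eq (A : Type*) {K : Type*} [CommRing A] [IsDomain A]
    [UniqueFactorizationMonoid A] [Field K] [Algebra A K] [IsFractionRing A K] (x : K) :
    ∃ h k : A, k ≠ 0 ∧ algebraMap A K h / algebraMap A K k = x ∧ IsRelPrime h k ∧
      (h = 0 → k = 1) := by
  obtain rfl | hx := eq_or_ne x 0
  · exact ⟨0, 1, one_ne_zero, by simp, isRelPrime_one_right, fun _ => rfl⟩
  · exact ⟨IsFractionRing.num A x, IsFractionRing.den A x, nonZeroDivisors.coe_ne_zero _,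
      IsFractionRing.mk'_num_den' A x, IsFractionRing.num_den_reduced A x,
      fun h => absurd (IsFractionRing.eq_zero_of_num_eq_zero h) hx⟩

section Cramer

variable {κ : Type*} [Fintype κ] [DecidableEq κ]

lemma cramer_mulVec {A : Type*} [CommRing A] (M : Matrix κ κ A) (x : κ → A) :
    M.cramer (M.mulVec x) = M.det • x := by
  rw [Matrix.cramer_eq_adjugate_mulVec, Matrix.mulVec_mulVec, Matrix.adjugate_mul,
    Matrix.smul_mulVec, Matrix.one_mulVec]

lemma det_mul_eq_mul_det_updateCol {A K : Type*} [CommRing A] [Field K] [Algebra A K]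
    [FaithfulSMul A K] {M : Matrix κ κ A} {b h k : κ → A} {j : κ} (hk : k j ≠ 0)
    (hb : ∀ i, algebraMap A K (b i) =
      ∑ j, algebraMap A K (h j) / algebraMap A K (k j) * algebraMap A K (M i j)) :
    M.det * h j = k j * (M.updateCol j b).det := by
  let x j := algebraMap A K (h j) / algebraMap A K (k j)
  have hmulVec : (M.map (algebraMap A K)).mulVec x = algebraMap A K ∘ b := by
    ext i
    simp [Matrix.mulVec, dotProduct, hb, x, mul_comm]
  have hdet : algebraMap A K M.det * x j = algebraMap A K (M.updateCol j b).det := by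
    have hcramer := congrFun (cramer_mulVec (M.map (algebraMap A K)) x) j
    rw [hmulVec, Matrix.cramer_apply, ← Matrix.map_updateCol] at hcramer
    simpa [RingHom.map_det] using hcramer.symm
  apply FaithfulSMul.algebraMap_injective A K
  have hkj : algebraMap A K (k j) ≠ 0 := by simpa using hk
  rw [map_mul, map_mul, ← hdet, mul_left_comm, mul_div_cancel₀ _ hkj]

lemma exists_det_submatrix_ne_zero {ι K : Type*} [Field K] {M : Matrix ι κ K}
    (hM : LinearIndependent K M.col) : ∃ ρ : κ → ι, (M.submatrix ρ id).det ≠ 0 := by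
  have hspan : Submodule.span K (Set.range M.row) = ⊤ :=
    span_flip_eq_top_iff_linearIndependent.mpr hM
  obtain ⟨τ, a, -, ha, hli⟩ := exists_linearIndependent' K M.row
  let B := Module.Basis.mk hli (by rw [ha, hspan])
  let e := (Pi.basisFun K κ).indexEquiv B
  refine ⟨a ∘ e, IsUnit.ne_zero ?_⟩
  rw [← Matrix.isUnit_iff_isUnit_det, ← Matrix.linearIndependent_rows_iff_isUnit]
  exact hli.comp e e.injective

end Cramer

theorem stmt_1_general {σ R K ι κ : Type*} [CommRing R] [IsDomain R] [UniqueFactorizationMonoid R]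
    [Field K] [Algebra (MvPolynomial σ R) K] [IsFractionRing (MvPolynomial σ R) K]
    [Fintype κ] [DecidableEq κ] {e : ℕ} {Q : Matrix ι κ (MvPolynomial σ R)}
    (hQ : ∀ i j, (Q i j).IsHomogeneous e)
    (hind : LinearIndependent K (Q.map (algebraMap _ K)).col)
    {w : ι → MvPolynomial σ R} (hw : ∀ i, (w i).IsHomogeneous e)
    (hspan : algebraMap _ K ∘ w ∈ Submodule.span K (Set.range (Q.map (algebraMap _ K)).col)) :
    ∃ h k : κ → MvPolynomial σ R,
      (∀ j, k j ≠ 0) ∧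
      (∀ i, algebraMap _ K (w i) =
        ∑ j, algebraMap _ K (h j) / algebraMap _ K (k j) * algebraMap _ K (Q i j)) ∧
      (∀ j, IsRelPrime (h j) (k j)) ∧
      (∀ j, h j ≠ 0 →
        ∃ m ≤ Fintype.card κ * e, (h j).IsHomogeneous m ∧ (k j).IsHomogeneous m) ∧
      (∀ j, h j = 0 → k j = 1) ∧
      ∀ (ρ : κ → ι) (j : κ), k j ∣ (Q.submatrix ρ id).det := by
  obtain ⟨x, hx⟩ := (Submodule.mem_span_range_iff_exists_fun K).mp hspan
  choose h k hk hdiv hrel hzero using fun j => exists_isRelPrime_div_eq (MvPolynomial σ R) (x j)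
  have hsum (i) : algebraMap _ K (w i) =
      ∑ j, algebraMap _ K (h j) / algebraMap _ K (k j) * algebraMap _ K (Q i j) := by
    simpa [hdiv] using (congrFun hx i).symm
  have cramer (ρ : κ → ι) (j) : (Q.submatrix ρ id).det * h j =
      k j * ((Q.submatrix ρ id).updateCol j (w ∘ ρ)).det :=
    det_mul_eq_mul_det_updateCol (hk j) fun i => hsum (ρ i)
  refine ⟨h, k, hk, hsum, hrel, fun j hj => ?_, hzero, fun ρ j =>
    (hrel j).symm.dvd_of_dvd_mul_right ⟨_, cramer ρ j⟩⟩
  obtain ⟨ρ, hρ⟩ := exists_det_submatrix_ne_zero hind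
  have hdet : (Q.submatrix ρ id).det ≠ 0 := by
    rw [Matrix.submatrix_map, ← RingHom.mapMatrix_apply, ← RingHom.map_det] at hρ
    exact ne_zero_of_map hρ
  have det_isHomogeneous (M : Matrix κ κ (MvPolynomial σ R))
      (hM : ∀ s t, (M s t).IsHomogeneous e) : M.det.IsHomogeneous (Fintype.card κ * e) := by
    simpa using isHomogeneous_det hM
  refine exists_isHomogeneous_of_mul_eq_mul (det_isHomogeneous _ fun s => hQ (ρ s))
    (det_isHomogeneous _ fun s t => ?_) hdet hj (hk j) (hrel j) (cramer ρ j)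
  rw [Matrix.updateCol_apply]
  split_ifs
  exacts [hw _, hQ _ _]

theorem stmt_1 (F : Type*) [Field F] [IsAlgClosed F] (n : ℕ) (hn : 3 ≤ n) (d : ℕ)
    (q : Fin d → (Fin n → MvPolynomial (Fin n) F))
    (hS1 : ∀ j : Fin d, ∀ i : Fin n, q j i ∈ Submodule.span F
      (Set.range (MvPolynomial.X : Fin n → MvPolynomial (Fin n) F)))
    (hind : LinearIndependent (FractionRing (MvPolynomial (Fin n) F))
      (fun j : Fin d => fun i : Fin n =>
        algebraMap (MvPolynomial (Fin n) F) (FractionRing (MvPolynomial (Fin n) F)) (q j i)))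
    (w : Fin n → MvPolynomial (Fin n) F)
    (hwS1 : ∀ i : Fin n, w i ∈ Submodule.span F
      (Set.range (MvPolynomial.X : Fin n → MvPolynomial (Fin n) F)))
    (hw : (fun i : Fin n =>
        algebraMap (MvPolynomial (Fin n) F) (FractionRing (MvPolynomial (Fin n) F)) (w i)) ∈
      Submodule.span (FractionRing (MvPolynomial (Fin n) F))
        (Set.range (fun j : Fin d => fun i : Fin n =>
          algebraMap (MvPolynomial (Fin n) F) (FractionRing (MvPolynomial (Fin n) F)) (q j i)))) :
    ∃ h k : Fin d → MvPolynomial (Fin n) F,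
      (∀ j, k j ≠ 0) ∧
      (∀ i : Fin n,
        algebraMap (MvPolynomial (Fin n) F) (FractionRing (MvPolynomial (Fin n) F)) (w i) =
          ∑ j : Fin d,
            (algebraMap (MvPolynomial (Fin n) F) (FractionRing (MvPolynomial (Fin n) F)) (h j) /
              algebraMap (MvPolynomial (Fin n) F) (FractionRing (MvPolynomial (Fin n) F)) (k j)) *
            algebraMap (MvPolynomial (Fin n) F) (FractionRing (MvPolynomial (Fin n) F)) (q j i)) ∧
      (∀ j, IsRelPrime (h j) (k j)) ∧
      (∀ j, h j ≠ 0 → ∃ m : ℕ, m ≤ d ∧ (h j).IsHomogeneous m ∧ (k j).IsHomogeneous m) ∧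
      (∀ j, h j = 0 → k j = 1) ∧
      (∀ ι : Fin d → Fin n, Function.Injective ι → ∀ j,
        k j ∣ (Matrix.of fun s t : Fin d => q t (ι s)).det) := by
  obtain ⟨h, k, hk, hsum, hrel, hhom, hzero, hdvd⟩ :=
    stmt_1_general (Q := (Matrix.of q).transpose)
      (fun i j => isHomogeneous_one_of_mem_span_X (hS1 j i)) hind
      (fun i => isHomogeneous_one_of_mem_span_X (hwS1 i)) hw
  exact ⟨h, k, hk, hsum, hrel, by simpa using hhom, hzero, fun ι _ => hdvd ι⟩
end

section
/- Let d < n and let q_1,…,q_d ∈ (S_1)^n have L-linearly independent images in L^n. Assume that in L^n the vector ỹ lies in the L-span of the images of q_1,…,q_d, and suppose h_1,…,h_d, k_1,…,k_d ∈ S are homogeneous polynomials with each k_j ≠ 0 such that ỹ = Σ_{j=1}^d (h_j/k_j)·q_j in L^n, where for each j either h_j = 0 and k_j = 1, or h_j ≠ 0, h_j and k_j have no common non-unit divisor in S, and h_j and k_j have the same total degree. Then every least common multiple m of k_1,…,k_d (i.e., every m ∈ S such that each k_j divides m and m divides every common multiple of k_1,…,k_d) has total degree strictly less than d. -/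
open MvPolynomial

/-!
Cramer's rule applied to the rows `g` of the system `ỹ = ∑ⱼ (hⱼ / kⱼ) qⱼ` shows that every
denominator `kⱼ`, hence also `m`, divides every maximal minor `D_g` of the matrix with columns `qⱼ`.
These minors have degree at most `d`. If `m` had degree at least `d`, each of them would be a scalar
multiple `D_g = c_g m`. Since `ỹ` is a combination of the columns, expanding along `ỹ` gives
`∑ₐ (-1)ᵃ y_{i_a} D_{i_0, …, î_a, …, i_d} = 0` for any `d + 1` rows. Dividing by `m` leaves a linear
relation with scalar coefficients among distinct variables, so all these minors would vanish,
contradicting the independence of the columns.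
-/

section

open Matrix

theorem cramer_mulVec_s2 {ι R : Type*} [Fintype ι] [DecidableEq ι] [CommRing R] (A : Matrix ι ι R)
    (x : ι → R) : A.cramer (A *ᵥ x) = A.det • x := by
  rw [cramer_eq_adjugate_mulVec, mulVec_mulVec, adjugate_mul, smul_mulVec, one_mulVec]

theorem sum_neg_one_pow_mul_mulVec_mul_det_submatrix_succAbove {R : Type*} [CommRing R] {d : ℕ}
    (A : Matrix (Fin (d + 1)) (Fin d) R) (x : Fin d → R) :
    ∑ i : Fin (d + 1), (-1) ^ (i : ℕ) * (A *ᵥ x) i * (A.submatrix i.succAbove id).det = 0 := by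
  let B : Matrix (Fin (d + 1)) (Fin (d + 1)) R := .of fun i ↦ Fin.cons ((A *ᵥ x) i) (A i)
  have hker : B *ᵥ Fin.cons (-1) x = 0 := by
    ext i
    simp [B, mulVec, dotProduct, Fin.sum_univ_succ]
  have hdet : B.det = 0 := by simpa [hker] using congrFun (cramer_mulVec_s2 B (Fin.cons (-1) x)) 0
  rw [← hdet, det_succ_column_zero]
  rfl

theorem sum_neg_one_pow_mul_det_submatrix_eq_zero_of_map_mulVec_eq {ι S L : Type*} [CommRing S]
    [CommRing L] [Algebra S L] [FaithfulSMul S L] {d : ℕ} {A : Matrix ι (Fin d) S} {x : Fin d → L}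
    {w : ι → S} (hx : A.map (algebraMap S L) *ᵥ x = algebraMap S L ∘ w) (f : Fin (d + 1) → ι) :
    ∑ i : Fin (d + 1), (-1) ^ (i : ℕ) * w (f i) * (A.submatrix (f ∘ i.succAbove) id).det = 0 := by
  apply FaithfulSMul.algebraMap_injective S L
  have hL := sum_neg_one_pow_mul_mulVec_mul_det_submatrix_succAbove
    ((A.map (algebraMap S L)).submatrix f id) x
  have hrow (i) : ((A.map (algebraMap S L)).submatrix f id *ᵥ x) i = algebraMap S L (w (f i)) :=
    congrFun hx (f i)
  simp only [hrow] at hL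
  simpa [RingHom.map_det, submatrix_map] using hL

theorem exists_embedding_det_submatrix_ne_zero {ι κ K : Type*} [Finite ι] [Fintype κ]
    [DecidableEq κ] [Field K] {A : Matrix ι κ K} (hA : LinearIndependent K A.col) :
    ∃ g : κ ↪ ι, (A.submatrix g id).det ≠ 0 := by
  have hrank : Module.finrank K (Submodule.span K (Set.range A.row)) = Fintype.card κ := by
    cases nonempty_fintype ι
    rw [← rank_eq_finrank_span_row, ← rank_transpose]
    exact hA.rank_matrix
  obtain ⟨f, hf, -, hfli⟩ := Submodule.exists_fun_fin_finrank_span_eq K (Set.range A.row)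
  choose g hg using hf
  let e := Fintype.equivFinOfCardEq hrank.symm
  have hli : LinearIndependent K (A.submatrix (g ∘ e) id).row := by
    have hrow : (A.submatrix (g ∘ e) id).row = f ∘ e := funext fun r ↦ hg (e r)
    exact hrow ▸ hfli.comp e e.injective
  have hinj : Function.Injective (g ∘ e) :=
    Function.Injective.of_comp (f := A.row) hli.injective
  rw [linearIndependent_rows_iff_isUnit, isUnit_iff_isUnit_det] at hli
  exact ⟨⟨g ∘ e, hinj⟩, hli.ne_zero⟩

theorem dvd_det_of_map_mulVec_eq {ι S L : Type*} [Fintype ι] [DecidableEq ι] [CommRing S]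
    [DecompositionMonoid S] [CommRing L] [Algebra S L] [FaithfulSMul S L] {A : Matrix ι ι S}
    {x : ι → L} {w : ι → S} (hx : A.map (algebraMap S L) *ᵥ x = algebraMap S L ∘ w) {a b : S}
    (hab : IsRelPrime a b) {j : ι} (hj : x j * algebraMap S L b = algebraMap S L a) :
    b ∣ A.det := by
  have hcramer : algebraMap S L (A.cramer w j) = algebraMap S L A.det * x j := by
    have hL := congrFun (cramer_mulVec_s2 (A.map (algebraMap S L)) x) j
    rwa [hx, cramer_eq_adjugate_mulVec, ← RingHom.mapMatrix_apply, ← RingHom.map_adjugate,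
      RingHom.mapMatrix_apply, ← RingHom.map_mulVec, ← cramer_eq_adjugate_mulVec,
      ← RingHom.map_det] at hL
  have hmul : A.det * a = b * A.cramer w j := by
    apply FaithfulSMul.algebraMap_injective S L
    rw [map_mul, map_mul, hcramer, ← hj]
    ring
  exact hab.symm.dvd_of_dvd_mul_right ⟨_, hmul⟩

theorem totalDegree_det_le {ι σ R : Type*} [Fintype ι] [DecidableEq ι] [CommRing R]
    {A : Matrix ι ι (MvPolynomial σ R)} {b : ι → ℕ} (hA : ∀ i j, (A i j).totalDegree ≤ b j) :
    A.det.totalDegree ≤ ∑ j, b j := by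
  rw [det_apply]
  refine totalDegree_finsetSum_le fun τ _ ↦ ?_
  calc (Equiv.Perm.sign τ • ∏ j, A (τ j) j).totalDegree
      ≤ (∏ j, A (τ j) j).totalDegree := totalDegree_smul_le _ _
    _ ≤ ∑ j, (A (τ j) j).totalDegree := totalDegree_finsetProd _ _
    _ ≤ ∑ j, b j := Finset.sum_le_sum fun j _ ↦ hA (τ j) j

theorem exists_eq_C_mul_of_dvd_of_totalDegree_le {σ R : Type*} [CommSemiring R]
    [NoZeroDivisors R] {p m : MvPolynomial σ R} (hdvd : m ∣ p)
    (hdeg : p.totalDegree ≤ m.totalDegree) :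
    ∃ c : R, p = C c * m := by
  obtain ⟨c, rfl⟩ := hdvd
  by_cases hmc : m * c = 0
  · exact ⟨0, by rw [hmc, map_zero, zero_mul]⟩
  rw [totalDegree_mul_of_isDomain (left_ne_zero_of_mul hmc) (right_ne_zero_of_mul hmc)] at hdeg
  have hc : c = C (c.coeff 0) := totalDegree_eq_zero_iff_eq_C.mp (by lia)
  exact ⟨c.coeff 0, by rw [← hc, mul_comm]⟩

variable {σ R L : Type*} [Fintype σ] [CommRing R] [IsDomain R] {d : ℕ}

theorem det_submatrix_eq_zero_of_forall_eq_C_mul [CommRing L] [Algebra (MvPolynomial σ R) L]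
    [FaithfulSMul (MvPolynomial σ R) L] (hd : d < Fintype.card σ)
    {A : Matrix σ (Fin d) (MvPolynomial σ R)} {x : Fin d → L}
    (hx : A.map (algebraMap _ L) *ᵥ x = algebraMap (MvPolynomial σ R) L ∘ X)
    {m : MvPolynomial σ R} {c : (Fin d → σ) → R} (hc : ∀ g, (A.submatrix g id).det = C (c g) * m)
    (g : Fin d ↪ σ) : (A.submatrix g id).det = 0 := by
  by_cases hm0 : m = 0
  · rw [hc, hm0, mul_zero]
  obtain ⟨i₀, hi₀⟩ : ∃ i₀, i₀ ∉ Set.range g := by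
    by_contra! hsurj
    simpa using hd.trans_le (Fintype.card_le_of_surjective g hsurj)
  let f : Fin (d + 1) → σ := Fin.cons i₀ g
  have hf : Function.Injective f := Fin.cons_injective_iff.mpr ⟨hi₀, g.injective⟩
  have hrel : ∑ a : Fin (d + 1), ((-1) ^ (a : ℕ) * c (f ∘ a.succAbove)) • X (R := R) (f a) = 0 := by
    refine (mul_eq_zero.mp ?_).resolve_left hm0
    rw [← sum_neg_one_pow_mul_det_submatrix_eq_zero_of_map_mulVec_eq hx f, Finset.mul_sum]
    refine Finset.sum_congr rfl fun a _ ↦ ?_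
    rw [hc, smul_eq_C_mul, C_mul, C_pow, C_neg, C_1]
    ring
  have hcoeff := Fintype.linearIndependent_iff.mp ((linearIndependent_X σ R).comp f hf) _ hrel 0
  have hcg : c g = 0 := by simpa [f, Function.comp_def] using hcoeff
  rw [hc, hcg, C_0, zero_mul]

variable [Field L] [Algebra (MvPolynomial σ R) L] [FaithfulSMul (MvPolynomial σ R) L]

theorem totalDegree_lt_of_forall_dvd_det_submatrix (hd : d < Fintype.card σ)
    {A : Matrix σ (Fin d) (MvPolynomial σ R)} (hA : ∀ i j, (A i j).totalDegree ≤ 1)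
    (hcol : LinearIndependent L (A.map (algebraMap _ L)).col) {x : Fin d → L}
    (hx : A.map (algebraMap _ L) *ᵥ x = algebraMap (MvPolynomial σ R) L ∘ X)
    {m : MvPolynomial σ R} (hm : ∀ g : Fin d → σ, m ∣ (A.submatrix g id).det) :
    m.totalDegree < d := by
  by_contra! hdm
  have hdeg (g : Fin d → σ) : (A.submatrix g id).det.totalDegree ≤ d := by
    simpa using totalDegree_det_le (A := A.submatrix g id) (b := 1) fun i j ↦ hA (g i) j
  choose c hc using fun g ↦ exists_eq_C_mul_of_dvd_of_totalDegree_le (hm g) ((hdeg g).trans hdm)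
  obtain ⟨g, hg⟩ := exists_embedding_det_submatrix_ne_zero hcol
  rw [submatrix_map, ← RingHom.mapMatrix_apply, ← RingHom.map_det] at hg
  exact hg (by rw [det_submatrix_eq_zero_of_forall_eq_C_mul hd hx hc g, map_zero])

theorem stmt_2_general [UniqueFactorizationMonoid R] (hd : d < Fintype.card σ)
    (q : Fin d → σ → MvPolynomial σ R) (hq : ∀ j i, (q j i).totalDegree ≤ 1)
    (hind : LinearIndependent L fun j i ↦ algebraMap (MvPolynomial σ R) L (q j i))
    (h k : Fin d → MvPolynomial σ R) (hk : ∀ j, k j ≠ 0)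
    (heq : ∀ i, algebraMap (MvPolynomial σ R) L (X i) =
      ∑ j, algebraMap _ L (h j) / algebraMap _ L (k j) * algebraMap _ L (q j i))
    (hrel : ∀ j, IsRelPrime (h j) (k j)) (m : MvPolynomial σ R)
    (hm : ∀ c, (∀ j, k j ∣ c) → m ∣ c) :
    m.totalDegree < d := by
  let A : Matrix σ (Fin d) (MvPolynomial σ R) := .of fun i j ↦ q j i
  let x : Fin d → L := fun j ↦ algebraMap _ L (h j) / algebraMap _ L (k j)
  have hx : A.map (algebraMap _ L) *ᵥ x = algebraMap (MvPolynomial σ R) L ∘ X := by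
    ext i
    simp [A, x, mulVec, dotProduct, heq, mul_comm]
  refine totalDegree_lt_of_forall_dvd_det_submatrix hd (fun i j ↦ hq j i) hind hx fun g ↦ ?_
  have hrows : (A.submatrix g id).map (algebraMap _ L) *ᵥ x = algebraMap _ L ∘ X ∘ g :=
    congrArg (· ∘ g) hx
  refine hm _ fun j ↦ dvd_det_of_map_mulVec_eq hrows (hrel j) (div_mul_cancel₀ _ ?_)
  exact (map_ne_zero_iff _ (FaithfulSMul.algebraMap_injective _ L)).mpr (hk j)

end

theorem stmt_2 (F : Type*) [Field F] [IsAlgClosed F] (n : ℕ) (hn : 3 ≤ n) (d : ℕ) (hdn : d < n)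
    (q : Fin d → (Fin n → MvPolynomial (Fin n) F))
    (hS1 : ∀ j : Fin d, ∀ i : Fin n, q j i ∈ Submodule.span F
      (Set.range (MvPolynomial.X : Fin n → MvPolynomial (Fin n) F)))
    (hind : LinearIndependent (FractionRing (MvPolynomial (Fin n) F))
      (fun j : Fin d => fun i : Fin n =>
        algebraMap (MvPolynomial (Fin n) F) (FractionRing (MvPolynomial (Fin n) F)) (q j i)))
    (hy : (fun i : Fin n =>
        algebraMap (MvPolynomial (Fin n) F) (FractionRing (MvPolynomial (Fin n) F))
          (MvPolynomial.X i)) ∈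
      Submodule.span (FractionRing (MvPolynomial (Fin n) F))
        (Set.range (fun j : Fin d => fun i : Fin n =>
          algebraMap (MvPolynomial (Fin n) F) (FractionRing (MvPolynomial (Fin n) F)) (q j i))))
    (h k : Fin d → MvPolynomial (Fin n) F)
    (hk0 : ∀ j, k j ≠ 0)
    (heq : ∀ i : Fin n,
      algebraMap (MvPolynomial (Fin n) F) (FractionRing (MvPolynomial (Fin n) F))
          (MvPolynomial.X i) =
        ∑ j : Fin d,
          (algebraMap (MvPolynomial (Fin n) F) (FractionRing (MvPolynomial (Fin n) F)) (h j) /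
            algebraMap (MvPolynomial (Fin n) F) (FractionRing (MvPolynomial (Fin n) F)) (k j)) *
          algebraMap (MvPolynomial (Fin n) F) (FractionRing (MvPolynomial (Fin n) F)) (q j i))
    (hcond : ∀ j, (h j = 0 ∧ k j = 1) ∨
      (h j ≠ 0 ∧ IsRelPrime (h j) (k j) ∧
        ∃ m : ℕ, (h j).IsHomogeneous m ∧ (k j).IsHomogeneous m))
    (m : MvPolynomial (Fin n) F)
    (hm1 : ∀ j, k j ∣ m)
    (hm2 : ∀ c : MvPolynomial (Fin n) F, (∀ j, k j ∣ c) → m ∣ c) :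
    m.totalDegree < d := by
  refine stmt_2_general (by simpa using hdn) q (fun j i ↦ ?_) hind h k hk0 heq (fun j ↦ ?_) m hm2
  · have hlin := hS1 j i
    rw [← homogeneousSubmodule_one_eq_span_X, mem_homogeneousSubmodule] at hlin
    exact hlin.totalDegree_le
  · rcases hcond j with ⟨-, hk1⟩ | ⟨-, hrel, -⟩
    · exact hk1 ▸ isRelPrime_one_right
    · exact hrel
end

section
/- Let d < n and let q_1,…,q_d ∈ (S_1)^n have L-linearly independent images in L^n. Assume that in L^n the vector ỹ lies in the L-span of the images of q_1,…,q_d. If there exists an injective map ι : {1,…,d} → {1,…,n} such that det(Q_ι) is irreducible in S, where Q_ι is the d×d matrix whose (s,t) entry is the ι(s)-th component of q_t, then ỹ lies in the F-span of q_1,…,q_d in S^n, i.e., there exist α_1,…,α_d ∈ F with ỹ = Σ_{j=1}^d α_j·q_j. -/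
open MvPolynomial

/-!
Let `M *ᵥ c = b` be an overdetermined linear system with polynomial data and a solution `c` in an
extension, and let `D` be a prime maximal minor of `M`, with rows `ι`. By Cramer's rule, solving
with the rows `ι` and solving with any other rows `κ` give the same `c`, so `D` divides every
product of the minor on `κ` with a Cramer determinant of the rows `ι`. As `D` is prime, it divides
either all these Cramer determinants or all maximal minors. If all entries of `M` and `b` are
homogeneous of one degree, then `D`, the minors and the Cramer determinants also share a degree, so
the quotients by `D` are constants. In the first case they form a constant solution. In the second
case they express each row of `M` as a constant combination of the rows `ι`, and then `b` satisfies
the same relation; for `b` the vector of variables this is impossible outside the range of `ι`.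
-/

open Matrix

section Cramer

variable {τ m R K : Type*} [Fintype m] [CommRing R] [CommRing K] {f : R →+* K}
  {M : Matrix τ m R} {b : τ → R} {c : m → K}

theorem map_submatrix_mulVec_eq (hc : M.map f *ᵥ c = f ∘ b) (ι : m → τ) :
    (M.submatrix ι id).map f *ᵥ c = f ∘ b ∘ ι :=
  funext fun s => congrFun hc (ι s)

theorem eq_dotProduct_of_vecMul_submatrix_eq (hf : Function.Injective f)
    (hc : M.map f *ᵥ c = f ∘ b) {ι : m → τ} {i : τ} {v : m → R}
    (hv : v ᵥ* M.submatrix ι id = M i) : b i = v ⬝ᵥ (b ∘ ι) := by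
  apply hf
  calc f (b i) = (f ∘ M i) ⬝ᵥ c := (congrFun hc i).symm
    _ = ((f ∘ v) ᵥ* (M.submatrix ι id).map f) ⬝ᵥ c := by
      rw [← hv]; congr 1; exact funext (f.map_vecMul _ _)
    _ = (f ∘ v) ⬝ᵥ (f ∘ b ∘ ι) := by
      rw [← dotProduct_mulVec, map_submatrix_mulVec_eq hc]
    _ = f (v ⬝ᵥ (b ∘ ι)) := (f.map_dotProduct _ _).symm

variable [DecidableEq m]

theorem map_cramer_of_map_mulVec_eq {A : Matrix m m R} {b : m → R} (hc : A.map f *ᵥ c = f ∘ b) :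
    f ∘ A.cramer b = f A.det • c := by
  have hadj : (A.map f).adjugate = A.adjugate.map f := (f.map_adjugate A).symm
  have hdet : (A.map f).det = f A.det := (f.map_det A).symm
  calc f ∘ A.cramer b = A.adjugate.map f *ᵥ (f ∘ b) := by
        rw [cramer_eq_adjugate_mulVec]; exact funext (f.map_mulVec _ _)
    _ = f A.det • c := by
        rw [← hc, ← hadj, mulVec_mulVec, adjugate_mul, smul_mulVec, one_mulVec, hdet]

theorem mulVec_eq_of_submatrix_mulVec_eq [IsDomain R] (hf : Function.Injective f)
    (hc : M.map f *ᵥ c = f ∘ b) {ι : m → τ} (hdet : (M.submatrix ι id).det ≠ 0) {v : m → R}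
    (hv : M.submatrix ι id *ᵥ v = b ∘ ι) : M *ᵥ v = b := by
  set D := (M.submatrix ι id).det
  have hfv : M.map f *ᵥ (f ∘ v) = f ∘ (M *ᵥ v) := funext fun i => (f.map_mulVec M v i).symm
  have hvc : f D • (f ∘ v) = f D • c := by
    rw [← map_cramer_of_map_mulVec_eq (map_submatrix_mulVec_eq hfv ι),
      ← map_cramer_of_map_mulVec_eq (map_submatrix_mulVec_eq hc ι), ← hv]
    rfl
  have hsmul : f D • (f ∘ (M *ᵥ v)) = f D • (f ∘ b) := by
    rw [← hfv, ← hc, ← mulVec_smul, hvc, mulVec_smul]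
  funext i
  refine mul_left_cancel₀ hdet (hf ?_)
  rw [map_mul, map_mul]
  exact congrFun hsmul i

theorem det_submatrix_mul_cramer_comm (hf : Function.Injective f) (hc : M.map f *ᵥ c = f ∘ b)
    (ι κ : m → τ) (j : m) :
    (M.submatrix κ id).det * (M.submatrix ι id).cramer (b ∘ ι) j =
      (M.submatrix ι id).det * (M.submatrix κ id).cramer (b ∘ κ) j := by
  have hcramer (η : m → τ) :
      f ((M.submatrix η id).cramer (b ∘ η) j) = f (M.submatrix η id).det * c j :=
    congrFun (map_cramer_of_map_mulVec_eq (map_submatrix_mulVec_eq hc η)) j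
  apply hf
  rw [map_mul, map_mul, hcramer, hcramer, mul_left_comm]

theorem dvd_cramer_or_dvd_det_submatrix (hf : Function.Injective f) (hc : M.map f *ᵥ c = f ∘ b)
    {ι : m → τ} (hprime : Prime (M.submatrix ι id).det) :
    (∀ j, (M.submatrix ι id).det ∣ (M.submatrix ι id).cramer (b ∘ ι) j) ∨
      ∀ κ : m → τ, (M.submatrix ι id).det ∣ (M.submatrix κ id).det := by
  by_contra! ⟨⟨j, hj⟩, ⟨κ, hκ⟩⟩
  have hdvd := Dvd.intro _ (det_submatrix_mul_cramer_comm hf hc ι κ j).symm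
  exact (hprime.dvd_or_dvd hdvd).elim hκ hj

theorem cramer_transpose_submatrix (M : Matrix τ m R) (ι : m → τ) (i : τ) (s : m) :
    (M.submatrix ι id)ᵀ.cramer (M i) s = (M.submatrix (Function.update ι s i) id).det := by
  rw [cramer_transpose_apply]
  congr 1
  ext t j
  by_cases hts : t = s <;> simp [updateRow_apply, hts]

end Cramer

section Homogeneous

variable {σ τ m R K : Type*} [CommRing R]

theorem exists_eq_mul_C_of_dvd_of_isHomogeneous [IsDomain R] {p r : MvPolynomial σ R} {k : ℕ}
    (hp : p.IsHomogeneous k) (hr : r.IsHomogeneous k) (hp0 : p ≠ 0) (hdvd : p ∣ r) :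
    ∃ a : R, r = p * C a := by
  obtain ⟨e, rfl⟩ := hdvd
  rcases eq_or_ne e 0 with rfl | he
  · exact ⟨0, by rw [C_0]⟩
  have hdeg := totalDegree_mul_of_isDomain hp0 he
  rw [hr.totalDegree (mul_ne_zero hp0 he), hp.totalDegree hp0] at hdeg
  have he_deg : e.totalDegree = 0 := by lia
  exact ⟨_, by rw [← totalDegree_eq_zero_iff_eq_C.mp he_deg]⟩

variable [Fintype m] [DecidableEq m]

theorem isHomogeneous_det_s3 {A : Matrix m m (MvPolynomial σ R)} {k : ℕ}
    (hA : ∀ i j, (A i j).IsHomogeneous k) : A.det.IsHomogeneous (Fintype.card m * k) := by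
  rw [det_apply]
  refine IsHomogeneous.sum _ _ _ fun g _ => ?_
  have hprod : (∏ i, A (g i) i).IsHomogeneous (Fintype.card m * k) := by
    simpa using IsHomogeneous.prod Finset.univ _ _ fun i _ => hA (g i) i
  rw [← mem_homogeneousSubmodule] at hprod ⊢
  exact zsmul_mem hprod _

theorem isHomogeneous_cramer {A : Matrix m m (MvPolynomial σ R)} {b : m → MvPolynomial σ R} {k : ℕ}
    (hA : ∀ i j, (A i j).IsHomogeneous k) (hb : ∀ i, (b i).IsHomogeneous k) (j : m) :
    (A.cramer b j).IsHomogeneous (Fintype.card m * k) := by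
  rw [cramer_apply]
  refine isHomogeneous_det_s3 fun i l => ?_
  rw [updateCol_apply]
  split_ifs
  exacts [hb i, hA i l]

variable [IsDomain R]

theorem exists_mulVec_C_eq_of_det_dvd_cramer {A : Matrix m m (MvPolynomial σ R)}
    {b : m → MvPolynomial σ R} {k : ℕ} (hA : ∀ i j, (A i j).IsHomogeneous k)
    (hb : ∀ i, (b i).IsHomogeneous k) (hdet : A.det ≠ 0) (hdvd : ∀ j, A.det ∣ A.cramer b j) :
    ∃ a : m → R, A *ᵥ (C ∘ a) = b := by
  choose a ha using fun j =>
    exists_eq_mul_C_of_dvd_of_isHomogeneous (isHomogeneous_det_s3 hA)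
      (isHomogeneous_cramer hA hb j) hdet (hdvd j)
  have hsmul : A.cramer b = A.det • (C ∘ a) := funext ha
  refine ⟨a, smul_right_injective _ hdet ?_⟩
  simp only [← mulVec_smul, ← hsmul, mulVec_cramer]

theorem exists_mulVec_C_eq_of_prime_det [CommRing K] {f : MvPolynomial σ R →+* K}
    (hf : Function.Injective f) {M : Matrix τ m (MvPolynomial σ R)} {b : τ → MvPolynomial σ R}
    {k : ℕ} (hM : ∀ i j, (M i j).IsHomogeneous k) (hb : ∀ i, (b i).IsHomogeneous k) {c : m → K}
    (hc : M.map f *ᵥ c = f ∘ b) {ι : m → τ} (hprime : Prime (M.submatrix ι id).det) {i₀ : τ}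
    (hi₀ : b i₀ ∉ Submodule.span R (Set.range (b ∘ ι))) :
    ∃ a : m → R, M *ᵥ (C ∘ a) = b := by
  rcases dvd_cramer_or_dvd_det_submatrix hf hc hprime with hcramer | hminors
  · obtain ⟨a, ha⟩ := exists_mulVec_C_eq_of_det_dvd_cramer (fun s => hM (ι s)) (fun s => hb (ι s))
      hprime.ne_zero hcramer
    exact ⟨a, mulVec_eq_of_submatrix_mulVec_eq hf hc hprime.ne_zero ha⟩
  · obtain ⟨a, ha⟩ : ∃ a : m → R, (M.submatrix ι id)ᵀ *ᵥ (C ∘ a) = M i₀ := by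
      refine exists_mulVec_C_eq_of_det_dvd_cramer (fun j s => hM (ι s) j) (hM i₀) ?_ fun s => ?_
      · rw [det_transpose]
        exact hprime.ne_zero
      · rw [det_transpose, cramer_transpose_submatrix]
        exact hminors _
    rw [mulVec_transpose] at ha
    refine absurd ?_ hi₀
    rw [eq_dotProduct_of_vecMul_submatrix_eq hf hc ha, Submodule.mem_span_range_iff_exists_fun]
    exact ⟨a, by simp only [dotProduct, Function.comp_apply, smul_eq_C_mul]⟩

end Homogeneous

theorem stmt_3_general {σ m R K : Type*} [Fintype m] [DecidableEq m] [CommRing R] [IsDomain R]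
    [CommRing K] [Algebra (MvPolynomial σ R) K] [FaithfulSMul (MvPolynomial σ R) K]
    (q : m → σ → MvPolynomial σ R)
    (hq : ∀ j i, q j i ∈ Submodule.span R (Set.range (X : σ → MvPolynomial σ R)))
    (hX : (fun i => algebraMap (MvPolynomial σ R) K (X i)) ∈
      Submodule.span K (Set.range fun j i => algebraMap (MvPolynomial σ R) K (q j i)))
    {ι : m → σ} (hι : ¬ Function.Surjective ι)
    (hprime : Prime (Matrix.of fun s t => q t (ι s)).det) :
    ∃ α : m → R, (fun i => (X i : MvPolynomial σ R)) = ∑ j, α j • q j := by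
  obtain ⟨i₀, hi₀⟩ : ∃ i₀, i₀ ∉ Set.range ι := by simpa [Function.Surjective] using hι
  have hq_hom (i j) : (q j i).IsHomogeneous 1 := by
    rw [← mem_homogeneousSubmodule, homogeneousSubmodule_one_eq_span_X]
    exact hq j i
  have hX_notMem : (X i₀ : MvPolynomial σ R) ∉ Submodule.span R (Set.range (X ∘ ι)) := by
    rw [Set.range_comp]
    exact (linearIndependent_X σ R).notMem_span_image hi₀
  obtain ⟨c, hc⟩ := Submodule.mem_span_range_iff_exists_fun K |>.mp hX
  have hsolution : ((Matrix.of q)ᵀ.map (algebraMap _ K)) *ᵥ c =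
      algebraMap (MvPolynomial σ R) K ∘ X := by
    simp only [mulVec_eq_sum, op_smul_eq_smul]
    exact hc
  obtain ⟨α, hα⟩ := exists_mulVec_C_eq_of_prime_det (FaithfulSMul.algebraMap_injective _ K)
    hq_hom (isHomogeneous_X R) hsolution hprime hX_notMem
  refine ⟨α, funext fun i => ?_⟩
  rw [← hα]
  simp [mulVec, dotProduct, smul_eq_C_mul, mul_comm]

theorem stmt_3 (F : Type*) [Field F] [IsAlgClosed F] (n : ℕ) (hn : 3 ≤ n) (d : ℕ) (hdn : d < n)
    (q : Fin d → (Fin n → MvPolynomial (Fin n) F))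
    (hS1 : ∀ j : Fin d, ∀ i : Fin n, q j i ∈ Submodule.span F
      (Set.range (MvPolynomial.X : Fin n → MvPolynomial (Fin n) F)))
    (hind : LinearIndependent (FractionRing (MvPolynomial (Fin n) F))
      (fun j : Fin d => fun i : Fin n =>
        algebraMap (MvPolynomial (Fin n) F) (FractionRing (MvPolynomial (Fin n) F)) (q j i)))
    (hy : (fun i : Fin n =>
        algebraMap (MvPolynomial (Fin n) F) (FractionRing (MvPolynomial (Fin n) F))
          (MvPolynomial.X i)) ∈
      Submodule.span (FractionRing (MvPolynomial (Fin n) F))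
        (Set.range (fun j : Fin d => fun i : Fin n =>
          algebraMap (MvPolynomial (Fin n) F) (FractionRing (MvPolynomial (Fin n) F)) (q j i))))
    (hirr : ∃ ι : Fin d → Fin n, Function.Injective ι ∧
      Irreducible (Matrix.of fun s t : Fin d => q t (ι s)).det) :
    ∃ α : Fin d → F,
      (fun i : Fin n => (MvPolynomial.X i : MvPolynomial (Fin n) F)) =
        ∑ j : Fin d, α j • q j := by
  obtain ⟨ι, -, hdet⟩ := hirr
  have hι : ¬ Function.Surjective ι := fun hsurj =>
    hdn.not_ge (by simpa using Fintype.card_le_of_surjective ι hsurj)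
  exact stmt_3_general q hS1 hy hι hdet.prime
end

section
/- Let V ⊆ (S_1)^n be a 1-dimensional F-subspace. If V has the ỹ-local membership property, then ỹ ∈ V. -/
open MvPolynomial

/-!
Let `q` span `V`, and let `e j` be the unit vectors. Local membership at `a = e j` says that `e j`
is a multiple of the vector of values `q i (e j)`, so `q j (e j)` is a unit and `q i (e j) = 0` for
`i ≠ j`; hence `q i = m i • X i` for scalars `m i`. Local membership at `a = (1, …, 1)` then gives
one scalar `c` with `c * m i = 1` for all `i`, that is, `c • q = X`.
-/

section LocalMembership

variable {σ ι R : Type*} [CommSemiring R]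

theorem eval_single_linearCombination_X [DecidableEq σ] (c : σ →₀ R) (j : σ) :
    eval (Pi.single j 1) (Finsupp.linearCombination R (X : σ → MvPolynomial σ R) c) = c j := by
  simp [Finsupp.linearCombination_apply, Finsupp.sum, map_sum, smul_eval, Pi.single_apply, eq_comm]

theorem eq_smul_X_of_eval_single_eq_zero [DecidableEq σ] {p : MvPolynomial σ R} {i : σ}
    (hp : p ∈ Submodule.span R (Set.range X)) (h : ∀ j ≠ i, eval (Pi.single j 1) p = 0) :
    p = eval (Pi.single i 1) p • X i := by
  rw [← Finsupp.range_linearCombination] at hp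
  obtain ⟨c, rfl⟩ := hp
  simp only [eval_single_linearCombination_X] at h ⊢
  have eq_single : c = Finsupp.single i (c i) := by
    ext j
    rcases eq_or_ne j i with rfl | hji
    · simp
    · simp [h j hji, hji]
  conv_lhs => rw [eq_single, Finsupp.linearCombination_single]

theorem exists_smul_eq_X_of_forall_exists_smul_eval_eq {q : σ → MvPolynomial σ R}
    (hq : ∀ i, q i ∈ Submodule.span R (Set.range X))
    (h : ∀ a : σ → R, ∃ c : R, (c • fun i => eval a (q i)) = a) :
    ∃ c : R, c • q = X := by
  classical
  have eval_single_eq_zero (i j : σ) (hji : j ≠ i) : eval (Pi.single j 1) (q i) = 0 := by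
    obtain ⟨c, hc⟩ := h (Pi.single j 1)
    have diagonal : c * eval (Pi.single j 1) (q j) = 1 := by simpa using congrFun hc j
    have off_diagonal : c * eval (Pi.single j 1) (q i) = 0 := by
      simpa [hji.symm] using congrFun hc i
    exact (IsUnit.of_mul_eq_one _ diagonal).mul_right_eq_zero.mp off_diagonal
  have eq_smul_X (i : σ) : q i = eval (Pi.single i 1) (q i) • X i :=
    eq_smul_X_of_eval_single_eq_zero (hq i) (eval_single_eq_zero i)
  obtain ⟨c, hc⟩ := h 1
  refine ⟨c, funext fun i => ?_⟩
  have eval_one : eval 1 (q i) = eval (Pi.single i 1) (q i) := by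
    simpa [smul_eval] using congrArg (eval 1) (eq_smul_X i)
  have mul_eq_one : c * eval (Pi.single i 1) (q i) = 1 := by
    simpa [eval_one] using congrFun hc i
  rw [Pi.smul_apply, eq_smul_X i, smul_smul, mul_eq_one, one_smul]

theorem span_image_eval_span (a : σ → R) (s : Set (ι → MvPolynomial σ R)) :
    Submodule.span R ((fun (q : ι → MvPolynomial σ R) i => eval a (q i)) ''
      (Submodule.span R s : Set (ι → MvPolynomial σ R))) =
    Submodule.span R ((fun q i => eval a (q i)) '' s) := by
  let evalAt : (ι → MvPolynomial σ R) →ₗ[R] (ι → R) := (aeval a).toLinearMap.compLeft ι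
  change Submodule.span R (evalAt '' (Submodule.span R s : Set _)) = Submodule.span R (evalAt '' s)
  rw [Submodule.span_image, Submodule.span_span, Submodule.span_image]

theorem stmt_5_general (V : Submodule R (σ → MvPolynomial σ R)) [V.IsPrincipal]
    (hS1 : ∀ q ∈ V, ∀ i : σ, q i ∈ Submodule.span R (Set.range (X : σ → MvPolynomial σ R)))
    (hloc : ∀ a : σ → R, a ∈ Submodule.span R
      ((fun (q : σ → MvPolynomial σ R) i => eval a (q i)) '' (V : Set (σ → MvPolynomial σ R)))) :
    (X : σ → MvPolynomial σ R) ∈ V := by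
  obtain ⟨q, rfl⟩ := Submodule.IsPrincipal.principal V
  simp only [span_image_eval_span, Set.image_singleton, Submodule.mem_span_singleton] at hloc
  have hq := hS1 q (Submodule.mem_span_singleton_self q)
  exact Submodule.mem_span_singleton.mpr (exists_smul_eq_X_of_forall_exists_smul_eval_eq hq hloc)

end LocalMembership

theorem stmt_5 (F : Type*) [Field F] [IsAlgClosed F] (n : ℕ) (hn : 3 ≤ n)
    (V : Submodule F (Fin n → MvPolynomial (Fin n) F))
    (hS1 : ∀ q ∈ V, ∀ i : Fin n, q i ∈ Submodule.span F
      (Set.range (MvPolynomial.X : Fin n → MvPolynomial (Fin n) F)))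
    (hdim : Module.finrank F V = 1)
    (hloc : ∀ a : Fin n → F, a ∈ Submodule.span F
      ((fun q : Fin n → MvPolynomial (Fin n) F => fun i => MvPolynomial.eval a (q i)) ''
        (V : Set (Fin n → MvPolynomial (Fin n) F)))) :
    (fun i : Fin n => (MvPolynomial.X i : MvPolynomial (Fin n) F)) ∈ V := by
  have : Module.Finite F V := Module.finite_of_finrank_eq_succ hdim
  have : V.IsPrincipal := (Submodule.finrank_le_one_iff_isPrincipal V).mp hdim.le
  exact stmt_5_general V hS1 hloc
end

section
/- Assume n ≥ 3 and that char(F) = 0 or char(F) > n. Let V ⊆ (S_1)^n be a 2-dimensional F-subspace whose image in L^n spans a 2-dimensional L-subspace (equivalently, an F-basis of V has L-linearly independent images in L^n; equivalently, the S-submodule of S^n generated by V is free of rank 2). If V has the ỹ-local membership property, then ỹ ∈ V. -/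
open MvPolynomial

/-!
Write the basis of `V` as `A ỹ`, `B ỹ` for matrices `A`, `B`; the hypothesis says that every `a`
lies in the span of `A a` and `B a`, and the claim is that `1` lies in the span of `A` and `B`.

Unless all `2 × 2` minors of `(A ỹ, B ỹ)` vanish, Cramer's rule gives a relation
`e ỹ = s A ỹ + t B ỹ` with polynomial coefficients and `e ≠ 0`, and we may take `e`, `s`, `t`
without common factor. If `e` is a unit, constant coefficients give the claim. Otherwise, let `p` be
a prime factor of `e`. On the hypersurface `p = 0`, the vectors `A a` and `B a` are generically
dependent, and their span contains `a`, so `a` is an eigenvector of both matrices. As there are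
finitely many eigenvalues, the Nullstellensatz yields `l` and `m` such that `p` divides all the
linear forms `(A - l) ỹ` and `(B - m) ỹ`. So these forms are all constant multiples of a single one,
and `A - l = u fᵀ`, `B - m = v fᵀ`. When all the minors vanish, the same argument applies with
`p = 0`. Finally a vector outside the span of `u` and `v`, which exists because `n ≥ 3`, shows that
`1` is a combination of `A` and `B`.
-/

namespace LocalMembership

open scoped Matrix

section LinearForms

variable {R m n : Type*} [CommSemiring R] [Fintype n]

variable (R m n) in
/-- `Matrix.toMvPolynomial` as a linear map: a matrix is sent to the vector of linear forms whose
coefficients are its rows. -/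
noncomputable def linearForms : Matrix m n R →ₗ[R] (m → MvPolynomial n R) where
  toFun := Matrix.toMvPolynomial
  map_add' := Matrix.toMvPolynomial_add
  map_smul' c M := by
    funext i
    simp [Matrix.toMvPolynomial, Finset.smul_sum, smul_monomial]

@[simp]
lemma linearForms_apply (M : Matrix m n R) : linearForms R m n M = M.toMvPolynomial := rfl

lemma mem_range_linearForms {q : m → MvPolynomial n R}
    (hq : ∀ i, q i ∈ Submodule.span R (Set.range X)) :
    q ∈ LinearMap.range (linearForms R m n) := by
  choose M hM using fun i => (Submodule.mem_span_range_iff_exists_fun R).1 (hq i)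
  refine ⟨Matrix.of M, funext fun i => ?_⟩
  simp [← hM i, Matrix.toMvPolynomial, X, smul_monomial]

lemma coeff_single_mul_toMvPolynomial (p : MvPolynomial n R) (M : Matrix m n R) (i : m) (j : n) :
    coeff (Finsupp.single j 1) (p * M.toMvPolynomial i) = constantCoeff p * M i j := by
  classical
  rw [Matrix.toMvPolynomial, Finset.mul_sum, coeff_sum, Finset.sum_eq_single j]
  · simp [coeff_mul_monomial', constantCoeff_eq]
  · intro k _ hkj
    simp [coeff_mul_monomial', hkj.symm]
  · simp

lemma coeff_single_toMvPolynomial (M : Matrix m n R) (i : m) (j : n) :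
    coeff (Finsupp.single j 1) (M.toMvPolynomial i) = M i j := by
  simpa using coeff_single_mul_toMvPolynomial 1 M i j

lemma constantCoeff_smul_eq_of_smul_toMvPolynomial_eq {d s t : MvPolynomial n R}
    {M A B : Matrix m n R}
    (h : d • M.toMvPolynomial = s • A.toMvPolynomial + t • B.toMvPolynomial) :
    constantCoeff d • M = constantCoeff s • A + constantCoeff t • B := by
  ext i j
  have hij := congrArg (coeff (Finsupp.single j 1)) (congrFun h i)
  simpa only [Pi.add_apply, Pi.smul_apply, Matrix.add_apply, Matrix.smul_apply, smul_eq_mul,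
    coeff_add, coeff_single_mul_toMvPolynomial] using hij

lemma span_eval_image_span_toMvPolynomial_pair (A B : Matrix m n R) (a : n → R) :
    Submodule.span R ((fun q : m → MvPolynomial n R => fun i => eval a (q i)) ''
      Submodule.span R {A.toMvPolynomial, B.toMvPolynomial}) =
      Submodule.span R {A *ᵥ a, B *ᵥ a} := by
  let ev : (m → MvPolynomial n R) →ₗ[R] (m → R) := (aeval a).toLinearMap.compLeft m
  have hev (M : Matrix m n R) : ev M.toMvPolynomial = M *ᵥ a :=
    funext fun i => M.toMvPolynomial_eval_eq_apply i a
  calc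
    _ = Submodule.span R (ev '' Submodule.span R {A.toMvPolynomial, B.toMvPolynomial}) := rfl
    _ = _ := by rw [← Submodule.map_coe, Submodule.span_eq, Submodule.map_span, Set.image_pair,
      hev, hev]

end LinearForms

section RankOne

variable {F m n : Type*} [Field F]

lemma exists_eq_C_mul_of_dvd_of_totalDegree_le_one {p g : MvPolynomial n F} (hp : ¬ IsUnit p)
    (hg : g.totalDegree ≤ 1) (h : p ∣ g) : ∃ c, g = C c * p := by
  obtain ⟨k, rfl⟩ := h
  rcases eq_or_ne (p * k) 0 with h0 | h0
  · exact ⟨0, by simp [h0]⟩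
  have hp0 : p ≠ 0 := left_ne_zero_of_mul h0
  have hpdeg : p.totalDegree ≠ 0 := fun hdeg => by
    rw [totalDegree_eq_zero_iff_eq_C] at hdeg
    rw [hdeg, Ne, C_eq_zero] at hp0
    exact hp (hdeg ▸ (IsUnit.mk0 _ hp0).map C)
  rw [totalDegree_mul_of_isDomain hp0 (right_ne_zero_of_mul h0)] at hg
  have hk : k = C (k.coeff 0) := totalDegree_eq_zero_iff_eq_C.1 (by omega)
  exact ⟨k.coeff 0, by rw [← hk, mul_comm]⟩

lemma exists_eq_vecMulVec_of_dvd_toMvPolynomial [Fintype n] {p : MvPolynomial n F}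
    (hp : ¬ IsUnit p) {M : Matrix m n F} (h : ∀ i, p ∣ M.toMvPolynomial i) :
    ∃ u, M = Matrix.vecMulVec u fun j => coeff (Finsupp.single j 1) p := by
  choose u hu using fun i => exists_eq_C_mul_of_dvd_of_totalDegree_le_one hp
    (M.toMvPolynomial_totalDegree_le i) (h i)
  refine ⟨u, ?_⟩
  ext i j
  rw [← coeff_single_toMvPolynomial M, hu, coeff_C_mul, Matrix.vecMulVec_apply]

end RankOne

section Nullstellensatz

variable {F σ ι : Type*} [Field F] [IsAlgClosed F]

lemma exists_le_of_forall_exists_mem_zeroLocus [Finite σ] {I : Ideal (MvPolynomial σ F)}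
    [hI : I.IsPrime] {R : MvPolynomial σ F} (hR : R ∉ I) {s : Finset ι}
    {J : ι → Ideal (MvPolynomial σ F)}
    (h : ∀ a ∈ zeroLocus F I, eval a R ≠ 0 → ∃ l ∈ s, a ∈ zeroLocus F (J l)) :
    ∃ l ∈ s, J l ≤ I := by
  by_contra! hJ
  choose! g hgJ hgI using fun l hl => SetLike.not_le_iff_exists.1 (hJ l hl)
  have hmem : R * ∏ l ∈ s, g l ∈ I := by
    rw [← IsPrime.vanishingIdeal_zeroLocus (K := F) I, mem_vanishingIdeal_iff]
    intro a ha
    rw [aeval_eq_eval, map_mul, map_prod]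
    by_cases hRa : eval a R = 0
    · rw [hRa, zero_mul]
    · obtain ⟨l, hl, hal⟩ := h a ha hRa
      rw [Finset.prod_eq_zero hl (hal _ (hgJ l hl)), mul_zero]
  rcases hI.mem_or_mem hmem with hRI | hprod
  · exact hR hRI
  · obtain ⟨l, hl, hgl⟩ := Ideal.IsPrime.prod_mem_iff.1 hprod
    exact hgI l hl hgl

variable [Fintype σ] [DecidableEq σ]

lemma exists_forall_toMvPolynomial_sub_smul_one_mem {I : Ideal (MvPolynomial σ F)} [I.IsPrime]
    {R : MvPolynomial σ F} (hR : R ∉ I) {M : Matrix σ σ F}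
    (h : ∀ a ∈ zeroLocus F I, eval a R ≠ 0 → M *ᵥ a ∈ Submodule.span F {a}) :
    ∃ l : F, ∀ i, (M - l • 1).toMvPolynomial i ∈ I := by
  classical
  have hfin : {l | Module.End.HasEigenvalue M.toLin' l}.Finite := Module.End.finite_hasEigenvalue _
  let eigs : Finset F := insert 0 hfin.toFinset
  have hcover : ∀ a ∈ zeroLocus F I, eval a R ≠ 0 → ∃ l ∈ eigs,
      a ∈ zeroLocus F (Ideal.span (Set.range (M - l • 1).toMvPolynomial)) := by
    intro a ha hRa
    suffices ∃ l ∈ eigs, M *ᵥ a = l • a by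
      obtain ⟨l, hl, hla⟩ := this
      refine ⟨l, hl, ?_⟩
      rw [zeroLocus_span]
      rintro _ ⟨i, rfl⟩
      simp [aeval_eq_eval, Matrix.toMvPolynomial_eval_eq_apply, Matrix.sub_mulVec,
        Matrix.smul_mulVec, hla]
    rcases eq_or_ne a 0 with rfl | ha0
    · exact ⟨0, Finset.mem_insert_self _ _, by simp⟩
    · obtain ⟨l, hl⟩ := Submodule.mem_span_singleton.1 (h a ha hRa)
      have hev : Module.End.HasEigenvector M.toLin' l a :=
        ⟨Module.End.mem_eigenspace_iff.2 (by simpa using hl.symm), ha0⟩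
      exact ⟨l, by simp [eigs, Module.End.hasEigenvalue_of_hasEigenvector hev], hl.symm⟩
  obtain ⟨l, -, hl⟩ := exists_le_of_forall_exists_mem_zeroLocus hR hcover
  exact ⟨l, fun i => hl (Ideal.subset_span ⟨i, rfl⟩)⟩

end Nullstellensatz

section Pairs

lemma exists_span_range_eq_of_finrank_le {K M : Type*} [DivisionRing K] [AddCommGroup M]
    [Module K M] {V : Submodule K M} [FiniteDimensional K V] {d : ℕ}
    (h : Module.finrank K V ≤ d) : ∃ g : Fin d → M, Submodule.span K (Set.range g) = V := by
  let b := Module.finBasis K V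
  refine ⟨Function.extend (Fin.castLE h) (V.subtype ∘ b) 0, ?_⟩
  have hb : Submodule.span K (Set.range (V.subtype ∘ b)) = V := by
    rw [Set.range_comp, ← Submodule.map_span, b.span_eq, Submodule.map_subtype_top]
  rw [Set.range_extend (Fin.castLE_injective h), Submodule.span_union, hb, sup_eq_left,
    Submodule.span_le]
  rintro _ ⟨i, -, rfl⟩
  exact V.zero_mem

lemma exists_isRelPrime_smul_eq {R M : Type*} [CommRing R] [IsDomain R] [WfDvdMonoid R]
    [AddCommGroup M] [Module R M] [Module.IsTorsionFree R M] {x y z : M} {d : R} (hd : d ≠ 0)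
    (h : d • x ∈ Submodule.span R {y, z}) :
    ∃ e : R, e ≠ 0 ∧ ∃ s t : R, e • x = s • y + t • z ∧ ∀ p, p ∣ e → p ∣ s → p ∣ t → IsUnit p := by
  obtain ⟨e, ⟨he, hex⟩, hmin⟩ := (wellFounded_dvdNotUnit (α := R)).has_min
    {e : R | e ≠ 0 ∧ e • x ∈ Submodule.span R {y, z}} ⟨d, hd, h⟩
  obtain ⟨s, t, hst⟩ := Submodule.mem_span_pair.1 hex
  refine ⟨e, he, s, t, hst.symm, ?_⟩
  rintro p ⟨e', rfl⟩ ⟨s', rfl⟩ ⟨t', rfl⟩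
  by_contra hp
  have he' : e' ≠ 0 := right_ne_zero_of_mul he
  refine hmin e' ⟨he', Submodule.mem_span_pair.2 ⟨s', t', ?_⟩⟩ ⟨he', p, hp, mul_comm p e'⟩
  apply smul_right_injective M (left_ne_zero_of_mul he)
  simpa only [smul_add, smul_smul] using hst

lemma not_linearIndependent_pair_of_forall_mul_eq_mul {R ι : Type*} [CommRing R] [Nontrivial R]
    {x y : ι → R} (h : ∀ i j, x i * y j = x j * y i) : ¬ LinearIndependent R ![x, y] := by
  intro hxy
  rw [LinearIndependent.pair_iff] at hxy
  have hx : x = 0 := funext fun i => neg_eq_zero.1 <| And.right <| hxy (y i) (-x i) <| by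
    ext j
    simp only [Pi.add_apply, Pi.smul_apply, Pi.zero_apply, smul_eq_mul]
    linear_combination -h i j
  simpa using hxy 1 0 (by simp [hx])

variable {F σ : Type*} [Field F]

lemma span_pair_le_span_singleton {V : Type*} [AddCommGroup V] [Module F V] {a x y : V}
    (ha : a ≠ 0) (hmem : a ∈ Submodule.span F {x, y}) (hxy : ¬ LinearIndependent F ![x, y]) :
    Submodule.span F {x, y} ≤ Submodule.span F {a} := by
  rw [linearIndependent_iff_card_le_finrank_span, Matrix.range_cons_cons_empty, Fintype.card_fin,
    not_le, Set.finrank] at hxy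
  have : FiniteDimensional F (Submodule.span F {x, y}) :=
    FiniteDimensional.span_of_finite F (Set.toFinite _)
  refine (Submodule.eq_of_le_of_finrank_le ?_ ?_).ge
  · rwa [Submodule.span_singleton_le_iff_mem]
  · rw [finrank_span_singleton ha]
    omega

variable [Fintype σ]

lemma exists_notMem_span_pair_and_dotProduct_ne_zero (hσ : 2 < Fintype.card σ) (u v f : σ → F) :
    ∃ a, a ∉ Submodule.span F {u, v} ∧ (f ⬝ᵥ a = 0 → f = 0) := by
  classical
  have hspan : ¬ ⊤ ≤ Submodule.span F {u, v} := fun htop => by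
    have hle := finrank_span_finset_le_card (R := F) {u, v}
    rw [Finset.coe_pair, Set.finrank, top_le_iff.1 htop, finrank_top, Module.finrank_pi] at hle
    exact (hle.trans Finset.card_le_two).not_gt hσ
  obtain ⟨a₀, -, ha₀⟩ := SetLike.not_le_iff_exists.1 hspan
  by_contra! h
  have hcover : ((⊤ : Submodule F (σ → F)) : Set (σ → F)) ⊆
      Submodule.span F {u, v} ∪ LinearMap.ker (dotProductBilin F F f) := fun a _ =>
    or_iff_not_imp_left.2 fun ha => (h a ha).1
  rcases AddSubgroupClass.subset_union.1 hcover with htop | hker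
  · exact hspan htop
  · exact (h a₀ ha₀).2 (dotProduct_eq_zero_iff.1 fun a => hker Submodule.mem_top)

end Pairs

section Matrices

variable {F σ : Type*} [Field F] [Fintype σ] {A B : Matrix σ σ F}

lemma exists_smul_X_mem_span_pair [Infinite F]
    (hloc : ∀ a, a ∈ Submodule.span F {A *ᵥ a, B *ᵥ a})
    (hAB : ∃ i j, A.toMvPolynomial i * B.toMvPolynomial j ≠
      A.toMvPolynomial j * B.toMvPolynomial i) :
    ∃ d : MvPolynomial σ F, d ≠ 0 ∧
      d • X ∈ Submodule.span (MvPolynomial σ F) {A.toMvPolynomial, B.toMvPolynomial} := by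
  obtain ⟨i, j, hij⟩ := hAB
  refine ⟨_, sub_ne_zero.2 hij, Submodule.mem_span_pair.2
    ⟨X i * B.toMvPolynomial j - X j * B.toMvPolynomial i,
      A.toMvPolynomial i * X j - A.toMvPolynomial j * X i, funext fun k => ?_⟩⟩
  apply MvPolynomial.funext
  intro a
  obtain ⟨α, β, h⟩ := Submodule.mem_span_pair.1 (hloc a)
  have ha : ∀ k, a k = α * (A *ᵥ a) k + β * (B *ᵥ a) k := fun k => (congrFun h k).symm
  simp only [Pi.add_apply, Pi.smul_apply, smul_eq_mul, map_add, map_sub, map_mul, eval_X,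
    Matrix.toMvPolynomial_eval_eq_apply]
  rw [ha i, ha j, ha k]
  ring

variable [DecidableEq σ]

-- Outside the span of `u` and `v` and the kernel of `f`, the relation
-- `a = (α * l + β * m) • a + (f ⬝ᵥ a) • (α • u + β • v)` determines `α * l + β * m = 1`.
lemma one_mem_span_pair_of_eq_smul_one_add_vecMulVec (hσ : 2 < Fintype.card σ)
    (hloc : ∀ a, a ∈ Submodule.span F {A *ᵥ a, B *ᵥ a}) {l m : F} {u v f : σ → F}
    (hA : A - l • 1 = Matrix.vecMulVec u f) (hB : B - m • 1 = Matrix.vecMulVec v f) :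
    1 ∈ Submodule.span F {A, B} := by
  obtain ⟨a, ha, hfa⟩ := exists_notMem_span_pair_and_dotProduct_ne_zero hσ u v f
  obtain ⟨α, β, hαβ⟩ := Submodule.mem_span_pair.1 (hloc a)
  rw [sub_eq_iff_eq_add'] at hA hB
  have hrel : (1 - (α * l + β * m)) • a = (f ⬝ᵥ a) • (α • u + β • v) := by
    nth_rw 1 [sub_smul, one_smul, ← hαβ, hA, hB]
    simp only [Matrix.add_mulVec, Matrix.smul_mulVec, Matrix.one_mulVec, Matrix.vecMulVec_mulVec,
      op_smul_eq_smul]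
    module
  have hlm : 1 - (α * l + β * m) = 0 := by
    by_contra hne
    refine ha ((Submodule.smul_mem_iff _ hne).1 ?_)
    rw [hrel]
    exact Submodule.smul_mem _ _ (Submodule.mem_span_pair.2 ⟨α, β, rfl⟩)
  have huv : Matrix.vecMulVec (α • u + β • v) f = 0 := by
    rw [hlm, zero_smul, eq_comm, smul_eq_zero] at hrel
    rcases hrel with h | h
    · rw [hfa h, Matrix.vecMulVec_zero]
    · rw [h, Matrix.zero_vecMulVec]
  refine Submodule.mem_span_pair.2 ⟨α, β, ?_⟩
  calc α • A + β • B
      = (α * l + β * m) • 1 + Matrix.vecMulVec (α • u + β • v) f := by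
        rw [hA, hB, Matrix.add_vecMulVec, Matrix.smul_vecMulVec, Matrix.smul_vecMulVec]
        module
    _ = 1 := by rw [huv, ← sub_eq_zero.1 hlm, one_smul, add_zero]

variable [IsAlgClosed F]

-- For `p = 0` and `R = 1` this covers matrices that have every vector as an eigenvector.
lemma one_mem_span_pair_of_not_linearIndependent (hσ : 2 < Fintype.card σ)
    (hloc : ∀ a, a ∈ Submodule.span F {A *ᵥ a, B *ᵥ a}) {p R : MvPolynomial σ F}
    (hp : (Ideal.span {p}).IsPrime) (hR : ¬ p ∣ R)
    (h : ∀ a, eval a p = 0 → eval a R ≠ 0 → ¬ LinearIndependent F ![A *ᵥ a, B *ᵥ a]) :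
    1 ∈ Submodule.span F {A, B} := by
  have heigen : ∀ a ∈ zeroLocus F (Ideal.span {p}), eval a R ≠ 0 →
      Submodule.span F {A *ᵥ a, B *ᵥ a} ≤ Submodule.span F {a} := by
    intro a ha hRa
    rcases eq_or_ne a 0 with rfl | ha0
    · simp
    · exact span_pair_le_span_singleton ha0 (hloc a)
        (h a (ha p (Ideal.mem_span_singleton_self p)) hRa)
  have hRp : R ∉ Ideal.span {p} := mt Ideal.mem_span_singleton.1 hR
  have hunit : ¬ IsUnit p := mt Ideal.span_singleton_eq_top.2 hp.ne_top
  obtain ⟨l, hl⟩ := exists_forall_toMvPolynomial_sub_smul_one_mem hRp fun a ha hRa =>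
    heigen a ha hRa (Submodule.mem_span_of_mem (Set.mem_insert (A *ᵥ a) {B *ᵥ a}))
  obtain ⟨m, hm⟩ := exists_forall_toMvPolynomial_sub_smul_one_mem hRp fun a ha hRa =>
    heigen a ha hRa (Submodule.mem_span_of_mem (Set.mem_insert_of_mem (A *ᵥ a) rfl))
  obtain ⟨u, hu⟩ := exists_eq_vecMulVec_of_dvd_toMvPolynomial hunit fun i =>
    Ideal.mem_span_singleton.1 (hl i)
  obtain ⟨v, hv⟩ := exists_eq_vecMulVec_of_dvd_toMvPolynomial hunit fun i =>
    Ideal.mem_span_singleton.1 (hm i)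
  exact one_mem_span_pair_of_eq_smul_one_add_vecMulVec hσ hloc hu hv

lemma one_mem_span_pair_of_prime_dvd (hσ : 2 < Fintype.card σ)
    (hloc : ∀ a, a ∈ Submodule.span F {A *ᵥ a, B *ᵥ a}) {e s t p : MvPolynomial σ F}
    (hrel : e • X = s • A.toMvPolynomial + t • B.toMvPolynomial) (hp : Prime p) (hpe : p ∣ e)
    (hst : ¬ p ∣ s ∨ ¬ p ∣ t) : 1 ∈ Submodule.span F {A, B} := by
  have hspan : (Ideal.span {p}).IsPrime := (Ideal.span_singleton_prime hp.ne_zero).2 hp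
  have hdep : ∀ a, eval a p = 0 → eval a s • A *ᵥ a + eval a t • B *ᵥ a = 0 := by
    intro a ha
    have hea : eval a e = 0 := zero_dvd_iff.1 (ha ▸ map_dvd (eval a) hpe)
    ext i
    have hi := congrArg (eval a) (congrFun hrel i)
    simpa [hea, Matrix.toMvPolynomial_eval_eq_apply] using hi.symm
  rcases hst with hs | ht
  · exact one_mem_span_pair_of_not_linearIndependent hσ hloc hspan hs fun a ha hsa hli =>
      hsa (LinearIndependent.pair_iff.1 hli _ _ (hdep a ha)).1
  · exact one_mem_span_pair_of_not_linearIndependent hσ hloc hspan ht fun a ha hta hli =>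
      hta (LinearIndependent.pair_iff.1 hli _ _ (hdep a ha)).2

theorem one_mem_span_pair_of_forall_mem_span_pair (hσ : 2 < Fintype.card σ)
    (hloc : ∀ a, a ∈ Submodule.span F {A *ᵥ a, B *ᵥ a}) : 1 ∈ Submodule.span F {A, B} := by
  by_cases hAB : ∀ i j, A.toMvPolynomial i * B.toMvPolynomial j =
      A.toMvPolynomial j * B.toMvPolynomial i
  · refine one_mem_span_pair_of_not_linearIndependent (p := 0) (R := 1) hσ hloc ?_ (by simp) ?_
    · rw [Ideal.span_singleton_zero]
      exact Ideal.isPrime_bot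
    · refine fun a _ _ => not_linearIndependent_pair_of_forall_mul_eq_mul fun i j => ?_
      simpa [Matrix.toMvPolynomial_eval_eq_apply] using congrArg (eval a) (hAB i j)
  · push Not at hAB
    obtain ⟨_, hd, hdX⟩ := exists_smul_X_mem_span_pair hloc hAB
    obtain ⟨e, he, s, t, hrel, hprim⟩ := exists_isRelPrime_smul_eq hd hdX
    by_cases hunit : IsUnit e
    · rw [← Matrix.toMvPolynomial_one] at hrel
      refine (Submodule.smul_mem_iff _ (hunit.map constantCoeff).ne_zero).1 ?_
      exact Submodule.mem_span_pair.2
        ⟨_, _, (constantCoeff_smul_eq_of_smul_toMvPolynomial_eq hrel).symm⟩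
    · obtain ⟨p, hp, hpe⟩ := WfDvdMonoid.exists_irreducible_factor hunit he
      refine one_mem_span_pair_of_prime_dvd hσ hloc hrel hp.prime hpe ?_
      by_contra! hpst
      exact hp.not_isUnit (hprim p hpe hpst.1 hpst.2)

end Matrices

end LocalMembership

open LocalMembership in
theorem stmt_6_general {F σ : Type*} [Field F] [IsAlgClosed F] [Fintype σ]
    (hσ : 2 < Fintype.card σ) (V : Submodule F (σ → MvPolynomial σ F))
    (hS1 : ∀ q ∈ V, ∀ i, q i ∈ Submodule.span F (Set.range (X : σ → MvPolynomial σ F)))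
    (hdim : Module.finrank F V ≤ 2)
    (hloc : ∀ a : σ → F, a ∈ Submodule.span F
      ((fun q : σ → MvPolynomial σ F => fun i => eval a (q i)) ''
        (V : Set (σ → MvPolynomial σ F)))) :
    (fun i => X i : σ → MvPolynomial σ F) ∈ V := by
  classical
  have hV : V ≤ LinearMap.range (linearForms F σ σ) := fun q hq =>
    mem_range_linearForms (hS1 q hq)
  have : FiniteDimensional F V := Submodule.finiteDimensional_of_le hV
  obtain ⟨g, hg⟩ := exists_span_range_eq_of_finrank_le hdim
  choose M hM using fun i => hV (hg ▸ Submodule.subset_span (Set.mem_range_self i))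
  have hspan : V = Submodule.span F {(M 0).toMvPolynomial, (M 1).toMvPolynomial} := by
    rw [← hg, ← funext hM]
    congr 1
    ext
    simp [Fin.exists_fin_two, eq_comm]
  have hone : 1 ∈ Submodule.span F {M 0, M 1} :=
    one_mem_span_pair_of_forall_mem_span_pair hσ fun a => by
      rw [← span_eval_image_span_toMvPolynomial_pair, ← hspan]
      exact hloc a
  have hX := Submodule.mem_map_of_mem (f := linearForms F σ σ) hone
  simp only [Submodule.map_span, Set.image_pair, linearForms_apply, Matrix.toMvPolynomial_one] at hX
  exact hspan ▸ hX

theorem stmt_6 (F : Type*) [Field F] [IsAlgClosed F] (n : ℕ) (hn : 3 ≤ n)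
    (hchar : ringChar F = 0 ∨ n < ringChar F)
    (V : Submodule F (Fin n → MvPolynomial (Fin n) F))
    (hS1 : ∀ q ∈ V, ∀ i : Fin n, q i ∈ Submodule.span F
      (Set.range (MvPolynomial.X : Fin n → MvPolynomial (Fin n) F)))
    (hdim : Module.finrank F V = 2)
    (hdimL : Module.finrank (FractionRing (MvPolynomial (Fin n) F))
      (Submodule.span (FractionRing (MvPolynomial (Fin n) F))
        ((fun w : Fin n → MvPolynomial (Fin n) F => fun i =>
          algebraMap (MvPolynomial (Fin n) F) (FractionRing (MvPolynomial (Fin n) F)) (w i)) ''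
            (V : Set (Fin n → MvPolynomial (Fin n) F)))) = 2)
    (hloc : ∀ a : Fin n → F, a ∈ Submodule.span F
      ((fun q : Fin n → MvPolynomial (Fin n) F => fun i => MvPolynomial.eval a (q i)) ''
        (V : Set (Fin n → MvPolynomial (Fin n) F)))) :
    (fun i : Fin n => (MvPolynomial.X i : MvPolynomial (Fin n) F)) ∈ V :=
  stmt_6_general (by rwa [Fintype.card_fin]) V hS1 hdim.le hloc
end

section
/- Let n ≥ 4 and let d satisfy 3 ≤ d < n. Set q_1 = ỹ − y_1·e_{n−1}, q_2 = y_1·e_{n−1} − y_2·e_n, q_3 = y_1·e_n in (S_1)^n, and let q_4,…,q_d ∈ (S_1)^n be vectors whose components in positions n−2, n−1, and n are zero (i.e., each q_j for j ≥ 4 lies in the S_1-span of e_1,…,e_{n−3}) and whose images in L^n are L-linearly independent. Let V = Span_F(q_1,…,q_d). Then: (i) the images of q_1,…,q_d in L^n are L-linearly independent, so dim_L(V_L) = d; (ii) V has the ỹ-local membership property; and (iii) ỹ ∉ V. -/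
open MvPolynomial

/-!
Projecting to the coordinates `n - 2`, `n - 1`, `n` makes `q₁, q₂, q₃` triangular with pivots
`y_{n-2}, y_1, y_1`, while the remaining `q_j` project to zero; this gives linear independence.
At a point `a` with `a_1 = 0` the vector `q₁(a)` is already `a`, and otherwise
`a = q₁(a) + q₂(a) + (a_2 / a_1) q₃(a)`. That the last coefficient varies with `a` is what keeps `ỹ`
out of `V`: the functional `w ↦ w_{n-1}(1, …, 1) + w_n(0, 1, 0, …, 0)` kills every `q_j` but takes
the value `1` at `ỹ`. In the lemmas `k, l, p, r, s` stand for the indices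
`1, 2, n - 2, n - 1, n`, and `T` for the set of `j ≥ 4`.
-/

section LinearAlgebra

variable {R ι M N : Type*}

theorem notMem_span_of_map_ne_zero [Semiring R] [AddCommMonoid M] [AddCommMonoid N] [Module R M]
    [Module R N] (f : M →ₗ[R] N) {s : Set M} {x : M} (hs : ∀ y ∈ s, f y = 0) (hx : f x ≠ 0) :
    x ∉ Submodule.span R s := fun hmem =>
  hx ((Submodule.span_le.2 hs : Submodule.span R s ≤ LinearMap.ker f) hmem)

theorem linearIndepOn_insert_of_map_ne_zero [DivisionRing R] [AddCommGroup M] [AddCommMonoid N]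
    [Module R M] [Module R N] {v : ι → M} {s : Set ι} {i : ι} (hv : LinearIndepOn R v s)
    (f : M →ₗ[R] N) (hs : ∀ j ∈ s, f (v j) = 0) (hi : f (v i) ≠ 0) :
    LinearIndepOn R v (insert i s) :=
  hv.insert (notMem_span_of_map_ne_zero f (Set.forall_mem_image.2 hs) hi)

theorem span_image_span (A : Type*) [CommSemiring R] [Semiring A] [Algebra R A] [AddCommMonoid M]
    [AddCommMonoid N] [Module R M] [Module R N] [Module A N] [IsScalarTower R A N]
    (f : M →ₗ[R] N) (s : Set M) :
    Submodule.span A (f '' (Submodule.span R s : Set M)) = Submodule.span A (f '' s) := by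
  rw [← Submodule.map_coe, Submodule.map_span, Submodule.span_span_of_tower]

end LinearAlgebra

/-- The `ỹ`-local membership property of a space `V` of polynomial vectors: every point `a` is a
linear combination of the values at `a` of the members of `V`. -/
def HasLocalMembership {R σ : Type*} [CommSemiring R]
    (V : Submodule R (σ → MvPolynomial σ R)) : Prop :=
  ∀ a : σ → R, a ∈ Submodule.span R ((fun w i => eval a (w i)) '' (V : Set (σ → MvPolynomial σ R)))

section Construction

variable {σ ι : Type*} [DecidableEq σ] {j₁ j₂ j₃ : ι} {T : Set ι} {k l p r s : σ}

theorem linearIndependent_of_head_of_tail {A L : Type*} [CommRing A] [Field L] [Algebra A L]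
    [FaithfulSMul A L] {y : σ → A} (hyk : y k ≠ 0) (hyp : y p ≠ 0)
    (hpr : p ≠ r) (hps : p ≠ s) (hrs : r ≠ s) {q : ι → σ → A}
    (hq₁ : q j₁ = y - y k • Pi.single r 1)
    (hq₂ : q j₂ = y k • Pi.single r 1 - y l • Pi.single s 1)
    (hq₃ : q j₃ = y k • Pi.single s 1)
    (hT : ∀ j ∉ T, j = j₁ ∨ j = j₂ ∨ j = j₃)
    (hp : ∀ j ∈ T, q j p = 0) (hr : ∀ j ∈ T, q j r = 0) (hs : ∀ j ∈ T, q j s = 0)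
    (htail : LinearIndepOn L (fun j i => algebraMap A L (q j i)) T) :
    LinearIndependent L (fun j i => algebraMap A L (q j i)) := by
  have insert_pivot {U : Set ι} {j : ι} (i : σ)
      (hU : LinearIndepOn L (fun j i => algebraMap A L (q j i)) U)
      (hzero : ∀ j ∈ U, q j i = 0) (hpivot : q j i ≠ 0) :
      LinearIndepOn L (fun j i => algebraMap A L (q j i)) (insert j U) :=
    linearIndepOn_insert_of_map_ne_zero hU (LinearMap.proj i)
      (fun j hj => by simp [hzero j hj]) (by simpa using hpivot)
  have h₃ := insert_pivot (j := j₃) s htail hs (by simpa [hq₃] using hyk)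
  have h₂ := insert_pivot (j := j₂) r h₃
    (Set.forall_mem_insert.2 ⟨by simp [hq₃, hrs], hr⟩) (by simpa [hq₂, hrs] using hyk)
  have h₁ := insert_pivot (j := j₁) p h₂
    (Set.forall_mem_insert.2 ⟨by simp [hq₂, hpr, hps],
      Set.forall_mem_insert.2 ⟨by simp [hq₃, hps], hp⟩⟩) (by simpa [hq₁, hpr] using hyp)
  have cover : insert j₁ (insert j₂ (insert j₃ T)) = Set.univ :=
    Set.eq_univ_of_forall fun j => by
      by_cases hj : j ∈ T
      · simp [hj]
      · simpa [hj] using hT j hj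
  rwa [cover, linearIndepOn_univ_iff] at h₁

theorem hasLocalMembership_of_head_mem {F : Type*} [Field F]
    {V : Submodule F (σ → MvPolynomial σ F)}
    (h₁ : X - (X k : MvPolynomial σ F) • Pi.single r 1 ∈ V)
    (h₂ : (X k : MvPolynomial σ F) • Pi.single r 1 - (X l : MvPolynomial σ F) • Pi.single s 1 ∈ V)
    (h₃ : (X k : MvPolynomial σ F) • Pi.single s 1 ∈ V) : HasLocalMembership V := by
  intro a
  have value_mem {w : σ → MvPolynomial σ F} (hw : w ∈ V) : (fun i => eval a (w i)) ∈
      Submodule.span F ((fun w i => eval a (w i)) '' (V : Set (σ → MvPolynomial σ F))) :=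
    Submodule.subset_span (Set.mem_image_of_mem _ hw)
  by_cases hak : a k = 0
  · convert value_mem h₁ using 1
    ext i
    simp [hak]
  · convert add_mem (add_mem (value_mem h₁) (value_mem h₂))
      (Submodule.smul_mem _ (a l / a k) (value_mem h₃)) using 1
    ext i
    simp only [Pi.add_apply, Pi.sub_apply, Pi.smul_apply, smul_eq_mul, map_sub, map_mul, eval_X]
    field_simp
    ring

theorem X_notMem_span_of_head_of_tail {R : Type*} [CommRing R] [Nontrivial R]
    (hkl : k ≠ l) (hrs : r ≠ s) (hls : l ≠ s) {q : ι → σ → MvPolynomial σ R}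
    (hq₁ : q j₁ = X - (X k : MvPolynomial σ R) • Pi.single r 1)
    (hq₂ : q j₂ = (X k : MvPolynomial σ R) • Pi.single r 1 -
      (X l : MvPolynomial σ R) • Pi.single s 1)
    (hq₃ : q j₃ = (X k : MvPolynomial σ R) • Pi.single s 1)
    (hT : ∀ j ∉ T, j = j₁ ∨ j = j₂ ∨ j = j₃)
    (hr : ∀ j ∈ T, q j r = 0) (hs : ∀ j ∈ T, q j s = 0) :
    X ∉ Submodule.span R (Set.range q) := by
  let f : (σ → MvPolynomial σ R) →ₗ[R] R :=
    (aeval 1).toLinearMap ∘ₗ LinearMap.proj r +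
      (aeval (Pi.single l 1)).toLinearMap ∘ₗ LinearMap.proj s
  have f_apply (w) : f w = aeval 1 (w r) + aeval (Pi.single l 1) (w s) := rfl
  refine notMem_span_of_map_ne_zero f (Set.forall_mem_range.2 fun j => ?_) ?_
  · by_cases hj : j ∈ T
    · simp [f_apply, hr j hj, hs j hj]
    · rcases hT j hj with rfl | rfl | rfl
      · simp [f_apply, hq₁, hrs.symm, hls.symm]
      · simp [f_apply, hq₂, hrs, hrs.symm]
      · simp [f_apply, hq₃, hrs, hkl]
  · simp [f_apply, hls.symm]

theorem stmt_8_general {F : Type*} [Field F] [Fintype ι]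
    (hkl : k ≠ l) (hls : l ≠ s) (hpr : p ≠ r) (hps : p ≠ s) (hrs : r ≠ s)
    {q : ι → σ → MvPolynomial σ F}
    (hq₁ : q j₁ = X - (X k : MvPolynomial σ F) • Pi.single r 1)
    (hq₂ : q j₂ = (X k : MvPolynomial σ F) • Pi.single r 1 -
      (X l : MvPolynomial σ F) • Pi.single s 1)
    (hq₃ : q j₃ = (X k : MvPolynomial σ F) • Pi.single s 1)
    (hT : ∀ j ∉ T, j = j₁ ∨ j = j₂ ∨ j = j₃)
    (hp : ∀ j ∈ T, q j p = 0) (hr : ∀ j ∈ T, q j r = 0) (hs : ∀ j ∈ T, q j s = 0)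
    (htail : LinearIndepOn (FractionRing (MvPolynomial σ F))
      (fun j i => algebraMap _ (FractionRing (MvPolynomial σ F)) (q j i)) T) :
    LinearIndependent (FractionRing (MvPolynomial σ F))
      (fun j i => algebraMap _ (FractionRing (MvPolynomial σ F)) (q j i)) ∧
    Module.finrank (FractionRing (MvPolynomial σ F))
      (Submodule.span (FractionRing (MvPolynomial σ F))
        ((fun w i => algebraMap _ (FractionRing (MvPolynomial σ F)) (w i)) ''
          (Submodule.span F (Set.range q) : Set (σ → MvPolynomial σ F)))) = Fintype.card ι ∧
    HasLocalMembership (Submodule.span F (Set.range q)) ∧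
    X ∉ Submodule.span F (Set.range q) := by
  have mem_span (j : ι) : q j ∈ Submodule.span F (Set.range q) :=
    Submodule.subset_span (Set.mem_range_self j)
  have hindep := linearIndependent_of_head_of_tail (X_ne_zero k) (X_ne_zero p) hpr hps hrs
    hq₁ hq₂ hq₃ hT hp hr hs htail
  refine ⟨hindep, ?_, hasLocalMembership_of_head_mem (hq₁ ▸ mem_span j₁) (hq₂ ▸ mem_span j₂)
    (hq₃ ▸ mem_span j₃), X_notMem_span_of_head_of_tail hkl hrs hls hq₁ hq₂ hq₃ hT hr hs⟩
  have hspan := span_image_span (FractionRing (MvPolynomial σ F))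
    ((IsScalarTower.toAlgHom F (MvPolynomial σ F)
      (FractionRing (MvPolynomial σ F))).toLinearMap.compLeft σ) (Set.range q)
  rw [← Set.range_comp] at hspan
  exact (congrArg (fun W : Submodule _ _ => Module.finrank _ W) hspan).trans
    (finrank_span_eq_card hindep)

end Construction

theorem stmt_8 (F : Type*) [Field F] [IsAlgClosed F] (n : ℕ) (hn : 4 ≤ n)
    (d : ℕ) (hd3 : 3 ≤ d) (hdn : d < n)
    (q : Fin d → (Fin n → MvPolynomial (Fin n) F))
    (hq1 : q ⟨0, by omega⟩ =
      (fun i : Fin n => (MvPolynomial.X i : MvPolynomial (Fin n) F)) -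
        (MvPolynomial.X ⟨0, by omega⟩ : MvPolynomial (Fin n) F) •
          (Pi.single (⟨n - 2, by omega⟩ : Fin n) 1 : Fin n → MvPolynomial (Fin n) F))
    (hq2 : q ⟨1, by omega⟩ =
      (MvPolynomial.X ⟨0, by omega⟩ : MvPolynomial (Fin n) F) •
          (Pi.single (⟨n - 2, by omega⟩ : Fin n) 1 : Fin n → MvPolynomial (Fin n) F) -
        (MvPolynomial.X ⟨1, by omega⟩ : MvPolynomial (Fin n) F) •
          (Pi.single (⟨n - 1, by omega⟩ : Fin n) 1 : Fin n → MvPolynomial (Fin n) F))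
    (hq3 : q ⟨2, by omega⟩ =
      (MvPolynomial.X ⟨0, by omega⟩ : MvPolynomial (Fin n) F) •
        (Pi.single (⟨n - 1, by omega⟩ : Fin n) 1 : Fin n → MvPolynomial (Fin n) F))
    (hS1 : ∀ j : Fin d, 3 ≤ (j : ℕ) → ∀ i : Fin n, q j i ∈ Submodule.span F
      (Set.range (MvPolynomial.X : Fin n → MvPolynomial (Fin n) F)))
    (hzero : ∀ j : Fin d, 3 ≤ (j : ℕ) → ∀ i : Fin n, n - 3 ≤ (i : ℕ) → q j i = 0)
    (hindtail : LinearIndependent (FractionRing (MvPolynomial (Fin n) F))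
      (fun j : {j : Fin d // 3 ≤ (j : ℕ)} => fun i : Fin n =>
        algebraMap (MvPolynomial (Fin n) F) (FractionRing (MvPolynomial (Fin n) F)) (q j.1 i))) :
    (LinearIndependent (FractionRing (MvPolynomial (Fin n) F))
      (fun j : Fin d => fun i : Fin n =>
        algebraMap (MvPolynomial (Fin n) F) (FractionRing (MvPolynomial (Fin n) F)) (q j i))) ∧
    (Module.finrank (FractionRing (MvPolynomial (Fin n) F))
      (Submodule.span (FractionRing (MvPolynomial (Fin n) F))
        ((fun w : Fin n → MvPolynomial (Fin n) F => fun i =>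
          algebraMap (MvPolynomial (Fin n) F) (FractionRing (MvPolynomial (Fin n) F)) (w i)) ''
            ((Submodule.span F (Set.range q) : Submodule F (Fin n → MvPolynomial (Fin n) F)) :
              Set (Fin n → MvPolynomial (Fin n) F)))) = d) ∧
    (∀ a : Fin n → F, a ∈ Submodule.span F
      ((fun w : Fin n → MvPolynomial (Fin n) F => fun i => MvPolynomial.eval a (w i)) ''
        ((Submodule.span F (Set.range q) : Submodule F (Fin n → MvPolynomial (Fin n) F)) :
          Set (Fin n → MvPolynomial (Fin n) F)))) ∧
    (fun i : Fin n => (MvPolynomial.X i : MvPolynomial (Fin n) F)) ∉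
      Submodule.span F (Set.range q) := by
  have ⟨hindep, hrank, hlocal, hy⟩ := stmt_8_general (F := F) (T := {j : Fin d | 3 ≤ (j : ℕ)})
    (j₁ := ⟨0, by omega⟩) (j₂ := ⟨1, by omega⟩) (j₃ := ⟨2, by omega⟩)
    (k := ⟨0, by omega⟩) (l := ⟨1, by omega⟩)
    (p := ⟨n - 3, by omega⟩) (r := ⟨n - 2, by omega⟩) (s := ⟨n - 1, by omega⟩)
    (by grind) (by grind) (by grind) (by grind) (by grind)
    hq1 hq2 hq3 (by grind) (by grind) (by grind) (by grind) hindtail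
  exact ⟨hindep, hrank.trans (Fintype.card_fin d), hlocal, hy⟩
end

section
/- Let q_1,…,q_{n−1} ∈ (S_1)^n have L-linearly independent images in L^n. Let C ∈ M_n(S) be the matrix whose first n−1 columns are q_1,…,q_{n−1} and whose last column is ỹ, and write C = y_1·A_1 + y_2·A_2 + ⋯ + y_n·A_n with A_1,…,A_n ∈ M_n(F) (each entry of C is a linear form, and A_j records the coefficients of y_j). Then ỹ lies in the F-span of q_1,…,q_{n−1} in S^n if and only if there exists a maximal left ideal I of M_n(F) (i.e., a left submodule of M_n(F), viewed as a left module over itself, that is maximal among proper left submodules) such that A_j ∈ I for all j = 1,…,n. -/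
open MvPolynomial

/-!
A proper left ideal of a matrix ring over a semisimple ring is generated by an idempotent `e ≠ 1`,
so every element of it kills a nonzero column of `1 - e`; conversely, the annihilator of a nonzero
vector is proper, hence contained in a maximal left ideal. So the matrices `A t` lie in a
common maximal left ideal exactly when they have a common nonzero kernel vector `v`. Comparing
coefficients of the variables, this says that the columns of `∑ t, y_t • A t` satisfy the linear
relation with coefficient vector `v` over the base field. If all columns but the last are
independent, such a relation exists exactly when the last column is in the span of the others.
-/

section LeftIdeal

variable {n R : Type*} [Fintype n] [DecidableEq n] [Ring R]

theorem exists_mulVec_eq_zero_of_ideal_ne_top [IsSemisimpleRing R] {I : Ideal (Matrix n n R)}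
    (hI : I ≠ ⊤) : ∃ v : n → R, v ≠ 0 ∧ ∀ M ∈ I, M.mulVec v = 0 := by
  obtain ⟨e, he, rfl⟩ := IsSemisimpleRing.ideal_eq_span_idempotent I
  have he_ne_one : e ≠ 1 := fun h ↦ hI (by rw [h, Ideal.span_singleton_one])
  obtain ⟨j, hj⟩ : ∃ j, (1 - e).col j ≠ 0 := by
    by_contra! h
    exact sub_ne_zero.2 he_ne_one.symm (Matrix.ext_col h)
  refine ⟨(1 - e).col j, hj, fun M hM ↦ ?_⟩
  obtain ⟨N, rfl⟩ := Ideal.mem_span_singleton'.1 hM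
  have annihilates : N * e * (1 - e) = 0 := by rw [mul_assoc, he.mul_one_sub_self, mul_zero]
  rw [← Matrix.mulVec_single_one, Matrix.mulVec_mulVec, annihilates, Matrix.zero_mulVec]

theorem ideal_span_ne_top_of_mulVec_eq_zero {S : Set (Matrix n n R)} {v : n → R} (hv : v ≠ 0)
    (hS : ∀ M ∈ S, M.mulVec v = 0) : Ideal.span S ≠ ⊤ := by
  intro h
  have kills : ∀ M ∈ Ideal.span S, M.mulVec v = 0 := fun M hM ↦ by
    induction hM using Submodule.span_induction with
    | mem M hM => exact hS M hM
    | zero => exact Matrix.zero_mulVec v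
    | add M N _ _ hM hN => rw [Matrix.add_mulVec, hM, hN, add_zero]
    | smul N M _ hM => rw [smul_eq_mul, ← Matrix.mulVec_mulVec, hM, Matrix.mulVec_zero]
  exact hv (by simpa using kills 1 (h ▸ Submodule.mem_top))

theorem exists_isCoatom_forall_mem_iff_exists_mulVec_eq_zero [IsSemisimpleRing R] {τ : Type*}
    (A : τ → Matrix n n R) :
    (∃ I : Submodule (Matrix n n R) (Matrix n n R), IsCoatom I ∧ ∀ t, A t ∈ I) ↔
      ∃ v : n → R, v ≠ 0 ∧ ∀ t, (A t).mulVec v = 0 := by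
  constructor
  · rintro ⟨I, hI, hA⟩
    obtain ⟨v, hv, hIv⟩ := exists_mulVec_eq_zero_of_ideal_ne_top hI.ne_top
    exact ⟨v, hv, fun t ↦ hIv _ (hA t)⟩
  · rintro ⟨v, hv, hAv⟩
    obtain ⟨I, hI, hle⟩ := Ideal.exists_le_maximal _
      (ideal_span_ne_top_of_mulVec_eq_zero hv (Set.forall_mem_range.2 hAv))
    exact ⟨I, hI.out, fun t ↦ hle (Ideal.subset_span ⟨t, rfl⟩)⟩

end LeftIdeal

section LinearForms

variable {R P τ m n : Type*} [CommRing R] [AddCommGroup P] [Module R P] [Fintype τ] [Fintype n]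
  {x : τ → P} {c : n → m → P} {A : τ → Matrix m n R}

theorem sum_smul_eq_zero_iff_forall_mulVec_eq_zero (hx : LinearIndependent R x)
    (hA : ∀ i j, c j i = ∑ t, A t i j • x t) (v : n → R) :
    ∑ j, v j • c j = 0 ↔ ∀ t, (A t).mulVec v = 0 := by
  have sum_smul_apply (i : m) : (∑ j, v j • c j) i = ∑ t, (A t).mulVec v i • x t := by
    simp only [Finset.sum_apply, Pi.smul_apply, hA, Finset.smul_sum, smul_smul, Matrix.mulVec,
      dotProduct, Finset.sum_smul, mul_comm (v _)]
    exact Finset.sum_comm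
  have coeff_eq_zero (i : m) : (∑ j, v j • c j) i = 0 ↔ ∀ t, (A t).mulVec v i = 0 := by
    rw [sum_smul_apply]
    exact ⟨Fintype.linearIndependent_iff.1 hx _, fun h ↦ by simp [h]⟩
  simp only [funext_iff, Pi.zero_apply, coeff_eq_zero]
  exact forall_comm

theorem not_linearIndependent_iff_exists_mulVec_eq_zero (hx : LinearIndependent R x)
    (hA : ∀ i j, c j i = ∑ t, A t i j • x t) :
    ¬ LinearIndependent R c ↔ ∃ v : n → R, v ≠ 0 ∧ ∀ t, (A t).mulVec v = 0 := by
  simp only [Fintype.not_linearIndependent_iff, sum_smul_eq_zero_iff_forall_mulVec_eq_zero hx hA,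
    Function.ne_iff, Pi.zero_apply, and_comm]

end LinearForms

theorem linearIndependent_of_algebraMap {F S L ι κ : Type*} [CommSemiring F] [CommSemiring S]
    [Semiring L] [Algebra F S] [Algebra S L] [Algebra F L] [IsScalarTower F S L] [FaithfulSMul F L]
    {q : ι → κ → S} (hq : LinearIndependent L fun j i ↦ algebraMap S L (q j i)) :
    LinearIndependent F q :=
  .of_comp ((Algebra.linearMap S L).restrictScalars F |>.compLeft κ) (hq.restrict_scalars' F)

theorem snoc_apply_eq_dite {m : ℕ} {κ P : Type*} (q : Fin m → κ → P) (y : κ → P)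
    (j : Fin (m + 1)) (i : κ) :
    Fin.snoc (α := fun _ ↦ κ → P) q y j i = if hj : (j : ℕ) < m then q ⟨j, hj⟩ i else y i :=
  dite_apply ..

theorem stmt_9_general {F P τ : Type*} [Field F] [AddCommGroup P] [Module F P] [Fintype τ]
    {x : τ → P} (hx : LinearIndependent F x) {m : ℕ} {q : Fin m → Fin (m + 1) → P}
    (hq : LinearIndependent F q) (y : Fin (m + 1) → P)
    (A : τ → Matrix (Fin (m + 1)) (Fin (m + 1)) F)
    (hA : ∀ i j, Fin.snoc (α := fun _ ↦ Fin (m + 1) → P) q y j i = ∑ t, A t i j • x t) :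
    (∃ α : Fin m → F, y = ∑ j, α j • q j) ↔
      ∃ I : Submodule (Matrix (Fin (m + 1)) (Fin (m + 1)) F) (Matrix (Fin (m + 1)) (Fin (m + 1)) F),
        IsCoatom I ∧ ∀ t, A t ∈ I := by
  rw [exists_isCoatom_forall_mem_iff_exists_mulVec_eq_zero,
    ← not_linearIndependent_iff_exists_mulVec_eq_zero hx hA, linearIndependent_finSnoc]
  simp only [hq, true_and, not_not, Submodule.mem_span_range_iff_exists_fun, eq_comm]

theorem stmt_9 (F : Type*) [Field F] [IsAlgClosed F] (n : ℕ) (hn : 3 ≤ n)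
    (q : Fin (n - 1) → (Fin n → MvPolynomial (Fin n) F))
    (hS1 : ∀ j : Fin (n - 1), ∀ i : Fin n, q j i ∈ Submodule.span F
      (Set.range (MvPolynomial.X : Fin n → MvPolynomial (Fin n) F)))
    (hind : LinearIndependent (FractionRing (MvPolynomial (Fin n) F))
      (fun j : Fin (n - 1) => fun i : Fin n =>
        algebraMap (MvPolynomial (Fin n) F) (FractionRing (MvPolynomial (Fin n) F)) (q j i)))
    (C : Matrix (Fin n) (Fin n) (MvPolynomial (Fin n) F))
    (hC : C = Matrix.of fun i j : Fin n =>
      if hj : (j : ℕ) < n - 1 then q ⟨j, hj⟩ i else MvPolynomial.X i)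
    (A : Fin n → Matrix (Fin n) (Fin n) F)
    (hA : ∀ i j : Fin n, C i j =
      ∑ t : Fin n, MvPolynomial.C (A t i j) * MvPolynomial.X t) :
    (∃ α : Fin (n - 1) → F,
      (fun i : Fin n => (MvPolynomial.X i : MvPolynomial (Fin n) F)) =
        ∑ j : Fin (n - 1), α j • q j) ↔
    (∃ I : Submodule (Matrix (Fin n) (Fin n) F) (Matrix (Fin n) (Fin n) F),
      IsCoatom I ∧ ∀ t : Fin n, A t ∈ I) := by
  obtain ⟨m, rfl⟩ : ∃ m, n = m + 1 := ⟨n - 1, by omega⟩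
  have hq : LinearIndependent F q := linearIndependent_of_algebraMap hind
  exact stmt_9_general (linearIndependent_X _ _) hq X A fun i j ↦ by
    simpa only [snoc_apply_eq_dite, hC, Matrix.of_apply, smul_eq_C_mul] using hA i j
end

section
/- Let q_1,…,q_{n−1} ∈ (S_1)^n have L-linearly independent images in L^n, and assume the image of ỹ in L^n lies in the L-span of the images of q_1,…,q_{n−1}. Let C ∈ M_n(S) be the matrix whose first n−1 columns are q_1,…,q_{n−1} and whose last column is ỹ, and write C = y_1·A_1 + ⋯ + y_n·A_n with A_1,…,A_n ∈ M_n(F). Then det(C) = 0 in S, and det(A_j) = 0 in F for every j = 1,…,n; moreover, for every j the last column of A_j is the standard basis vector e_j of F^n. -/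
open MvPolynomial

/-!
Replacing the last column of `C` by a vector `v` and taking the determinant is linear in `v` and
kills the other columns of `C`, hence their span; over `L` that span contains `ỹ`, so `det C = 0`.
Evaluation at the standard basis vector `e_t` is a ring homomorphism `S → F` that sends a linear
form to its `t`-th coefficient, hence `C` to `A_t`. It therefore carries `det C = 0` to
`det A_t = 0` and the column `ỹ` of `C` to the column `e_t` of `A_t`.
-/

section Determinant

variable {ι R : Type*} [Fintype ι] [DecidableEq ι] [CommRing R]

theorem det_updateCol_eq_zero_of_mem_span (M : Matrix ι ι R) (j : ι) {v : ι → R}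
    (hv : v ∈ Submodule.span R (M.col '' {j}ᶜ)) : (M.updateCol j v).det = 0 := by
  have hspan : Submodule.span R (M.col '' {j}ᶜ) ≤ (LinearMap.proj j ∘ₗ M.cramer).ker := by
    rw [Submodule.span_le]
    rintro _ ⟨k, hkj : k ≠ j, rfl⟩
    change (M.updateCol j (M.col k)).det = 0
    exact Matrix.det_zero_of_column_eq hkj.symm fun i => by simp [hkj]
  exact hspan hv

theorem det_eq_zero_of_map_col_mem_span {K : Type*} [CommRing K] [Algebra R K] [FaithfulSMul R K]
    (M : Matrix ι ι R) (j : ι)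
    (hj : (M.map (algebraMap R K)).col j ∈
      Submodule.span K ((M.map (algebraMap R K)).col '' {j}ᶜ)) :
    M.det = 0 := by
  apply FaithfulSMul.algebraMap_injective R K
  rw [map_zero, RingHom.map_det, RingHom.mapMatrix_apply,
    ← Matrix.updateCol_eq_self (M.map (algebraMap R K)) j]
  exact det_updateCol_eq_zero_of_mem_span _ j hj

end Determinant

section LinearForms

variable {σ R : Type*} [Fintype σ] [DecidableEq σ] [CommSemiring R]

theorem eval_single_one_sum_C_mul_X (a : σ → R) (t : σ) :
    eval (Pi.single t 1) (∑ s, C (a s) * X s) = a t := by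
  simp [Pi.single_apply]

theorem map_eval_single_one_eq_coeff {m n : Type*} {M : Matrix m n (MvPolynomial σ R)}
    {A : σ → Matrix m n R} (hA : ∀ i j, M i j = ∑ t, C (A t i j) * X t) (t : σ) :
    M.map (eval (Pi.single t 1)) = A t := by
  ext i j
  rw [Matrix.map_apply, hA, eval_single_one_sum_C_mul_X]

end LinearForms

theorem stmt_10_general {F K : Type*} [CommRing F] {n : ℕ} (hn : 0 < n) [CommRing K]
    [Algebra (MvPolynomial (Fin n) F) K] [FaithfulSMul (MvPolynomial (Fin n) F) K]
    (q : Fin (n - 1) → Fin n → MvPolynomial (Fin n) F)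
    (hy : (fun i => algebraMap (MvPolynomial (Fin n) F) K (X i)) ∈
      Submodule.span K (Set.range fun j i => algebraMap (MvPolynomial (Fin n) F) K (q j i)))
    (M : Matrix (Fin n) (Fin n) (MvPolynomial (Fin n) F))
    (hM : M = Matrix.of fun i j : Fin n => if hj : (j : ℕ) < n - 1 then q ⟨j, hj⟩ i else X i)
    (A : Fin n → Matrix (Fin n) (Fin n) F)
    (hA : ∀ i j, M i j = ∑ t, C (A t i j) * X t) :
    M.det = 0 ∧ (∀ t, (A t).det = 0) ∧
      ∀ t i, A t i ⟨n - 1, by omega⟩ = if i = t then 1 else 0 := by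
  have hlast : ∀ i, M i ⟨n - 1, by omega⟩ = X i := by simp [hM]
  have hinit : ∀ i (j : Fin (n - 1)), M i ⟨j, by omega⟩ = q j i := by simp [hM]
  have hdet : M.det = 0 := by
    apply det_eq_zero_of_map_col_mem_span (K := K) M ⟨n - 1, by omega⟩
    convert Submodule.span_mono ?_ hy using 1
    · ext i
      simp [hlast]
    · rintro _ ⟨j, rfl⟩
      exact ⟨⟨j, by omega⟩, by simp [Fin.ext_iff, j.2.ne], by ext i; simp [hinit]⟩
  refine ⟨hdet, fun t => ?_, fun t i => ?_⟩
  · rw [← map_eval_single_one_eq_coeff hA t, ← RingHom.mapMatrix_apply, ← RingHom.map_det, hdet,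
      map_zero]
  · rw [← map_eval_single_one_eq_coeff hA t, Matrix.map_apply, hlast, eval_X, Pi.single_apply]

theorem stmt_10 (F : Type*) [Field F] [IsAlgClosed F] (n : ℕ) (hn : 3 ≤ n)
    (q : Fin (n - 1) → (Fin n → MvPolynomial (Fin n) F))
    (hS1 : ∀ j : Fin (n - 1), ∀ i : Fin n, q j i ∈ Submodule.span F
      (Set.range (MvPolynomial.X : Fin n → MvPolynomial (Fin n) F)))
    (hind : LinearIndependent (FractionRing (MvPolynomial (Fin n) F))
      (fun j : Fin (n - 1) => fun i : Fin n =>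
        algebraMap (MvPolynomial (Fin n) F) (FractionRing (MvPolynomial (Fin n) F)) (q j i)))
    (hy : (fun i : Fin n =>
        algebraMap (MvPolynomial (Fin n) F) (FractionRing (MvPolynomial (Fin n) F))
          (MvPolynomial.X i)) ∈
      Submodule.span (FractionRing (MvPolynomial (Fin n) F))
        (Set.range (fun j : Fin (n - 1) => fun i : Fin n =>
          algebraMap (MvPolynomial (Fin n) F) (FractionRing (MvPolynomial (Fin n) F)) (q j i))))
    (C : Matrix (Fin n) (Fin n) (MvPolynomial (Fin n) F))
    (hC : C = Matrix.of fun i j : Fin n =>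
      if hj : (j : ℕ) < n - 1 then q ⟨j, hj⟩ i else MvPolynomial.X i)
    (A : Fin n → Matrix (Fin n) (Fin n) F)
    (hA : ∀ i j : Fin n, C i j =
      ∑ t : Fin n, MvPolynomial.C (A t i j) * MvPolynomial.X t) :
    C.det = 0 ∧
    (∀ t : Fin n, (A t).det = 0) ∧
    (∀ t i : Fin n, A t i ⟨n - 1, by omega⟩ = if i = t then 1 else 0) :=
  stmt_10_general (by omega) q hy C hC A hA
end

section
/- Assume n ≥ 3 and that char(F) = 0 or char(F) > n. Let W ⊆ M_n(F) be an F-subspace of codimension 1 or codimension 2 (as a subspace of the n²-dimensional space M_n(F)) that contains no rank-1 idempotent. Then W is contained in the subspace of trace-zero matrices, i.e., Tr(a) = 0 for every a ∈ W. -/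
/-!
Under the trace form `(A, B) ↦ Tr (A * B)` the orthogonal complement `U` of `W` has dimension at
most two. If some vector `v` were not of the form `B v` with `B ∈ U`, a functional `w` with
`w v = 1` vanishing on `{B v | B ∈ U}` would give a rank-one idempotent `v ⊗ w` orthogonal to `U`,
that is, lying in `W`. Hence every vector `v` is `B v` for some `B ∈ U` depending on `v`, and it
remains to show that this forces `1 ∈ U`, for then `Tr a = Tr (a * 1) = 0` on `W`.

If `U` is at most a line this is the fact that locally proportional maps are proportional.
Otherwise, the field being algebraically closed, `U` contains some `c ≠ 0` killing a vector
`v₀ ≠ 0`, and `U` is spanned by `c` and some `1 + d` with `d v₀ = 0`. Comparing `v` with its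
translates `v + t v₀` shows that `d v` is a multiple of `c v` for all `v`, except possibly in
dimension at most two, so that `d` is a multiple of `c`.
-/

open Module Submodule

section LocalProportionality

variable {F V W : Type*} [Field F] [AddCommGroup V] [Module F V] [AddCommGroup W] [Module F W]

theorem exists_eq_smul_of_forall_apply_mem_span_singleton (c d : V →ₗ[F] W)
    (h : ∀ v, d v ∈ F ∙ c v) : ∃ l : F, d = l • c := by
  by_cases hc : c = 0
  · exact ⟨0, LinearMap.ext fun v => by simpa [hc] using h v⟩
  obtain ⟨u, hu⟩ : ∃ u, c u ≠ 0 := by simpa [LinearMap.ext_iff] using hc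
  obtain ⟨l, hl⟩ := mem_span_singleton.1 (h u)
  refine ⟨l, LinearMap.ext fun v => ?_⟩
  obtain ⟨a, ha⟩ := mem_span_singleton.1 (h v)
  obtain ⟨b, hb⟩ := mem_span_singleton.1 (h (v + u))
  rw [map_add, map_add] at hb
  have hcollinear : (a - b) • c v = (b - l) • c u := by
    linear_combination (norm := module) ha + hl - hb
  rw [LinearMap.smul_apply]
  by_cases hab : a = b
  · have hbl : b = l := by simpa [hab, hu, sub_eq_zero] using hcollinear.symm
    rw [← ha, hab, hbl]
  · have hker : c ((a - b) • v - (b - l) • u) = 0 := by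
      rw [map_sub, map_smul, map_smul, hcollinear, sub_self]
    have hker' : d ((a - b) • v - (b - l) • u) = 0 := by
      simpa [hker] using h ((a - b) • v - (b - l) • u)
    rw [map_sub, map_smul, map_smul] at hker'
    refine smul_right_injective W (sub_ne_zero.2 hab) ?_
    linear_combination (norm := module) hker' - (b - l) • hl - l • hcollinear

theorem apply_mem_span_singleton_of_apply_add_smul_mem {c d : V →ₗ[F] W} {u w : V} {t : F}
    (hindep : LinearIndependent F ![c u, c w]) (ht0 : t ≠ 0) (ht1 : t ≠ 1)
    (h0 : d w ∈ F ∙ c w) (h1 : d (w + u) ∈ F ∙ c (w + u))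
    (ht : d (w + t • u) ∈ F ∙ c (w + t • u)) : d u ∈ F ∙ c u := by
  rw [LinearIndependent.pair_iff] at hindep
  obtain ⟨a, ha⟩ := mem_span_singleton.1 h0
  obtain ⟨a₁, ha₁⟩ := mem_span_singleton.1 h1
  obtain ⟨aₜ, haₜ⟩ := mem_span_singleton.1 ht
  simp only [map_add, map_smul] at ha₁ haₜ
  obtain ⟨hcoeff_u, hcoeff_w⟩ := hindep (t * (a₁ - aₜ)) (t * (a₁ - a) - (aₜ - a)) <| by
    linear_combination (norm := module) t • ha₁ - haₜ + (1 - t) • ha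
  have haₜ_eq : a₁ = aₜ := by simpa [ht0, sub_eq_zero] using hcoeff_u
  have ha_eq : a₁ = a := by
    have : (t - 1) * (a₁ - a) = 0 := by linear_combination hcoeff_w - haₜ_eq
    simpa [sub_eq_zero, ht1] using this
  refine mem_span_singleton.2 ⟨a, ?_⟩
  linear_combination (norm := module) ha₁ - ha - ha_eq • (c w + c u)

end LocalProportionality

section PerturbedIdentity

variable {F V : Type*} [Field F] [AddCommGroup V] [Module F V] {c d : End F V} {u v₀ : V}

theorem mem_span_pair_of_mem_span_add {x y z : V} (h : x ∈ span F {x + y, z}) (hy : y ∉ F ∙ z) :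
    x ∈ span F {y, z} := by
  obtain ⟨a, b, hab⟩ := mem_span_pair.1 h
  have ha : 1 - a ≠ 0 := fun ha => hy <| mem_span_singleton.2
    ⟨-b, by linear_combination (norm := module) -hab - ha • (x + y)⟩
  rw [← (span F {y, z}).smul_mem_iff ha]
  exact mem_span_pair.2 ⟨a, b, by linear_combination (norm := module) hab⟩

variable (h : ∀ v, v ∈ span F {v + d v, c v}) (hcv₀ : c v₀ = 0) (hdv₀ : d v₀ = 0)
include h

theorem mem_span_apply_pair_of_notMem (hu : d u ∉ F ∙ c u) : u ∈ span F {d u, c u} :=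
  mem_span_pair_of_mem_span_add (h u) hu

include hcv₀ hdv₀

theorem mem_span_singleton_apply_of_notMem (hu : d u ∉ F ∙ c u) : v₀ ∈ F ∙ c u := by
  have htranslate (t : F) : u + t • v₀ ∈ span F {u + t • v₀ + d u, c u} := by
    simpa [hcv₀, hdv₀] using h (u + t • v₀)
  obtain ⟨p, q, hpq⟩ := mem_span_pair.1 (mem_span_apply_pair_of_notMem h hu)
  obtain ⟨r, s, hrs⟩ : ∃ r s : F, r • d u + s • c u = v₀ := by
    have hv₀ := mem_span_pair_of_mem_span_add (htranslate 1) hu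
    rw [one_smul] at hv₀
    simpa [mem_span_pair] using sub_mem hv₀ (mem_span_apply_pair_of_notMem h hu)
  suffices hr : r = 0 from mem_span_singleton.2 ⟨s, by simpa [hr] using hrs⟩
  by_contra hr
  -- For this `t` the two generators of the plane containing `u + t • v₀` become collinear.
  obtain ⟨t, ht⟩ : ∃ t : F, p + t * r = -1 := ⟨(-1 - p) / r, by field_simp; ring⟩
  have hsum : u + t • v₀ + d u ∈ F ∙ c u := mem_span_singleton.2
    ⟨q + t * s, by linear_combination (norm := module) hpq + t • hrs - ht • d u⟩
  have hu' : u + t • v₀ ∈ F ∙ c u := span_insert_eq_span hsum ▸ htranslate t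
  exact hu ((add_mem_cancel_left hu').1 hsum)

theorem span_singleton_apply_eq_of_notMem (hv₀ : v₀ ≠ 0) (hu : d u ∉ F ∙ c u) :
    F ∙ c u = F ∙ v₀ := by
  obtain ⟨s, rfl⟩ := mem_span_singleton.1 (mem_span_singleton_apply_of_notMem h hcv₀ hdv₀ hu)
  exact (span_singleton_smul_eq (smul_ne_zero_iff.1 hv₀).1.isUnit _).symm

theorem ker_le_ker_of_forall_mem_span (hv₀ : v₀ ≠ 0) : c.ker ≤ d.ker := by
  intro k hk
  rw [LinearMap.mem_ker] at hk ⊢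
  by_contra hdk
  have : v₀ ∈ F ∙ c k :=
    mem_span_singleton_apply_of_notMem h hcv₀ hdv₀ (by simpa [hk] using hdk)
  exact hv₀ (by simpa [hk] using this)

-- A vector `u` as below cannot exist over `𝔽₂`, so that field needs no separate treatment.
theorem exists_ne_zero_ne_one_of_notMem (hv₀ : v₀ ≠ 0) (hu : d u ∉ F ∙ c u) :
    ∃ t : F, t ≠ 0 ∧ t ≠ 1 := by
  have hu_notMem : u ∉ F ∙ c u := by
    intro hmem
    rw [span_singleton_apply_eq_of_notMem h hcv₀ hdv₀ hv₀ hu, mem_span_singleton] at hmem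
    obtain ⟨a, rfl⟩ := hmem
    simp [hdv₀] at hu
  obtain ⟨p, q, hpq⟩ := mem_span_pair.1 (mem_span_apply_pair_of_notMem h hu)
  refine ⟨-p, fun hp => hu_notMem ?_, fun hp => hu_notMem ?_⟩
  · exact mem_span_singleton.2 ⟨q, by simpa [neg_eq_zero.1 hp] using hpq⟩
  · have hsum : u + d u ∈ F ∙ c u :=
      mem_span_singleton.2 ⟨q, by linear_combination (norm := module) hpq + hp • d u⟩
    exact span_insert_eq_span hsum ▸ h u

theorem range_le_span_singleton_of_notMem (hv₀ : v₀ ≠ 0) (hu : d u ∉ F ∙ c u) :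
    c.range ≤ F ∙ c u := by
  rintro _ ⟨w, rfl⟩
  by_contra hw
  have hcu : c u ≠ 0 := by
    intro hzero
    have := mem_span_singleton_apply_of_notMem h hcv₀ hdv₀ hu
    exact hv₀ (by simpa [hzero] using this)
  have hindep : LinearIndependent F ![c u, c w] := by
    rw [LinearIndependent.pair_iff' hcu]
    exact fun a ha => hw (mem_span_singleton.2 ⟨a, ha⟩)
  have hproportional (t : F) : d (w + t • u) ∈ F ∙ c (w + t • u) := by
    by_contra hgood
    have hmem : c (w + t • u) ∈ F ∙ c u := by
      rw [span_singleton_apply_eq_of_notMem h hcv₀ hdv₀ hv₀ hu,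
        ← span_singleton_apply_eq_of_notMem h hcv₀ hdv₀ hv₀ hgood]
      exact mem_span_singleton_self _
    rw [map_add, map_smul] at hmem
    exact hw ((add_mem_cancel_right (smul_mem _ t (mem_span_singleton_self _))).1 hmem)
  obtain ⟨t, ht0, ht1⟩ := exists_ne_zero_ne_one_of_notMem h hcv₀ hdv₀ hv₀ hu
  exact hu <| apply_mem_span_singleton_of_apply_add_smul_mem hindep ht0 ht1
    (by simpa using hproportional 0) (by simpa using hproportional 1) (hproportional t)

theorem span_apply_pair_eq_top_of_notMem (hv₀ : v₀ ≠ 0) (hu : d u ∉ F ∙ c u) :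
    span F {d u, c u} = ⊤ := by
  have hu_mem := mem_span_apply_pair_of_notMem h hu
  have hker : c.ker ≤ span F {d u, c u} := by
    intro k hk
    have hdk : d k = 0 := ker_le_ker_of_forall_mem_span h hcv₀ hdv₀ hv₀ hk
    rw [LinearMap.mem_ker] at hk
    have hku : k + u ∈ span F {d u, c u} := by
      simpa [hk, hdk] using
        mem_span_apply_pair_of_notMem h (u := k + u) (by simpa [hk, hdk] using hu)
    exact (add_mem_cancel_right hu_mem).1 hku
  rw [eq_top_iff]
  intro w _
  obtain ⟨s, hs⟩ := mem_span_singleton.1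
    (range_le_span_singleton_of_notMem h hcv₀ hdv₀ hv₀ hu ⟨w, rfl⟩)
  have hw : w - s • u ∈ span F {d u, c u} := hker (by simp [hs])
  simpa using add_mem hw (smul_mem _ s hu_mem)

theorem exists_eq_smul_of_forall_mem_span_add (hV : 3 ≤ finrank F V) (hv₀ : v₀ ≠ 0) :
    ∃ l : F, d = l • c := by
  refine exists_eq_smul_of_forall_apply_mem_span_singleton c d fun u => ?_
  classical
  by_contra hu
  have hdim := finrank_span_finset_le_card (R := F) ({d u, c u} : Finset V)
  rw [Finset.coe_pair, Set.finrank, span_apply_pair_eq_top_of_notMem h hcv₀ hdv₀ hv₀ hu,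
    finrank_top] at hdim
  have := Finset.card_le_two (a := d u) (b := c u)
  omega

end PerturbedIdentity

section LocallyUnital

variable {F V : Type*} [Field F] [AddCommGroup V] [Module F V]

theorem exists_mem_ne_zero_apply_eq_zero [IsAlgClosed F] [FiniteDimensional F V] [Nontrivial V]
    {U : Submodule F (End F V)} (hU : 1 < finrank F U) :
    ∃ c ∈ U, c ≠ 0 ∧ ∃ v ≠ 0, c v = 0 := by
  have : Nontrivial U := nontrivial_of_finrank_pos (R := F) (by omega)
  obtain ⟨f, hf⟩ := exists_ne (0 : U)
  by_cases hker : f.1.ker = ⊥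
  · obtain ⟨g, hfg⟩ := exists_linearIndependent_pair_of_one_lt_finrank hU hf
    let e := LinearEquiv.ofInjectiveEndo f.1 (LinearMap.ker_eq_bot.1 hker)
    obtain ⟨μ, hμ⟩ := End.exists_eigenvalue (e.symm.toLinearMap ∘ₗ g.1)
    obtain ⟨v, hv⟩ := hμ.exists_hasEigenvector
    have hgv : g.1 v = μ • f.1 v := by simpa [e] using congrArg e hv.apply_eq_smul
    refine ⟨(g - μ • f).1, (g - μ • f).2, ?_, v, hv.2, by simp [hgv]⟩
    rw [Ne, ZeroMemClass.coe_eq_zero, sub_eq_zero, eq_comm]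
    exact (LinearIndependent.pair_iff' hf).1 hfg μ
  · obtain ⟨v, hv, hv0⟩ := exists_mem_ne_zero_of_ne_bot hker
    exact ⟨f, f.2, by simpa using hf, v, hv0, hv⟩

theorem one_mem_of_forall_exists_apply_eq_of_finrank_le_one {U : Submodule F (End F V)}
    [FiniteDimensional F U] (hU : finrank F U ≤ 1) (h : ∀ v, ∃ g ∈ U, g v = v) :
    (1 : End F V) ∈ U := by
  obtain ⟨g, hg⟩ := finrank_le_one_iff.1 hU
  obtain ⟨l, hl⟩ := exists_eq_smul_of_forall_apply_mem_span_singleton g.1 1 fun v => by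
    obtain ⟨f, hf, hfv⟩ := h v
    obtain ⟨a, ha⟩ := hg ⟨f, hf⟩
    refine mem_span_singleton.2 ⟨a, ?_⟩
    simpa [hfv] using congrArg (fun x : U => x.1 v) ha
  rw [hl]
  exact smul_mem _ l g.2

theorem span_pair_eq_of_finrank_le_two {U : Submodule F V} [FiniteDimensional F U]
    (hU : finrank F U ≤ 2) {x y : V} (hx : x ∈ U) (hy : y ∈ U)
    (hxy : LinearIndependent F ![x, y]) : span F {x, y} = U := by
  refine eq_of_le_of_finrank_le (span_le.2 (Set.pair_subset hx hy)) (hU.trans ?_)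
  rw [← Matrix.range_cons_cons_empty x y ![], finrank_span_eq_card hxy, Fintype.card_fin]

theorem one_mem_of_forall_exists_apply_eq_of_finrank_le_two [IsAlgClosed F] [FiniteDimensional F V]
    (hV : 3 ≤ finrank F V) {U : Submodule F (End F V)} (hU : finrank F U ≤ 2)
    (h : ∀ v, ∃ g ∈ U, g v = v) : (1 : End F V) ∈ U := by
  have : Nontrivial V := nontrivial_of_finrank_pos (R := F) (by omega)
  rcases le_or_gt (finrank F U) 1 with hU1 | hU1
  · exact one_mem_of_forall_exists_apply_eq_of_finrank_le_one hU1 h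
  obtain ⟨c, hcU, hc, v₀, hv₀, hcv₀⟩ := exists_mem_ne_zero_apply_eq_zero hU1
  obtain ⟨b, hbU, hbv₀⟩ := h v₀
  have hindep : LinearIndependent F ![c, b] := by
    rw [LinearIndependent.pair_iff' hc]
    rintro a rfl
    exact hv₀ (by simpa [hcv₀] using hbv₀.symm)
  have hspan := span_pair_eq_of_finrank_le_two hU hcU hbU hindep
  have hlocal (v : V) : v ∈ span F {v + (b - 1) v, c v} := by
    obtain ⟨g, hgU, hgv⟩ := h v
    obtain ⟨x, y, rfl⟩ := mem_span_pair.1 (hspan ▸ hgU)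
    exact mem_span_pair.2 ⟨y, x, by simpa [add_comm] using hgv⟩
  obtain ⟨l, hl⟩ :=
    exists_eq_smul_of_forall_mem_span_add hlocal hcv₀ (by simp [hbv₀]) hV hv₀
  rw [← sub_sub_cancel b 1, hl]
  exact sub_mem hbU (smul_mem _ l hcU)

end LocallyUnital

section TraceForm

open Matrix

variable {F R ι : Type*} [Field F] [CommRing R] [Fintype ι]

variable (R ι) in
/-- The trace form `(A, B) ↦ Tr (A * B)` on square matrices. -/
def matrixTraceForm : LinearMap.BilinForm R (Matrix ι ι R) :=
  (LinearMap.mul R (Matrix ι ι R)).compr₂ (traceLinearMap ι R R)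

@[simp]
theorem matrixTraceForm_apply (A B : Matrix ι ι R) : matrixTraceForm R ι A B = trace (A * B) :=
  rfl

theorem matrixTraceForm_isSymm : (matrixTraceForm R ι).IsSymm :=
  ⟨fun A B => trace_mul_comm A B⟩

theorem matrixTraceForm_nondegenerate : (matrixTraceForm R ι).Nondegenerate :=
  ⟨fun A hA => ext_iff_trace_mul_right.2 fun B => by simpa using hA B,
    fun B hB => ext_iff_trace_mul_left.2 fun A => by simpa using hB A⟩

theorem finrank_orthogonal_matrixTraceForm (W : Submodule F (Matrix ι ι F)) :
    finrank F ((matrixTraceForm F ι).orthogonal W) = finrank F (Matrix ι ι F ⧸ W) := by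
  rw [LinearMap.BilinForm.finrank_orthogonal matrixTraceForm_nondegenerate,
    finrank_quotient]

theorem exists_dotProduct_eq_one_of_notMem {P : Submodule F (ι → F)} {v : ι → F} (hv : v ∉ P) :
    ∃ w : ι → F, w ⬝ᵥ v = 1 ∧ ∀ x ∈ P, w ⬝ᵥ x = 0 := by
  classical
  obtain ⟨f, hfv, hf⟩ := exists_le_ker_of_notMem hv
  obtain ⟨w, hw⟩ := (dotProductEquiv F ι).surjective ((f v)⁻¹ • f)
  have hw_apply (x : ι → F) : w ⬝ᵥ x = (f v)⁻¹ * f x := by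
    simpa using LinearMap.congr_fun hw x
  refine ⟨w, ?_, fun x hx => ?_⟩
  · rw [hw_apply, inv_mul_cancel₀ hfv]
  · rw [hw_apply, LinearMap.mem_ker.1 (hf hx), mul_zero]

theorem rank_vecMulVec_eq_one {v w : ι → F} (hv : v ≠ 0) (hw : w ≠ 0) :
    (vecMulVec v w).rank = 1 := by
  refine le_antisymm (rank_vecMulVec_le v w) (Nat.one_le_iff_ne_zero.2 fun h => ?_)
  rw [Matrix.rank, finrank_eq_zero, LinearMap.range_eq_bot] at h
  classical
  exact vecMulVec_ne_zero hv hw (toLin'.map_eq_zero_iff.1 h)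

theorem exists_rank_one_idempotent_mem_orthogonal {U : Submodule F (Matrix ι ι F)} {v : ι → F}
    (hv : ∀ B ∈ U, B *ᵥ v ≠ v) :
    ∃ e ∈ (matrixTraceForm F ι).orthogonal U, e * e = e ∧ e.rank = 1 := by
  have hv_notMem : v ∉ U.map ((mulVecBilin F F).flip v) := by
    rintro ⟨B, hB, hBv⟩
    exact hv B hB hBv
  obtain ⟨w, hwv, hw⟩ := exists_dotProduct_eq_one_of_notMem hv_notMem
  have hv0 : v ≠ 0 := by rintro rfl; simp at hwv
  have hw0 : w ≠ 0 := by rintro rfl; simp at hwv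
  refine ⟨vecMulVec v w, fun B hB => ?_, ?_, rank_vecMulVec_eq_one hv0 hw0⟩
  · rw [matrixTraceForm_apply, mul_vecMulVec, trace_vecMulVec, dotProduct_comm]
    exact hw _ ⟨B, hB, rfl⟩
  · rw [vecMulVec_mul_vecMulVec, hwv, one_smul]

theorem one_mem_of_forall_exists_mulVec_eq [IsAlgClosed F] [DecidableEq ι]
    (hι : 3 ≤ Fintype.card ι) {U : Submodule F (Matrix ι ι F)} (hU : finrank F U ≤ 2)
    (h : ∀ v, ∃ B ∈ U, B *ᵥ v = v) : (1 : Matrix ι ι F) ∈ U := by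
  have hU' : finrank F (U.map (toLin' : Matrix ι ι F ≃ₗ[F] _).toLinearMap) ≤ 2 := by
    rwa [LinearEquiv.finrank_map_eq]
  have hlocal (v : ι → F) : ∃ g ∈ U.map (toLin' : Matrix ι ι F ≃ₗ[F] _).toLinearMap, g v = v := by
    obtain ⟨B, hB, hBv⟩ := h v
    exact ⟨toLin' B, mem_map_of_mem hB, hBv⟩
  obtain ⟨A, hA, hA1⟩ :=
    one_mem_of_forall_exists_apply_eq_of_finrank_le_two (by simpa using hι) hU' hlocal
  rwa [← toLin'.injective (hA1.trans toLin'_one.symm)]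

theorem stmt_12_general [IsAlgClosed F] (hι : 3 ≤ Fintype.card ι)
    (W : Submodule F (Matrix ι ι F)) (hcodim : finrank F (Matrix ι ι F ⧸ W) ≤ 2)
    (hr1 : ¬ ∃ e ∈ W, e * e = e ∧ e.rank = 1) : ∀ a ∈ W, trace a = 0 := by
  classical
  let U := (matrixTraceForm F ι).orthogonal W
  have hUW : (matrixTraceForm F ι).orthogonal U = W :=
    LinearMap.BilinForm.orthogonal_orthogonal matrixTraceForm_nondegenerate
      matrixTraceForm_isSymm.isRefl W
  have hlocal (v : ι → F) : ∃ B ∈ U, B *ᵥ v = v := by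
    by_contra! hv
    exact hr1 (hUW ▸ exists_rank_one_idempotent_mem_orthogonal hv)
  have hone : 1 ∈ U := one_mem_of_forall_exists_mulVec_eq hι
    ((finrank_orthogonal_matrixTraceForm W).trans_le hcodim) hlocal
  intro a ha
  simpa using hone a ha

end TraceForm

theorem stmt_12 (F : Type*) [Field F] [IsAlgClosed F] (n : ℕ) (hn : 3 ≤ n)
    (hchar : ringChar F = 0 ∨ n < ringChar F)
    (W : Submodule F (Matrix (Fin n) (Fin n) F))
    (hcodim : Module.finrank F (Matrix (Fin n) (Fin n) F ⧸ W) = 1 ∨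
      Module.finrank F (Matrix (Fin n) (Fin n) F ⧸ W) = 2)
    (hr1 : ¬ ∃ e ∈ W, e * e = e ∧ e.rank = 1) :
    ∀ a ∈ W, Matrix.trace a = 0 :=
  stmt_12_general (by simpa using hn) W (by omega) hr1
end

section
/- Assume n ≥ 4 and that char(F) = 0 or char(F) > n. Then for every d with 3 ≤ d < n, there exists an F-subspace W ⊆ M_n(F) of codimension d (as a subspace of the n²-dimensional space M_n(F)) such that W contains no rank-1 idempotent and W is not contained in the subspace of trace-zero matrices, i.e., there exists a ∈ W with Tr(a) ≠ 0. -/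
/-!
A rank-one idempotent `e` has trace `1`, and all its `2 × 2` minors vanish. For `i ≠ j`, the three
linear conditions `A i j = tr A`, `A j i = tr A`, `A j j = 0` turn the principal `{i, j}` minor of
such an `e` into `-1`, so they cut out a subspace without rank-one idempotents, of codimension at
most `3`. The matrix `E_ii + E_ij + E_ji` in it has trace `1`, and any smaller subspace through
this matrix has the same two properties, which gives the remaining codimensions.
-/

section IntermediateSubspaces

variable {K V : Type*} [DivisionRing K] [AddCommGroup V] [Module K V] [Module.Finite K V]

theorem exists_le_le_finrank_eq {P Q : Submodule K V} (hPQ : P ≤ Q)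
    {k : ℕ} (hPk : Module.finrank K P ≤ k) (hkQ : k ≤ Module.finrank K Q) :
    ∃ W : Submodule K V, P ≤ W ∧ W ≤ Q ∧ Module.finrank K W = k := by
  induction k, hPk using Nat.le_induction with
  | base => exact ⟨P, le_rfl, hPQ, rfl⟩
  | succ k _ ih =>
    obtain ⟨W, hPW, hWQ, rfl⟩ := ih (Nat.le_of_succ_le hkQ)
    obtain ⟨v, hvQ, hvW⟩ : ∃ v ∈ Q, v ∉ W :=
      Set.not_subset.mp fun hQW => hkQ.not_gt (Nat.lt_succ_of_le (Submodule.finrank_mono hQW))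
    refine ⟨W ⊔ K ∙ v, hPW.trans le_sup_left,
      sup_le hWQ ((Submodule.span_singleton_le_iff_mem v Q).mpr hvQ), ?_⟩
    exact Submodule.finrank_sup_span_singleton hvW

theorem exists_le_le_finrank_quotient_eq {P Q : Submodule K V} (hPQ : P ≤ Q)
    {d : ℕ} (hQd : Module.finrank K (V ⧸ Q) ≤ d) (hdP : d ≤ Module.finrank K (V ⧸ P)) :
    ∃ W : Submodule K V, P ≤ W ∧ W ≤ Q ∧ Module.finrank K (V ⧸ W) = d := by
  have hP := P.finrank_quotient_add_finrank
  have hQ := Q.finrank_quotient_add_finrank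
  obtain ⟨W, hPW, hWQ, hW⟩ := exists_le_le_finrank_eq hPQ
    (k := Module.finrank K V - d) (by lia) (by lia)
  have := W.finrank_quotient_add_finrank
  exact ⟨W, hPW, hWQ, by lia⟩

end IntermediateSubspaces

section TraceBlock

theorem det_submatrix_eq_zero_of_rank_lt {R m n k : Type*} [CommRing R] [IsDomain R] [Fintype n]
    [Fintype k] [DecidableEq k] {A : Matrix m n R} (hA : A.rank < Fintype.card k)
    (r : k → m) (c : k → n) : (A.submatrix r c).det = 0 := by
  by_contra hdet
  exact hA.not_ge (Matrix.rank_of_det_ne_zero hdet ▸ A.rank_submatrix_le r c)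

theorem trace_eq_rank_of_isIdempotentElem {R ι : Type*} [CommRing R] [IsDomain R]
    [IsPrincipalIdealRing R] [Fintype ι] {e : Matrix ι ι R} (he : IsIdempotentElem e) :
    e.trace = e.rank := by
  classical
  have hproj := LinearMap.IsIdempotentElem.isProj_range (Matrix.toLin' e)
    (he.map Matrix.toLinAlgEquiv')
  rw [← Matrix.trace_toLin'_eq, hproj.trace, Matrix.toLin'_apply', Matrix.rank]

variable {R ι : Type*} [CommRing R] [Fintype ι]

/-- The linear map whose vanishing at `A` says that the principal `{i, j}` block of `A` has the
form `!![*, tr A; tr A, 0]`. -/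
def traceBlockDefect (R : Type*) [CommRing R] (i j : ι) : Matrix ι ι R →ₗ[R] Fin 3 → R :=
  LinearMap.pi ![Matrix.entryLinearMap R R i j - Matrix.traceLinearMap ι R R,
    Matrix.entryLinearMap R R j i - Matrix.traceLinearMap ι R R, Matrix.entryLinearMap R R j j]

/-- The submodule of matrices whose principal `{i, j}` block has the form `!![*, tr A; tr A, 0]`,
which excludes the rank-one idempotents. -/
def traceBlockSubmodule (R : Type*) [CommRing R] (i j : ι) : Submodule R (Matrix ι ι R) :=
  LinearMap.ker (traceBlockDefect R i j)

theorem mem_traceBlockSubmodule {i j : ι} {A : Matrix ι ι R} :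
    A ∈ traceBlockSubmodule R i j ↔ A i j = A.trace ∧ A j i = A.trace ∧ A j j = 0 := by
  simp [traceBlockSubmodule, traceBlockDefect, funext_iff, Fin.forall_fin_succ, sub_eq_zero]

theorem finrank_quotient_traceBlockSubmodule_le [Nontrivial R] (i j : ι) :
    Module.finrank R (Matrix ι ι R ⧸ traceBlockSubmodule R i j) ≤ 3 := by
  calc Module.finrank R (Matrix ι ι R ⧸ traceBlockSubmodule R i j)
      = Module.finrank R (LinearMap.range (traceBlockDefect R i j)) :=
        (traceBlockDefect R i j).quotKerEquivRange.finrank_eq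
    _ ≤ Module.finrank R (Fin 3 → R) := Submodule.finrank_le _
    _ = 3 := Module.finrank_fin_fun R

theorem rank_ne_one_of_mem_traceBlockSubmodule [IsDomain R] [IsPrincipalIdealRing R] {i j : ι}
    {e : Matrix ι ι R} (hmem : e ∈ traceBlockSubmodule R i j) (he : IsIdempotentElem e) :
    e.rank ≠ 1 := by
  intro hrank
  obtain ⟨hij, hji, hjj⟩ := mem_traceBlockSubmodule.mp hmem
  have htrace : e.trace = 1 := by simp [trace_eq_rank_of_isIdempotentElem he, hrank]
  have hminor : e i i * e j j - e i j * e j i = 0 := by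
    have hdet := det_submatrix_eq_zero_of_rank_lt (k := Fin 2) (A := e) (by simp [hrank])
      ![i, j] ![i, j]
    rwa [Matrix.det_fin_two] at hdet
  simp [hij, hji, hjj, htrace] at hminor

theorem exists_mem_traceBlockSubmodule_trace_eq_one {i j : ι} (hij : i ≠ j) :
    ∃ A ∈ traceBlockSubmodule R i j, A.trace = 1 := by
  classical
  let A : Matrix ι ι R := Matrix.single i i 1 + Matrix.single i j 1 + Matrix.single j i 1
  have htrace : A.trace = 1 := by simp [A, hij, hij.symm]
  refine ⟨A, mem_traceBlockSubmodule.mpr ?_, htrace⟩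
  rw [htrace]
  simp [A, hij, hij.symm]

end TraceBlock

theorem stmt_13_general (K ι : Type*) [Field K] [Fintype ι] (d : ℕ) (hd : 3 ≤ d)
    (hdι : d < Fintype.card ι ^ 2) :
    ∃ W : Submodule K (Matrix ι ι K),
      Module.finrank K (Matrix ι ι K ⧸ W) = d ∧
      (¬ ∃ e ∈ W, e * e = e ∧ e.rank = 1) ∧
      ∃ a ∈ W, Matrix.trace a ≠ 0 := by
  obtain ⟨i, j, hij⟩ : ∃ i j : ι, i ≠ j := by
    rw [← Fintype.one_lt_card_iff]
    nlinarith
  obtain ⟨a, ha, htrace⟩ := exists_mem_traceBlockSubmodule_trace_eq_one (R := K) hij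
  have hspan : d ≤ Module.finrank K (Matrix ι ι K ⧸ K ∙ a) := by
    have hle : Module.finrank K (K ∙ a) ≤ 1 := (finrank_span_le_card {a}).trans (by simp)
    have hadd := (K ∙ a).finrank_quotient_add_finrank
    rw [Module.finrank_matrix, Module.finrank_self, mul_one, ← sq] at hadd
    lia
  obtain ⟨W, haW, hW, hWd⟩ := exists_le_le_finrank_quotient_eq
    ((Submodule.span_singleton_le_iff_mem a _).mpr ha)
    ((finrank_quotient_traceBlockSubmodule_le i j).trans hd) hspan
  refine ⟨W, hWd, ?_, a, (Submodule.span_singleton_le_iff_mem a W).mp haW, by simp [htrace]⟩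
  rintro ⟨e, heW, he, hrank⟩
  exact rank_ne_one_of_mem_traceBlockSubmodule (hW heW) he hrank

theorem stmt_13 (F : Type*) [Field F] [IsAlgClosed F] (n : ℕ) (hn : 4 ≤ n)
    (hchar : ringChar F = 0 ∨ n < ringChar F) :
    ∀ d : ℕ, 3 ≤ d → d < n →
      ∃ W : Submodule F (Matrix (Fin n) (Fin n) F),
        Module.finrank F (Matrix (Fin n) (Fin n) F ⧸ W) = d ∧
        (¬ ∃ e ∈ W, e * e = e ∧ e.rank = 1) ∧
        ∃ a ∈ W, Matrix.trace a ≠ 0 := by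
  intro d hd hdn
  exact stmt_13_general F (Fin n) d hd (by rw [Fintype.card_fin]; nlinarith)
end

section
/- Assume char(F) = 0 or char(F) > n. Let H = {a ∈ M_n(F) : Tr(a) = 0} be the subspace of trace-zero matrices. Then H contains no nonzero idempotent, and H is the unique F-subspace of M_n(F) of codimension 1 containing no nonzero idempotent: if W ⊆ M_n(F) is a subspace of codimension 1 such that no nonzero e ∈ W satisfies e² = e, then W = H. -/
/-!
The trace of an idempotent is its rank, read in the field. As the rank is at most `n` and the
characteristic is zero or exceeds `n`, a vanishing trace forces the rank to be zero.

A hyperplane is the kernel of a nonzero functional `x ↦ Tr (b x)`. If `v` and `b v` are linearly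
independent, choose a linear form `f` with `f v = 1` and `f (b v) = 0`: the rank-one operator
`u ↦ f u • v` is then a nonzero idempotent on which the functional takes the value
`f (b v) = 0`. Hence, if the hyperplane contains no nonzero idempotent, every nonzero vector is an
eigenvector of `b`, so `b` is scalar and the hyperplane is the kernel of the trace.
-/

open Module

theorem isIdempotentElem_smulRight {R M : Type*} [CommSemiring R] [AddCommMonoid M] [Module R M]
    {f : Dual R M} {v : M} (h : f v = 1) : IsIdempotentElem (f.smulRight v : End R M) := by
  ext u
  simp [h]

section VectorSpace

variable {K V : Type*} [Field K] [AddCommGroup V] [Module K V]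

theorem linearMap_eq_zero_of_isIdempotentElem_of_trace_eq_zero [FiniteDimensional K V]
    (hchar : ringChar K = 0 ∨ finrank K V < ringChar K) {f : V →ₗ[K] V}
    (hf : IsIdempotentElem f) (htrace : LinearMap.trace K V f = 0) : f = 0 := by
  have hrank : (finrank K f.range : K) = 0 :=
    (LinearMap.IsIdempotentElem.isProj_range f hf).trace.symm.trans htrace
  have hdvd : ringChar K ∣ finrank K f.range := (ringChar.spec K _).1 hrank
  have hrange : finrank K f.range = 0 := by
    rcases hchar with hzero | hlt
    · exact Nat.eq_zero_of_zero_dvd (hzero ▸ hdvd)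
    · exact Nat.eq_zero_of_dvd_of_lt hdvd ((Submodule.finrank_le _).trans_lt hlt)
  rwa [Submodule.finrank_eq_zero, LinearMap.range_eq_bot] at hrange

theorem exists_dual_ne_zero_ker_eq_of_finrank_quotient_eq_one {W : Submodule K V}
    (hW : finrank K (V ⧸ W) = 1) : ∃ φ : Dual K V, φ ≠ 0 ∧ φ.ker = W := by
  have : FiniteDimensional K (V ⧸ W) := finite_of_finrank_eq_succ hW
  let E : (V ⧸ W) ≃ₗ[K] K := LinearEquiv.ofFinrankEq _ _ (hW.trans (finrank_self K).symm)
  have hker : (E.toLinearMap ∘ₗ W.mkQ).ker = W := by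
    rw [LinearEquiv.ker_comp, Submodule.ker_mkQ]
  refine ⟨E.toLinearMap ∘ₗ W.mkQ, fun hzero ↦ ?_, hker⟩
  have htop : W = ⊤ := by rw [← hker, hzero, LinearMap.ker_zero]
  have : Subsingleton (V ⧸ W) := Submodule.Quotient.subsingleton_iff.2 htop
  exact zero_ne_one (finrank_zero_of_subsingleton.symm.trans hW)

theorem exists_dual_apply_eq_one_apply_eq_zero {v u : V} (h : LinearIndependent K ![v, u]) :
    ∃ f : Dual K V, f v = 1 ∧ f u = 0 := by
  have hv : v ∉ K ∙ u := by
    rw [Submodule.mem_span_singleton, not_exists]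
    exact (LinearIndependent.pair_iff' (h.ne_zero 1)).1 (LinearIndependent.pair_symm_iff.1 h)
  obtain ⟨f, hf, hfv⟩ := LinearMap.exists_extend_of_notMem (0 : (K ∙ u) →ₗ[K] K) hv 1
  exact ⟨f, hfv, congr($hf ⟨u, Submodule.mem_span_singleton_self u⟩)⟩

theorem exists_eq_smul_one_of_forall_dual_apply_ne_zero {B : V →ₗ[K] V}
    (h : ∀ (f : Dual K V) (v : V), f v = 1 → f (B v) ≠ 0) : ∃ a : K, B = a • 1 := by
  refine LinearMap.exists_eq_smul_id_of_forall_notLinearIndependent fun v hv ↦ ?_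
  obtain ⟨f, hfv, hfBv⟩ := exists_dual_apply_eq_one_apply_eq_zero hv
  exact h f v hfv hfBv

end VectorSpace

section Matrix

variable {ι : Type*} [Fintype ι]

theorem exists_eq_trace_mul {R : Type*} [CommSemiring R] (φ : Matrix ι ι R →ₗ[R] R) :
    ∃ b : Matrix ι ι R, ∀ x, φ x = (b * x).trace := by
  classical
  refine ⟨.of fun i j ↦ φ (.single j i 1), fun x ↦ ?_⟩
  suffices φ = Matrix.traceLinearMap ι R R ∘ₗ LinearMap.mulLeft R (.of fun i j ↦ φ (.single j i 1))
    from congr($this x)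
  refine Matrix.ext_linearMap _ fun i j ↦ LinearMap.ext_ring ?_
  simp [Matrix.trace_mul_single]

variable {F : Type*} [Field F]

theorem matrix_eq_zero_of_isIdempotentElem_of_trace_eq_zero
    (hchar : ringChar F = 0 ∨ Fintype.card ι < ringChar F) {e : Matrix ι ι F}
    (he : IsIdempotentElem e) (htrace : e.trace = 0) : e = 0 := by
  classical
  apply (Matrix.toLinAlgEquiv' (R := F) (n := ι)).injective
  rw [map_zero]
  exact linearMap_eq_zero_of_isIdempotentElem_of_trace_eq_zero
    (by rwa [finrank_fintype_fun_eq_card]) (he.map _) ((Matrix.trace_toLin'_eq e).trans htrace)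

theorem exists_eq_smul_trace_of_forall_isIdempotentElem {φ : Matrix ι ι F →ₗ[F] F}
    (h : ∀ e, IsIdempotentElem e → φ e = 0 → e = 0) :
    ∃ a : F, φ = a • Matrix.traceLinearMap ι F F := by
  classical
  obtain ⟨b, hb⟩ := exists_eq_trace_mul φ
  let T : Matrix ι ι F ≃ₐ[F] End F (ι → F) := Matrix.toLinAlgEquiv'
  have hrankOne (f : Dual F (ι → F)) (v : ι → F) : φ (T.symm (f.smulRight v)) = f (T b v) := by
    have hcomp : T (b * T.symm (f.smulRight v)) = f.smulRight (T b v) := by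
      ext
      simp
    calc
      φ (T.symm (f.smulRight v)) = (b * T.symm (f.smulRight v)).trace := hb _
      _ = LinearMap.trace F _ (T (b * T.symm (f.smulRight v))) := (Matrix.trace_toLin'_eq _).symm
      _ = f (T b v) := by rw [hcomp, LinearMap.trace_smulRight]
  obtain ⟨a, ha⟩ : ∃ a : F, T b = a • 1 := by
    refine exists_eq_smul_one_of_forall_dual_apply_ne_zero fun f v hfv hfbv ↦ ?_
    have hzero := h _ ((isIdempotentElem_smulRight hfv).map T.symm) ((hrankOne f v).trans hfbv)
    rw [map_eq_zero_iff _ T.symm.injective] at hzero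
    have : f v * f v = 0 := by simpa using congr(f ($hzero v))
    simp [hfv] at this
  have hscalar : b = a • 1 := T.injective (by rw [ha, map_smul, map_one])
  refine ⟨a, LinearMap.ext fun x ↦ ?_⟩
  simp [hb, hscalar]

theorem eq_ker_trace_of_forall_isIdempotentElem {W : Submodule F (Matrix ι ι F)}
    (hW : finrank F (Matrix ι ι F ⧸ W) = 1) (h : ∀ e ∈ W, IsIdempotentElem e → e = 0) :
    W = (Matrix.traceLinearMap ι F F).ker := by
  obtain ⟨φ, hφ, rfl⟩ := exists_dual_ne_zero_ker_eq_of_finrank_quotient_eq_one hW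
  obtain ⟨a, rfl⟩ := exists_eq_smul_trace_of_forall_isIdempotentElem fun e he hφe ↦ h e hφe he
  exact LinearMap.ker_smul _ a (left_ne_zero_of_smul hφ)

end Matrix

theorem stmt_14_general (F ι : Type*) [Field F] [Fintype ι] :
    ((ringChar F = 0 ∨ Fintype.card ι < ringChar F) →
      ∀ e : Matrix ι ι F, e.trace = 0 → e * e = e → e = 0) ∧
    (∀ W : Submodule F (Matrix ι ι F),
      finrank F (Matrix ι ι F ⧸ W) = 1 →
      (∀ e ∈ W, e * e = e → e = 0) →
      W = (Matrix.traceLinearMap ι F F).ker) :=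
  ⟨fun hchar _ htrace he ↦ matrix_eq_zero_of_isIdempotentElem_of_trace_eq_zero hchar he htrace,
    fun _ hW h ↦ eq_ker_trace_of_forall_isIdempotentElem hW h⟩

theorem stmt_14 (F : Type*) [Field F] [IsAlgClosed F] (n : ℕ) (hn : 1 ≤ n)
    (hchar : ringChar F = 0 ∨ n < ringChar F) :
    (∀ e : Matrix (Fin n) (Fin n) F, Matrix.trace e = 0 → e * e = e → e = 0) ∧
    (∀ W : Submodule F (Matrix (Fin n) (Fin n) F),
      Module.finrank F (Matrix (Fin n) (Fin n) F ⧸ W) = 1 →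
      (∀ e ∈ W, e * e = e → e = 0) →
      W = LinearMap.ker (Matrix.traceLinearMap (Fin n) F F)) :=
  (stmt_14_general F (Fin n)).imp_left fun h ↦ h (by rwa [Fintype.card_fin])
end

section
/- Assume char(F) = p with 0 < p ≤ n. Then every F-subspace W ⊆ M_n(F) of codimension 1 contains a nonzero idempotent, i.e., there exists e ∈ W with e ≠ 0 and e² = e. -/
/-!
Every linear functional on `n × n` matrices is `X ↦ trace (A * X)` for some matrix `A`, so a
hyperplane has the form `trace (A * X) = 0`. If `A` is not scalar, some vector `v` is not collinear
with `A *ᵥ v`; choosing `w` with `w ⬝ᵥ v = 1` and `w ⬝ᵥ (A *ᵥ v) = 0` gives the rank one idempotent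
`vecMulVec v w` in the hyperplane. If `A` is scalar, the hyperplane contains the diagonal projection
onto `p` coordinates, whose trace `p` is zero in the field. Only this second case depends on the
characteristic.
-/

open Matrix

theorem exists_ker_eq_of_finrank_quotient_eq_one {R M : Type*} [Ring R]
    [StrongRankCondition R] [AddCommGroup M] [Module R M] (W : Submodule R M)
    [Module.Free R (M ⧸ W)] (hW : Module.finrank R (M ⧸ W) = 1) :
    ∃ f : M →ₗ[R] R, LinearMap.ker f = W := by
  obtain ⟨φ⟩ := Module.nonempty_linearEquiv_of_finrank_eq_one hW
  exact ⟨φ.symm.toLinearMap ∘ₗ W.mkQ, by rw [LinearEquiv.ker_comp, Submodule.ker_mkQ]⟩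

theorem exists_forall_apply_eq_trace_mul {R m n : Type*} [CommSemiring R] [Fintype m] [Fintype n]
    (f : Matrix m n R →ₗ[R] R) : ∃ A : Matrix n m R, ∀ X, f X = trace (A * X) := by
  classical
  let A : Matrix n m R := of fun j i => f (single i j 1)
  suffices f = traceLinearMap n R R ∘ₗ mulLeftLinearMap n R A from ⟨A, LinearMap.congr_fun this⟩
  refine ext_linearMap _ fun i j => LinearMap.ext_ring ?_
  simp [A, trace_mul_single]

section Idempotents

variable {R n : Type*} [Semiring R] [Fintype n]

theorem isIdempotentElem_vecMulVec {v w : n → R} (h : w ⬝ᵥ v = 1) :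
    IsIdempotentElem (vecMulVec v w) := by
  rw [IsIdempotentElem, vecMulVec_mul_vecMulVec, h, one_smul]

theorem exists_isIdempotentElem_trace_eq_natCast [Nontrivial R] {k : ℕ} (hk0 : k ≠ 0)
    (hk : k ≤ Fintype.card n) :
    ∃ e : Matrix n n R, e ≠ 0 ∧ IsIdempotentElem e ∧ trace e = k := by
  classical
  obtain ⟨s, -, rfl⟩ := Finset.exists_subset_card_eq hk
  obtain ⟨i, hi⟩ := Finset.card_ne_zero.mp hk0
  refine ⟨diagonal fun j => if j ∈ s then 1 else 0, fun h => ?_, ?_, by simp [trace]⟩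
  · simpa [hi] using congrFun₂ h i i
  · simp +contextual [IsIdempotentElem]

end Idempotents

section RankOne

theorem exists_linearIndependent_mulVec {R n : Type*} [CommRing R] [IsDomain R]
    [Fintype n] [DecidableEq n] {A : Matrix n n R} (hA : ∀ a : R, A ≠ a • 1) :
    ∃ v, LinearIndependent R ![v, A *ᵥ v] := by
  by_contra! h
  obtain ⟨a, ha⟩ := LinearMap.exists_eq_smul_id_of_forall_notLinearIndependent (f := A.toLin') h
  exact hA a (toLin'.injective (by rw [ha, map_smul, toLin'_one, Module.End.one_eq_id]))

variable {K n : Type*} [Field K] [Fintype n]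

theorem mulVec_surjective_of_linearIndependent_row {m : Type*} [Finite m]
    {M : Matrix m n K} (hM : LinearIndependent K M.row) : Function.Surjective M.mulVec := by
  cases nonempty_fintype m
  have hrank : Module.finrank K (LinearMap.range M.mulVecLin) = Module.finrank K (m → K) := by
    rw [Module.finrank_fintype_fun_eq_card, ← hM.rank_matrix, Matrix.rank]
  exact LinearMap.range_eq_top.mp (Submodule.eq_top_of_finrank_eq hrank)

theorem exists_dotProduct_eq_one_and_eq_zero {v w : n → K} (h : LinearIndependent K ![v, w]) :
    ∃ u : n → K, u ⬝ᵥ v = 1 ∧ u ⬝ᵥ w = 0 := by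
  obtain ⟨u, hu⟩ := mulVec_surjective_of_linearIndependent_row (M := of ![v, w]) h ![1, 0]
  exact ⟨u, by simpa [dotProduct_comm] using congrFun hu 0,
    by simpa [dotProduct_comm] using congrFun hu 1⟩

theorem exists_isIdempotentElem_trace_mul_eq_zero [DecidableEq n] {A : Matrix n n K}
    (hA : ∀ a : K, A ≠ a • 1) :
    ∃ e : Matrix n n K, e ≠ 0 ∧ IsIdempotentElem e ∧ trace (A * e) = 0 := by
  obtain ⟨v, hv⟩ := exists_linearIndependent_mulVec hA
  obtain ⟨w, hwv, hwAv⟩ := exists_dotProduct_eq_one_and_eq_zero hv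
  refine ⟨vecMulVec v w, fun h => ?_, isIdempotentElem_vecMulVec hwv, ?_⟩
  · have htrace : trace (vecMulVec v w) = 1 := by rw [trace_vecMulVec, dotProduct_comm, hwv]
    simp [h] at htrace
  · rw [mul_vecMulVec, trace_vecMulVec, dotProduct_comm, hwAv]

end RankOne

theorem stmt_15_general {F n : Type*} [Field F] [Fintype n] (p : ℕ) [CharP F p] (hp0 : 0 < p)
    (hpn : p ≤ Fintype.card n) (W : Submodule F (Matrix n n F))
    (hcodim : Module.finrank F (Matrix n n F ⧸ W) = 1) :
    ∃ e ∈ W, e ≠ 0 ∧ e * e = e := by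
  classical
  obtain ⟨f, rfl⟩ := exists_ker_eq_of_finrank_quotient_eq_one W hcodim
  obtain ⟨A, hA⟩ := exists_forall_apply_eq_trace_mul f
  simp only [LinearMap.mem_ker, hA]
  by_cases hscalar : ∃ a : F, A = a • 1
  · obtain ⟨a, rfl⟩ := hscalar
    obtain ⟨e, he0, he, htrace⟩ := exists_isIdempotentElem_trace_eq_natCast (R := F) hp0.ne' hpn
    exact ⟨e, by simp [htrace, CharP.cast_eq_zero], he0, he⟩
  · obtain ⟨e, he0, he, htrace⟩ := exists_isIdempotentElem_trace_mul_eq_zero (not_exists.mp hscalar)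
    exact ⟨e, htrace, he0, he⟩

theorem stmt_15 (F : Type*) [Field F] [IsAlgClosed F] (n : ℕ) (hn : 1 ≤ n)
    (p : ℕ) (hp : CharP F p) (hp0 : 0 < p) (hpn : p ≤ n)
    (W : Submodule F (Matrix (Fin n) (Fin n) F))
    (hcodim : Module.finrank F (Matrix (Fin n) (Fin n) F ⧸ W) = 1) :
    ∃ e ∈ W, e ≠ 0 ∧ e * e = e :=
  stmt_15_general p hp0 (by rwa [Fintype.card_fin]) W hcodim
end

section
/- Assume n ≥ 3 and that char(F) = 0 or char(F) > n. Let W ⊆ M_n(F) be an F-subspace of codimension d with 1 ≤ d < n (as a subspace of the n²-dimensional space M_n(F)) such that W contains no nonzero idempotent (no e ∈ W with e ≠ 0 and e² = e). Then W is contained in the subspace of trace-zero matrices, i.e., Tr(a) = 0 for every a ∈ W. -/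
/-!
Let `U` be the orthogonal complement of `W` for the trace form, so that `dim U < n`, and suppose
that some element of `W` has nonzero trace, i.e. `1 ∉ U`. Then `L = U ⊕ F` has dimension at most
`n`, and some subspace `V ≠ 0` is stabilised by no element of `L` except the scalars. To find it,
minimise the dimension of `{u ∈ L | u V ⊆ Q}` over the pairs `0 ≠ V ≤ Q` for which this dimension
is at most `dim Q - dim V + 1`. At a minimum these `u` preserve both `V` and `Q`; dimensions of such
spaces do not increase under generic perturbations, so `V` and `Q` may be moved by transvections,
and this forces every such `u` to be a scalar unless `V = Q`.

Hence no nonzero element of `U` stabilises `V`. Dually, `W + e M (1 - e)` is the whole algebra for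
any idempotent `e` with range `V`, so `W` contains some `e - e y (1 - e)`, a nonzero idempotent.
-/

open Module Filter

section Perturbation

variable {F X Y : Type*} [Field F] [AddCommGroup X] [Module F X] [AddCommGroup Y] [Module F Y]

lemma eventually_isUnit_one_add_smul [FiniteDimensional F X] (T : End F X) :
    ∀ᶠ c : F in cofinite, IsUnit (1 + c • T) := by
  have hfin : ((fun μ : F ↦ -μ⁻¹) '' spectrum F T).Finite := (End.finite_spectrum T).image _
  filter_upwards [hfin.compl_mem_cofinite] with c hc
  rcases eq_or_ne c 0 with rfl | hc0
  · simp
  have hres : IsUnit (algebraMap F (End F X) (-c⁻¹) - T) :=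
    spectrum.notMem_iff.mp fun hmem ↦ hc ⟨-c⁻¹, hmem, by simp⟩
  convert hres.smul (Units.mk0 (-c) (neg_ne_zero.mpr hc0)) using 1
  simp [Units.smul_def, smul_sub, Algebra.algebraMap_eq_smul_one, smul_smul, hc0]

lemma eventually_finrank_ker_add_smul_le [FiniteDimensional F X] (P R : X →ₗ[F] Y) :
    ∀ᶠ c : F in cofinite, finrank F (P + c • R).ker ≤ finrank F P.ker := by
  obtain ⟨M, hM⟩ := P.ker.exists_isCompl
  obtain ⟨g, hg⟩ := (P ∘ₗ M.subtype).exists_leftInverse_of_injective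
    (by rw [LinearMap.ker_comp, ← Submodule.disjoint_iff_comap_eq_bot]; exact hM.disjoint.symm)
  filter_upwards [eventually_isUnit_one_add_smul (g ∘ₗ R ∘ₗ M.subtype)] with c hc
  have hcomp : g ∘ₗ (P + c • R) ∘ₗ M.subtype = 1 + c • (g ∘ₗ R ∘ₗ M.subtype) := by
    rw [LinearMap.add_comp, LinearMap.comp_add, hg]
    simp [LinearMap.smul_comp, LinearMap.comp_smul, End.one_eq_id]
  have hinj : Function.Injective (g ∘ₗ (P + c • R) ∘ₗ M.subtype) :=
    hcomp ▸ ((End.isUnit_iff _).mp hc).injective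
  have hdisj : Disjoint M (P + c • R).ker := by
    rw [Submodule.disjoint_iff_comap_eq_bot, ← LinearMap.ker_comp, LinearMap.ker_eq_bot]
    exact Function.Injective.of_comp hinj
  have hle := Submodule.finrank_add_finrank_le_of_disjoint hdisj
  have heq := Submodule.finrank_add_eq_of_isCompl hM
  lia

lemma eventually_finrank_inf_ker_add_smul_le (L : Submodule F X) [FiniteDimensional F L]
    (P R : X →ₗ[F] Y) :
    ∀ᶠ c : F in cofinite,
      finrank F ↥(L ⊓ (P + c • R).ker) ≤ finrank F ↥(L ⊓ P.ker) := by
  have finrank_inf_ker (T : X →ₗ[F] Y) :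
      finrank F ↥(L ⊓ T.ker) = finrank F (T.domRestrict L).ker := by
    rw [LinearMap.ker_domRestrict, ← Submodule.map_comap_subtype]
    exact (Submodule.equivMapOfInjective _ L.injective_subtype _).symm.finrank_eq
  filter_upwards [eventually_finrank_ker_add_smul_le (P.domRestrict L) (R.domRestrict L)] with c hc
  rw [finrank_inf_ker, finrank_inf_ker]
  exact hc

end Perturbation

section CompatibleMaps

variable {F X Y M N : Type*} [Field F] [AddCommGroup X] [Module F X] [AddCommGroup Y] [Module F Y]
  [AddCommGroup M] [Module F M] [AddCommGroup N] [Module F N]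

lemma compatibleMaps_range_ker (f : X →ₗ[F] M) (g : N →ₗ[F] Y) :
    f.range.compatibleMaps g.ker = (LinearMap.lcomp F Y f ∘ₗ LinearMap.compRight F g).ker := by
  ext u
  simp [Submodule.compatibleMaps, SetLike.le_def, LinearMap.ext_iff]

lemma eventually_finrank_inf_range_compatibleMaps_le (L : Submodule F (M →ₗ[F] N))
    [FiniteDimensional F L] (f g : X →ₗ[F] M) (Q : Submodule F N) :
    ∀ᶠ c : F in cofinite, finrank F ↥(L ⊓ (f + c • g).range.compatibleMaps Q) ≤
      finrank F ↥(L ⊓ f.range.compatibleMaps Q) := by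
  let restrictTo (h : X →ₗ[F] M) := LinearMap.lcomp F (N ⧸ Q) h ∘ₗ LinearMap.compRight F Q.mkQ
  have hker (h : X →ₗ[F] M) : h.range.compatibleMaps Q = (restrictTo h).ker := by
    rw [← compatibleMaps_range_ker, Q.ker_mkQ]
  filter_upwards [eventually_finrank_inf_ker_add_smul_le L (restrictTo f) (restrictTo g)] with c hc
  have hadd : restrictTo (f + c • g) = restrictTo f + c • restrictTo g :=
    LinearMap.ext₂ fun u x ↦ by simp [restrictTo]
  rw [hker, hker, hadd]
  exact hc

lemma eventually_finrank_inf_compatibleMaps_ker_le (L : Submodule F (M →ₗ[F] N))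
    [FiniteDimensional F L] (V : Submodule F M) (f g : N →ₗ[F] Y) :
    ∀ᶠ c : F in cofinite, finrank F ↥(L ⊓ V.compatibleMaps (f + c • g).ker) ≤
      finrank F ↥(L ⊓ V.compatibleMaps f.ker) := by
  let composeWith (h : N →ₗ[F] Y) := LinearMap.lcomp F Y V.subtype ∘ₗ LinearMap.compRight F h
  have hker (h : N →ₗ[F] Y) : V.compatibleMaps h.ker = (composeWith h).ker := by
    rw [← compatibleMaps_range_ker, V.range_subtype]
  filter_upwards [eventually_finrank_inf_ker_add_smul_le L (composeWith f) (composeWith g)]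
    with c hc
  have hadd : composeWith (f + c • g) = composeWith f + c • composeWith g :=
    LinearMap.ext₂ fun u x ↦ by simp [composeWith]
  rw [hker, hker, hadd]
  exact hc

end CompatibleMaps

section ScalarMaps

variable {F E : Type*} [Field F] [AddCommGroup E] [Module F E]

lemma exists_dual_eq_one_and_le_ker {S : Submodule F E} {x : E} (hx : x ∉ S) :
    ∃ φ : Dual F E, φ x = 1 ∧ S ≤ φ.ker := by
  obtain ⟨φ, hφS, hφx⟩ := LinearMap.exists_extend_of_notMem (0 : Dual F S) hx 1
  exact ⟨φ, hφx, fun s hs ↦ LinearMap.congr_fun hφS ⟨s, hs⟩⟩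

lemma notMem_sup_span_singleton {V Q : Submodule F E} {x y : E} (hVQ : V ≤ Q) (hx : x ∈ Q)
    (hxV : x ∉ V) (hy : y ∉ Q) : x ∉ V ⊔ F ∙ y := by
  intro hmem
  obtain ⟨v, hv, _, hs, rfl⟩ := Submodule.mem_sup.mp hmem
  obtain ⟨a, rfl⟩ := Submodule.mem_span_singleton.mp hs
  have ha : a = 0 := by
    by_contra hne
    exact hy ((Q.smul_mem_iff hne).mp ((Q.add_mem_iff_right (hVQ hv)).mp hx))
  simp [ha, hv] at hxV

lemma exists_dual_eq_one_and_eq_zero {V : Submodule F E} {v x : E} (hv : v ∈ V) (hv0 : v ≠ 0)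
    (hx : x ∉ V) : ∃ φ : Dual F E, φ v = 1 ∧ φ x = 0 := by
  have hvx : v ∉ F ∙ x := fun hmem ↦ by
    obtain ⟨a, rfl⟩ := Submodule.mem_span_singleton.mp hmem
    exact hx ((V.smul_mem_iff (left_ne_zero_of_smul hv0)).mp hv)
  obtain ⟨φ, hφv, hφx⟩ := exists_dual_eq_one_and_le_ker hvx
  exact ⟨φ, hφv, hφx (Submodule.mem_span_singleton_self x)⟩

lemma apply_eq_smul_of_apply_add_eq_smul {u : End F E} {V : Submodule F E} {x v : E} {μ ν : F}
    (hxV : x ∉ V) (hv : v ∈ V) (huv : u v ∈ V) (hx : u x = μ • x)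
    (hxv : u (x + v) = ν • (x + v)) : u v = μ • v := by
  have hdiff : (ν - μ) • x = u v - ν • v := by
    rw [map_add, hx, smul_add] at hxv
    linear_combination (norm := module) -hxv
  have hνμ : ν - μ = 0 := by
    by_contra hne
    exact hxV ((V.smul_mem_iff hne).mp (hdiff ▸ V.sub_mem huv (V.smul_mem ν hv)))
  rw [hνμ, zero_smul, eq_comm, sub_eq_zero] at hdiff
  rw [hdiff, sub_eq_zero.mp hνμ]

lemma exists_forall_mem_apply_eq_smul {u : End F E} {V Q : Submodule F E} (hV : V ≠ ⊥)
    (hVQ : V < Q) (huV : V ≤ V.comap u) (hu : ∀ x ∈ Q, x ∉ V → ∃ μ : F, u x = μ • x) :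
    ∃ μ : F, ∀ x ∈ Q, u x = μ • x := by
  have scalar_on_V {x : E} {μ : F} (hx : x ∈ Q) (hxV : x ∉ V) (hμ : u x = μ • x) :
      ∀ v ∈ V, u v = μ • v := by
    intro v hv
    obtain ⟨ν, hν⟩ := hu (x + v) (Q.add_mem hx (hVQ.le hv)) (by rwa [V.add_mem_iff_left hv])
    exact apply_eq_smul_of_apply_add_eq_smul hxV hv (huV hv) hμ hν
  obtain ⟨x, hx, hxV⟩ := SetLike.exists_of_lt hVQ
  obtain ⟨v, hv, hv0⟩ := V.exists_mem_ne_zero_of_ne_bot hV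
  obtain ⟨μ, hμ⟩ := hu x hx hxV
  refine ⟨μ, fun y hy ↦ ?_⟩
  by_cases hyV : y ∈ V
  · exact scalar_on_V hx hxV hμ y hyV
  obtain ⟨ν, hν⟩ := hu y hy hyV
  have hνμ : ν • v = μ • v := by rw [← scalar_on_V hy hyV hν v hv, ← scalar_on_V hx hxV hμ v hv]
  rw [hν, smul_left_injective F hv0 hνμ]

end ScalarMaps

section AdmissiblePairs

variable {F E : Type*} [Field F] [AddCommGroup E] [Module F E]

/-- Pairs `V ≤ Q` with `V ≠ 0` for which the space of maps in `L` carrying `V` into `Q` is small,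
measured against the room between `V` and `Q`. Minimising over all such pairs, rather than over the
stabilisers `V = Q`, is what allows `V` and `Q` to be varied independently. -/
structure IsAdmissible (L : Submodule F (End F E)) (V Q : Submodule F E) : Prop where
  ne_bot : V ≠ ⊥
  le : V ≤ Q
  finrank_add_le : finrank F ↥(L ⊓ V.compatibleMaps Q) + finrank F V ≤ finrank F Q + 1

/-- Admissible pairs `(V, Q)` minimising the dimension of the space of maps in `L` carrying `V`
into `Q`. All maps in that space turn out to be scalars unless `V = Q`. -/
structure IsMinimalAdmissible (L : Submodule F (End F E)) (V Q : Submodule F E) : Prop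
    extends IsAdmissible L V Q where
  finrank_le : ∀ ⦃V' Q' : Submodule F E⦄, IsAdmissible L V' Q' →
    finrank F ↥(L ⊓ V.compatibleMaps Q) ≤ finrank F ↥(L ⊓ V'.compatibleMaps Q')

variable [FiniteDimensional F E] {L : Submodule F (End F E)} {V Q : Submodule F E} {u : End F E}

lemma exists_isMinimalAdmissible [Nontrivial E] (hL : finrank F L ≤ finrank F E) :
    ∃ V Q : Submodule F E, IsMinimalAdmissible L V Q := by
  obtain ⟨v, hv⟩ := exists_ne (0 : E)
  have hadm : IsAdmissible L (F ∙ v) ⊤ := by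
    refine ⟨by simpa using hv, le_top, ?_⟩
    rw [finrank_span_singleton hv, finrank_top]
    exact Nat.add_le_add_right ((Submodule.finrank_mono inf_le_left).trans hL) 1
  obtain ⟨⟨V, Q⟩, hVQ, hmin⟩ := WellFounded.has_min
    (measure fun p : Submodule F E × Submodule F E ↦ finrank F ↥(L ⊓ p.1.compatibleMaps p.2)).wf
    {p | IsAdmissible L p.1 p.2} ⟨(F ∙ v, ⊤), hadm⟩
  exact ⟨V, Q, hVQ, fun V' Q' h' ↦ not_lt.mp (hmin (V', Q') h')⟩

namespace IsMinimalAdmissible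

lemma of_finrank_eq (h : IsMinimalAdmissible L V Q) {V' Q' : Submodule F E} (hle : V' ≤ Q')
    (hV : finrank F V' = finrank F V) (hQ : finrank F Q' = finrank F Q)
    (hL : finrank F ↥(L ⊓ V'.compatibleMaps Q') ≤ finrank F ↥(L ⊓ V.compatibleMaps Q)) :
    IsMinimalAdmissible L V' Q' where
  ne_bot := by
    rw [ne_eq, ← Submodule.finrank_eq_zero, hV, Submodule.finrank_eq_zero]
    exact h.ne_bot
  le := hle
  finrank_add_le := by
    have hadm := h.finrank_add_le
    lia
  finrank_le _ _ h' := hL.trans (h.finrank_le h')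

lemma le_comap_right (h : IsMinimalAdmissible L V Q) (hu : u ∈ L ⊓ V.compatibleMaps Q) :
    Q ≤ Q.comap u := by
  by_contra hnot
  obtain ⟨v, hv, huv⟩ := SetLike.not_le_iff_exists.mp hnot
  -- Adjoining `v` to `V` would keep the pair admissible but exclude `u`.
  have hlt : L ⊓ (V ⊔ F ∙ v).compatibleMaps Q < L ⊓ V.compatibleMaps Q := by
    refine SetLike.lt_iff_le_and_exists.mpr ⟨?_, u, hu, ?_⟩
    · exact inf_le_inf_left L fun w hw z hz ↦ hw (Submodule.mem_sup_left hz)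
    · exact fun hmem ↦ huv (hmem.2 (Submodule.mem_sup_right (Submodule.mem_span_singleton_self v)))
  have hdrop := Submodule.finrank_lt_finrank_of_lt hlt
  have hgrow := Submodule.finrank_add_le_finrank_add_finrank V (F ∙ v)
  have hspan : finrank F (F ∙ v) ≤ 1 := (finrank_span_le_card {v}).trans (by simp)
  have hadm := h.finrank_add_le
  refine hdrop.not_ge (h.finrank_le ⟨ne_bot_of_le_ne_bot h.ne_bot le_sup_left, ?_, by lia⟩)
  exact sup_le h.le (by simpa using hv)

lemma le_comap_left (h : IsMinimalAdmissible L V Q) (hu : u ∈ L ⊓ V.compatibleMaps Q) :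
    V ≤ V.comap u := by
  by_contra hnot
  obtain ⟨v, hv, huv⟩ := SetLike.not_le_iff_exists.mp hnot
  obtain ⟨φ, hφ, hVφ⟩ := Submodule.exists_le_ker_of_notMem (show u v ∉ V from huv)
  -- Cutting `Q` down by `φ` would keep the pair admissible but exclude `u`.
  have hlt : L ⊓ V.compatibleMaps (Q ⊓ φ.ker) < L ⊓ V.compatibleMaps Q := by
    refine SetLike.lt_iff_le_and_exists.mpr
      ⟨fun w hw ↦ ⟨hw.1, fun z hz ↦ (hw.2 hz).1⟩, u, hu, fun hmem ↦ hφ (hmem.2 hv).2⟩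
  have hdrop := Submodule.finrank_lt_finrank_of_lt hlt
  have hker := Dual.finrank_ker_add_one_of_ne_zero (f := φ) (by rintro rfl; simp at hφ)
  have hshrink := Submodule.finrank_sup_add_finrank_inf_eq Q φ.ker
  have hsup := (Q ⊔ φ.ker).finrank_le
  have hadm := h.finrank_add_le
  exact hdrop.not_ge (h.finrank_le ⟨h.ne_bot, le_inf h.le hVφ, by lia⟩)

lemma eventually_map_transvection (h : IsMinimalAdmissible L V Q) {φ : Dual F E} {x : E}
    (hx : x ∈ Q) (hφx : φ x = 0) :
    ∀ᶠ c : F in cofinite, IsMinimalAdmissible L (V.map (LinearMap.transvection φ (c • x))) Q := by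
  have hrange (c : F) : V.map (LinearMap.transvection φ (c • x)) =
      (V.subtype + c • (φ.smulRight x ∘ₗ V.subtype)).range := by
    rw [← V.range_subtype, ← LinearMap.range_comp, V.range_subtype]
    congr 1
    ext v
    simp [LinearMap.transvection.apply, smul_comm c]
  filter_upwards [eventually_finrank_inf_range_compatibleMaps_le L V.subtype
    (φ.smulRight x ∘ₗ V.subtype) Q] with c hc
  rw [← hrange, V.range_subtype] at hc
  refine h.of_finrank_eq ?_ ?_ rfl hc
  · rintro _ ⟨v, hv, rfl⟩
    exact Q.add_mem (h.le hv) (Q.smul_mem _ (Q.smul_mem c hx))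
  · exact (LinearEquiv.transvection (f := φ) (v := c • x) (by simp [hφx])).finrank_map_eq V

lemma eventually_comap_transvection (h : IsMinimalAdmissible L V Q) {φ : Dual F E} {y : E}
    (hV : V ≤ φ.ker) (hφy : φ y = 0) :
    ∀ᶠ c : F in cofinite, IsMinimalAdmissible L V (Q.comap (LinearMap.transvection φ (c • y))) := by
  have hker (c : F) : Q.comap (LinearMap.transvection φ (c • y)) =
      (Q.mkQ + c • (Q.mkQ ∘ₗ φ.smulRight y)).ker := by
    rw [← Q.ker_mkQ, ← LinearMap.ker_comp, Q.ker_mkQ]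
    congr 1
    ext z
    simp [LinearMap.transvection.apply, smul_comm c]
  filter_upwards [eventually_finrank_inf_compatibleMaps_ker_le L V Q.mkQ
    (Q.mkQ ∘ₗ φ.smulRight y)] with c hc
  rw [← hker, Q.ker_mkQ] at hc
  refine h.of_finrank_eq ?_ rfl ?_ hc
  · intro v hv
    have hφv : φ v = 0 := hV hv
    simpa [LinearMap.transvection.apply, hφv] using h.le hv
  · let τ := LinearEquiv.transvection (f := φ) (v := c • y) (by simp [hφy])
    change finrank F (Q.comap (τ : E →ₗ[F] E)) = finrank F Q
    rw [Submodule.comap_equiv_eq_map_symm]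
    exact τ.symm.finrank_map_eq Q

/-- Generic transvections along `x` keep the pair minimal, so `u` still preserves the image of `V`,
which contains `v + c • x`. -/
lemma eventually_apply_add_smul_eq (h : IsMinimalAdmissible L V Q)
    (hu : u ∈ L ⊓ V.compatibleMaps Q) {φ : Dual F E} {x v : E} (hx : x ∈ Q) (hφx : φ x = 0)
    (hv : v ∈ V) (hφv : φ v = 1) :
    ∀ᶠ c : F in cofinite, ∃ w ∈ V, u v + c • u x = w + (c * φ w) • x := by
  filter_upwards [h.eventually_map_transvection hx hφx] with c hc
  have huQ : u ∈ L ⊓ (V.map (LinearMap.transvection φ (c • x))).compatibleMaps Q :=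
    ⟨hu.1, hc.le.trans (h.le_comap_right hu)⟩
  obtain ⟨w, hw, huw⟩ := hc.le_comap_left huQ (Submodule.mem_map_of_mem hv)
  refine ⟨w, hw, ?_⟩
  simpa [LinearMap.transvection.apply, hφv, smul_smul, mul_comm c] using huw.symm

lemma exists_apply_eq_add_smul [Infinite F] (h : IsMinimalAdmissible L V Q)
    (hu : u ∈ L ⊓ V.compatibleMaps Q) {x : E} (hx : x ∈ Q) (hxV : x ∉ V) :
    ∃ z ∈ V, ∃ μ : F, u x = z + μ • x := by
  obtain ⟨v, hv, hv0⟩ := V.exists_mem_ne_zero_of_ne_bot h.ne_bot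
  obtain ⟨φ, hφv, hφx⟩ := exists_dual_eq_one_and_eq_zero hv hv0 hxV
  obtain ⟨c, ⟨w, hw, hcw⟩, hc⟩ :=
    ((h.eventually_apply_add_smul_eq hu hx hφx hv hφv).and (eventually_cofinite_ne 0)).exists
  refine ⟨c⁻¹ • (w - u v), V.smul_mem _ (V.sub_mem hw (h.le_comap_left hu hv)), φ w, ?_⟩
  apply smul_right_injective E hc
  simp only [smul_add, smul_inv_smul₀ hc, smul_smul]
  linear_combination (norm := module) hcw

lemma exists_apply_eq_smul [Infinite F] (h : IsMinimalAdmissible L V Q)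
    (hu : u ∈ L ⊓ V.compatibleMaps Q) {x : E} (hx : x ∈ Q) (hxV : x ∉ V) :
    ∃ μ : F, u x = μ • x := by
  obtain ⟨z, hz, μ, huz⟩ := h.exists_apply_eq_add_smul hu hx hxV
  suffices z = 0 from ⟨μ, by rw [huz, this, zero_add]⟩
  by_contra hz0
  obtain ⟨φ, hφz, hφx⟩ := exists_dual_eq_one_and_eq_zero hz hz0 hxV
  obtain ⟨c, ⟨⟨w, hw, hcw⟩, hc⟩, hcμ⟩ := (((h.eventually_apply_add_smul_eq hu hx hφx hz hφz).and
    (eventually_cofinite_ne 0)).and (eventually_cofinite_ne (μ - φ (u z)))).exists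
  have hdiff : (c * (φ w - μ)) • x = u z + c • z - w := by
    rw [huz] at hcw
    linear_combination (norm := module) -hcw
  have hφw : c * (φ w - μ) = 0 := by
    by_contra hne
    refine hxV ((V.smul_mem_iff hne).mp (hdiff ▸ V.sub_mem (V.add_mem ?_ (V.smul_mem c hz)) hw))
    exact h.le_comap_left hu hz
  have hw_eq : φ (u z) + c = φ w := by
    simpa [hφw, hφz, sub_eq_zero] using (congrArg φ hdiff).symm
  have hμ : φ w = μ := sub_eq_zero.mp ((mul_eq_zero.mp hφw).resolve_left hc)
  exact hcμ (by linear_combination hw_eq + hμ)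

lemma exists_forall_mem_right_apply_eq_smul [Infinite F] (h : IsMinimalAdmissible L V Q)
    (hVQ : V < Q) (hu : u ∈ L ⊓ V.compatibleMaps Q) : ∃ μ : F, ∀ x ∈ Q, u x = μ • x :=
  exists_forall_mem_apply_eq_smul h.ne_bot hVQ (h.le_comap_left hu)
    fun _ hx hxV ↦ h.exists_apply_eq_smul hu hx hxV

lemma apply_eq_smul_of_notMem [Infinite F] (h : IsMinimalAdmissible L V Q) (hVQ : V < Q)
    (hu : u ∈ L ⊓ V.compatibleMaps Q) {μ : F} (hμ : ∀ x ∈ Q, u x = μ • x) {y : E} (hy : y ∉ Q) :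
    u y = μ • y := by
  obtain ⟨x, hx, hxV⟩ := SetLike.exists_of_lt hVQ
  have hxVy : x ∉ V ⊔ F ∙ y := notMem_sup_span_singleton h.le hx hxV hy
  obtain ⟨φ, hφx, hVφ⟩ := exists_dual_eq_one_and_le_ker hxVy
  have hφy : φ y = 0 := hVφ (Submodule.mem_sup_right (Submodule.mem_span_singleton_self y))
  obtain ⟨c, hmin, hc⟩ := ((h.eventually_comap_transvection (le_sup_left.trans hVφ) hφy).and
    (eventually_cofinite_ne 0)).exists
  set Q' := Q.comap (LinearMap.transvection φ (c • y))
  have hxQ' : x - c • y ∈ Q' := by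
    simp [Q', LinearMap.transvection.apply, hφx, hφy, hx]
  have hxV' : x - c • y ∉ V := fun hmem ↦ hxVy <| sub_add_cancel x (c • y) ▸
    Submodule.add_mem_sup hmem (Submodule.smul_mem _ c (Submodule.mem_span_singleton_self y))
  have huQ' : u ∈ L ⊓ V.compatibleMaps Q' :=
    ⟨hu.1, (h.le_comap_left hu).trans (Submodule.comap_mono hmin.le)⟩
  obtain ⟨ν, hν⟩ := hmin.exists_forall_mem_right_apply_eq_smul
    (SetLike.lt_iff_le_and_exists.mpr ⟨hmin.le, _, hxQ', hxV'⟩) huQ'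
  obtain ⟨v, hv, hv0⟩ := V.exists_mem_ne_zero_of_ne_bot h.ne_bot
  have hνμ : ν = μ := smul_left_injective F hv0 (by
    simp only [← hν v (hmin.le hv), ← hμ v (h.le hv)])
  have huxy := hν _ hxQ'
  rw [map_sub, map_smul, hμ x hx, hνμ, smul_sub, sub_right_inj, smul_comm μ] at huxy
  exact smul_right_injective E hc huxy

lemma exists_eq_smul_one [Infinite F] (h : IsMinimalAdmissible L V Q) (hVQ : V < Q)
    (hu : u ∈ L ⊓ V.compatibleMaps Q) : ∃ μ : F, u = μ • 1 := by
  obtain ⟨μ, hμ⟩ := h.exists_forall_mem_right_apply_eq_smul hVQ hu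
  refine ⟨μ, LinearMap.ext fun y ↦ ?_⟩
  by_cases hy : y ∈ Q
  · exact hμ y hy
  · exact h.apply_eq_smul_of_notMem hVQ hu hμ hy

lemma finrank_inf_compatibleMaps_le_one [Infinite F] (h : IsMinimalAdmissible L V Q) :
    finrank F ↥(L ⊓ V.compatibleMaps Q) ≤ 1 := by
  rcases h.le.eq_or_lt with rfl | hVQ
  · have hadm := h.finrank_add_le
    lia
  have hle : L ⊓ V.compatibleMaps Q ≤ F ∙ (1 : End F E) := by
    intro u hu
    obtain ⟨μ, rfl⟩ := h.exists_eq_smul_one hVQ hu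
    exact Submodule.smul_mem _ μ (Submodule.mem_span_singleton_self 1)
  exact (Submodule.finrank_mono hle).trans ((finrank_span_le_card {1}).trans (by simp))

end IsMinimalAdmissible

theorem exists_finrank_inf_compatibleMaps_self_le_one [Infinite F] [Nontrivial E]
    (hL : finrank F L ≤ finrank F E) :
    ∃ V : Submodule F E, V ≠ ⊥ ∧ finrank F ↥(L ⊓ V.compatibleMaps V) ≤ 1 := by
  obtain ⟨V, Q, h⟩ := exists_isMinimalAdmissible hL
  refine ⟨V, h.ne_bot, (Submodule.finrank_mono ?_).trans h.finrank_inf_compatibleMaps_le_one⟩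
  exact inf_le_inf_left L fun u hu ↦ le_trans hu (Submodule.comap_mono h.le)

end AdmissiblePairs

section Idempotents

variable {R : Type*} [Ring R] {e : R}

lemma isIdempotentElem_sub_mul_mul_one_sub (he : IsIdempotentElem e) (y : R) :
    IsIdempotentElem (e - e * y * (1 - e)) := by
  have hee : e * e = e := he
  have hzero : (1 - e) * e = 0 := by rw [sub_mul, one_mul, hee, sub_self]
  calc (e - e * y * (1 - e)) * (e - e * y * (1 - e))
      = e * e - e * e * y * (1 - e) - e * y * ((1 - e) * e) * (1 - y * (1 - e)) := by noncomm_ring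
    _ = e - e * y * (1 - e) := by rw [hzero, hee, mul_zero, zero_mul, sub_zero]

lemma sub_mul_mul_one_sub_ne_zero (he : IsIdempotentElem e) (he0 : e ≠ 0) (y : R) :
    e - e * y * (1 - e) ≠ 0 := by
  intro hzero
  have hmul : (e - e * y * (1 - e)) * e = e := by
    rw [sub_mul, mul_assoc _ (1 - e), sub_mul 1, one_mul, he.eq, sub_self, mul_zero, sub_zero]
  exact he0 (by rw [← hmul, hzero, zero_mul])

end Idempotents

section TraceForm

variable {F E : Type*} [Field F] [AddCommGroup E] [Module F E]

/-- The trace form `(a, b) ↦ tr (a * b)` on the endomorphisms of `E`; it is used to pass from a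
subspace of small codimension to its orthogonal complement, of small dimension. -/
noncomputable def endTraceForm (F E : Type*) [Field F] [AddCommGroup E] [Module F E] :
    LinearMap.BilinForm F (End F E) :=
  (LinearMap.mul F (End F E)).compr₂ (LinearMap.trace F E)

lemma endTraceForm_apply (a b : End F E) : endTraceForm F E a b = LinearMap.trace F E (a * b) :=
  rfl

lemma endTraceForm_isRefl : (endTraceForm F E).IsRefl := fun a b hab ↦ by
  rwa [endTraceForm_apply, LinearMap.trace_mul_comm]

lemma eq_zero_of_forall_trace_mul_eq_zero [FiniteDimensional F E] {a : End F E}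
    (ha : ∀ b : End F E, LinearMap.trace F E (a * b) = 0) : a = 0 := by
  refine LinearMap.ext fun x ↦ (Module.forall_dual_apply_eq_zero_iff F (a x)).mp fun φ ↦ ?_
  have hmul : a * φ.smulRight x = φ.smulRight (a x) := LinearMap.ext fun y ↦ by simp
  rw [← LinearMap.trace_smulRight, ← hmul, ha]

lemma endTraceForm_nondegenerate [FiniteDimensional F E] : (endTraceForm F E).Nondegenerate :=
  (LinearMap.IsRefl.nondegenerate_iff_separatingLeft (B := endTraceForm F E)
    endTraceForm_isRefl).mpr fun _ ↦ eq_zero_of_forall_trace_mul_eq_zero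

lemma exists_isIdempotentElem_range_eq (V : Submodule F E) :
    ∃ e : End F E, IsIdempotentElem e ∧ e.range = V := by
  obtain ⟨K, hVK⟩ := V.exists_isCompl
  exact ⟨V.projection K hVK, Submodule.isIdempotentElem_projection hVK,
    Submodule.range_projection hVK⟩

variable {W : Submodule F (End F E)}

lemma trace_eq_zero_of_one_mem_orthogonal (h1 : 1 ∈ (endTraceForm F E).orthogonal W) {a : End F E}
    (ha : a ∈ W) : LinearMap.trace F E a = 0 := by
  simpa only [endTraceForm_apply, mul_one] using h1 a ha

variable [FiniteDimensional F E]

lemma mem_compatibleMaps_of_forall_trace_eq_zero {e u : End F E} (he : IsIdempotentElem e)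
    (hu : ∀ x : End F E, LinearMap.trace F E (e * x * (1 - e) * u) = 0) :
    u ∈ e.range.compatibleMaps e.range := by
  have hzero : (1 - e) * u * e = 0 := eq_zero_of_forall_trace_mul_eq_zero fun x ↦ by
    rw [mul_assoc, LinearMap.trace_mul_comm, ← mul_assoc]
    exact hu x
  refine (LinearMap.IsIdempotentElem.range_mem_invtSubmodule_iff he).mpr ?_
  rw [sub_mul, one_mul, sub_mul, sub_eq_zero, mul_assoc] at hzero
  exact hzero.symm

lemma exists_isIdempotentElem_mem_of_disjoint {V : Submodule F E} (hV : V ≠ ⊥)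
    (hdisj : Disjoint ((endTraceForm F E).orthogonal W) (V.compatibleMaps V)) :
    ∃ e ∈ W, IsIdempotentElem e ∧ e ≠ 0 := by
  obtain ⟨e, he, rfl⟩ := exists_isIdempotentElem_range_eq V
  let P := (LinearMap.mulLeftRight F (e, 1 - e)).range
  have horth : (endTraceForm F E).orthogonal (W ⊔ P) = ⊥ := by
    refine eq_bot_iff.mpr fun u hu ↦ hdisj.le_bot ⟨fun w hw ↦ hu w (Submodule.mem_sup_left hw), ?_⟩
    refine mem_compatibleMaps_of_forall_trace_eq_zero he fun x ↦ ?_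
    exact hu _ (Submodule.mem_sup_right ⟨x, rfl⟩)
  have htop : W ⊔ P = ⊤ := by
    rw [← (endTraceForm F E).orthogonal_orthogonal endTraceForm_nondegenerate endTraceForm_isRefl
      (W ⊔ P), horth, LinearMap.BilinForm.orthogonal_bot]
  obtain ⟨w, hw, _, ⟨y, rfl⟩, hwy⟩ := Submodule.mem_sup.mp (htop ▸ Submodule.mem_top (x := e))
  have hw_eq : w = e - e * y * (1 - e) := eq_sub_of_add_eq hwy
  refine ⟨w, hw, hw_eq ▸ isIdempotentElem_sub_mul_mul_one_sub he y,
    hw_eq ▸ sub_mul_mul_one_sub_ne_zero he ?_ y⟩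
  rintro rfl
  exact hV LinearMap.range_zero

lemma exists_disjoint_compatibleMaps_of_one_notMem [Infinite F] [Nontrivial E]
    {U : Submodule F (End F E)} (hU : finrank F U < finrank F E) (h1 : 1 ∉ U) :
    ∃ V : Submodule F E, V ≠ ⊥ ∧ Disjoint U (V.compatibleMaps V) := by
  have hL : finrank F ↥(U ⊔ F ∙ 1) ≤ finrank F E := by
    have hsum := Submodule.finrank_add_le_finrank_add_finrank U (F ∙ 1)
    have hspan : finrank F (F ∙ (1 : End F E)) ≤ 1 := (finrank_span_le_card {1}).trans (by simp)
    lia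
  obtain ⟨V, hV, hle⟩ := exists_finrank_inf_compatibleMaps_self_le_one hL
  refine ⟨V, hV, Submodule.disjoint_def.mpr fun u hu huV ↦ ?_⟩
  have hscalar : F ∙ (1 : End F E) = (U ⊔ F ∙ 1) ⊓ V.compatibleMaps V := by
    refine Submodule.eq_of_le_of_finrank_le (le_inf le_sup_right ?_) ?_
    · exact (Submodule.span_singleton_le_iff_mem _ _).mpr (le_refl V)
    · rwa [finrank_span_singleton one_ne_zero]
  obtain ⟨c, rfl⟩ : ∃ c : F, c • 1 = u :=
    Submodule.mem_span_singleton.mp (hscalar ▸ ⟨Submodule.mem_sup_left hu, huV⟩)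
  have hc : c = 0 := by
    by_contra hne
    exact h1 ((U.smul_mem_iff hne).mp hu)
  rw [hc, zero_smul]

theorem trace_eq_zero_of_forall_isIdempotentElem_eq_zero [Infinite F]
    (hW : finrank F (End F E ⧸ W) < finrank F E)
    (hidem : ∀ e ∈ W, IsIdempotentElem e → e = 0) {a : End F E} (ha : a ∈ W) :
    LinearMap.trace F E a = 0 := by
  have : Nontrivial E := Module.nontrivial_of_finrank_pos (Nat.zero_lt_of_lt hW)
  have hdim : finrank F ((endTraceForm F E).orthogonal W) < finrank F E := by
    rwa [LinearMap.BilinForm.finrank_orthogonal endTraceForm_nondegenerate, ← W.finrank_quotient]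
  by_contra htr
  obtain ⟨V, hV, hdisj⟩ := exists_disjoint_compatibleMaps_of_one_notMem hdim
    fun h1 ↦ htr (trace_eq_zero_of_one_mem_orthogonal h1 ha)
  obtain ⟨e, heW, he, he0⟩ := exists_isIdempotentElem_mem_of_disjoint hV hdisj
  exact he0 (hidem e heW he)

end TraceForm

theorem stmt_16_general {F ι : Type*} [Field F] [Infinite F] [Fintype ι]
    (W : Submodule F (Matrix ι ι F)) (hW : finrank F (Matrix ι ι F ⧸ W) < Fintype.card ι)
    (hidem : ∀ e ∈ W, e * e = e → e = 0) : ∀ a ∈ W, Matrix.trace a = 0 := by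
  classical
  intro a ha
  let toEnd : Matrix ι ι F ≃ₗ[F] End F (ι → F) := Matrix.toLin'
  rw [← Matrix.trace_toLin'_eq]
  refine trace_eq_zero_of_forall_isIdempotentElem_eq_zero (W := W.map toEnd.toLinearMap) ?_ ?_
    (Submodule.mem_map_of_mem ha)
  · rw [← (Submodule.Quotient.equiv W _ toEnd rfl).finrank_eq]
    simpa using hW
  · rintro _ ⟨e, he, rfl⟩ hee
    have hee' : e * e = e := toEnd.injective ((Matrix.toLin'_mul e e).trans hee)
    rw [hidem e he hee', map_zero]

theorem stmt_16 (F : Type*) [Field F] [IsAlgClosed F] (n : ℕ) (hn : 3 ≤ n)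
    (hchar : ringChar F = 0 ∨ n < ringChar F)
    (d : ℕ) (hd1 : 1 ≤ d) (hdn : d < n)
    (W : Submodule F (Matrix (Fin n) (Fin n) F))
    (hcodim : Module.finrank F (Matrix (Fin n) (Fin n) F ⧸ W) = d)
    (hidem : ∀ e ∈ W, e * e = e → e = 0) :
    ∀ a ∈ W, Matrix.trace a = 0 := by
  have : Infinite F := IsAlgClosed.instInfinite
  exact stmt_16_general W (by simpa [hcodim] using hdn) hidem
end
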